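/- Let X be a tree and let f : X → X be a continuous map with zero topological entropy, h(f) = 0. Then the supremum of topological sequence entropies of f restricted to its ω-limit set, to its non-wandering set, and to its chain recurrent set are all zero: h_∞(f|_{ω(f)}) = h_∞(f|_{Ω(f)}) = h_∞(f|_{CR(f)}) = 0. -/

import Mathlib

open Set Filter Topology Function
open scoped ENNReal

/-- A subset of a topological space is an *arc* if it is homeomorphic to `[0,1]`. -/
def IsArc {X : Type*} [TopologicalSpace X] (A : Set X) : Prop :=
  Nonempty (A ≃ₜ Set.Icc (0 : ℝ) 1)

/-- A point `p` is an *endpoint* of the arc `A` if `p ∈ A` and `A \ {p}` is connected. -/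
def IsArcEndpoint {X : Type*} [TopologicalSpace X] (A : Set X) (p : X) : Prop :=
  p ∈ A ∧ IsConnected (A \ {p})

/-- A subset is a *simple closed curve* if it is homeomorphic to the unit circle. -/
def IsSimpleClosedCurve {X : Type*} [TopologicalSpace X] (S : Set X) : Prop :=
  Nonempty (S ≃ₜ Metric.sphere (0 : ℂ) 1)

/-- A *tree* is a compact connected metric space which is a union of finitely many arcs,
any two of which are disjoint or intersect only in (one or both of) their endpoints,
and which contains no simple closed curve. -/
def IsTree (X : Type*) [MetricSpace X] : Prop :=
  CompactSpace X ∧ ConnectedSpace X ∧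
    (∃ 𝒜 : Finset (Set X), (∀ A ∈ 𝒜, IsArc A) ∧ ⋃₀ (𝒜 : Set (Set X)) = Set.univ ∧
      ∀ A ∈ 𝒜, ∀ B ∈ 𝒜, A ≠ B → ∀ p ∈ A ∩ B, IsArcEndpoint A p ∧ IsArcEndpoint B p) ∧
    ∀ S : Set X, ¬ IsSimpleClosedCurve S

/-- A *dendrite* is a locally connected continuum containing no simple closed curve. -/
def IsDendrite (X : Type*) [MetricSpace X] : Prop :=
  CompactSpace X ∧ ConnectedSpace X ∧ LocallyConnectedSpace X ∧
    ∀ S : Set X, ¬ IsSimpleClosedCurve S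

/-- `𝒰` is a finite open cover of the subset `Y`. -/
def IsOpenCoverOn {X : Type*} [TopologicalSpace X] (Y : Set X) (𝒰 : Finset (Set X)) : Prop :=
  (∀ U ∈ 𝒰, IsOpen U) ∧ Y ⊆ ⋃₀ (𝒰 : Set (Set X))

/-- `N(⋁_{i=1}^n f^{-a_i}(𝒰))`, relative to the subset `Y`: the minimal number `m` of elements
of the join cover `⋁_{i=1}^n f^{-a_i}(𝒰)` needed to cover `Y`. -/
noncomputable def seqCoverCountOn {X : Type*} (f : X → X) (Y : Set X) (a : ℕ → ℕ)
    (𝒰 : Finset (Set X)) (n : ℕ) : ℕ :=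
  sInf { m | ∃ c : Fin m → Fin n → Set X, (∀ j i, c j i ∈ 𝒰) ∧
    Y ⊆ ⋃ j, ⋂ i, f^[a i.1] ⁻¹' c j i }

/-- Topological sequence entropy of `f` restricted to the (invariant) subset `Y`,
with respect to the sequence `a`. -/
noncomputable def seqEntropyOn {X : Type*} [TopologicalSpace X] (f : X → X) (Y : Set X)
    (a : ℕ → ℕ) : ℝ≥0∞ :=
  ⨆ (𝒰 : Finset (Set X)) (_ : IsOpenCoverOn Y 𝒰),
    Filter.limsup
      (fun n : ℕ => ENNReal.ofReal (Real.log (seqCoverCountOn f Y a 𝒰 n) / n)) Filter.atTop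

/-- Topological sequence entropy of `f : X → X` with respect to the sequence `a`. -/
noncomputable def seqEntropy {X : Type*} [TopologicalSpace X] (f : X → X) (a : ℕ → ℕ) : ℝ≥0∞ :=
  seqEntropyOn f Set.univ a

/-- The ordinary topological entropy `h(f)`, i.e. the sequence entropy for `A = (0,1,2,…)`. -/
noncomputable def topEntropy {X : Type*} [TopologicalSpace X] (f : X → X) : ℝ≥0∞ :=
  seqEntropy f id

/-- `h_∞(f|_Y)`: the supremum over all strictly increasing sequences of positive integers of
the topological sequence entropies of `f` restricted to `Y`. -/
noncomputable def supSeqEntropyOn {X : Type*} [TopologicalSpace X] (f : X → X) (Y : Set X) :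
    ℝ≥0∞ :=
  ⨆ (a : ℕ → ℕ) (_ : StrictMono a) (_ : 1 ≤ a 0), seqEntropyOn f Y a

/-- `h_∞(f)`: the supremum of the topological sequence entropies of `f`. -/
noncomputable def supSeqEntropy {X : Type*} [TopologicalSpace X] (f : X → X) : ℝ≥0∞ :=
  supSeqEntropyOn f Set.univ

/-- The ω-limit set `ω_f(x) = ⋂_n closure {f^k(x) : k ≥ n}`. -/
def omegaLimitSet {X : Type*} [TopologicalSpace X] (f : X → X) (x : X) : Set X :=
  ⋂ n : ℕ, closure ((fun k => f^[k] x) '' Set.Ici n)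

/-- `ω(f) = ⋃_x ω_f(x)`. -/
def omegaSet {X : Type*} [TopologicalSpace X] (f : X → X) : Set X :=
  ⋃ x : X, omegaLimitSet f x

/-- The non-wandering set `Ω(f)`. -/
def nonWanderingSet {X : Type*} [TopologicalSpace X] (f : X → X) : Set X :=
  { x | ∀ U : Set X, IsOpen U → x ∈ U → ∃ n, 1 ≤ n ∧ (f^[n] ⁻¹' U ∩ U).Nonempty }

/-- There is an ε-chain from `x` to `y` under `f`. -/
def EpsChain {X : Type*} [MetricSpace X] (f : X → X) (ε : ℝ) (x y : X) : Prop :=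
  ∃ n, 1 ≤ n ∧ ∃ c : ℕ → X, c 0 = x ∧ c n = y ∧ ∀ i < n, dist (f (c i)) (c (i + 1)) < ε

/-- The chain recurrent set `CR(f)`. -/
def chainRecurrentSet {X : Type*} [MetricSpace X] (f : X → X) : Set X :=
  { x | ∀ ε > 0, EpsChain f ε x x }

/-- The chain recurrent set of the restriction `f|_Y`: chain recurrence witnessed by
ε-chains lying entirely inside `Y`. -/
def chainRecurrentSetOn {X : Type*} [MetricSpace X] (f : X → X) (Y : Set X) : Set X :=
  { x ∈ Y | ∀ ε > 0, ∃ n, 1 ≤ n ∧ ∃ c : ℕ → X, c 0 = x ∧ c n = x ∧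
      (∀ i ≤ n, c i ∈ Y) ∧ ∀ i < n, dist (f (c i)) (c (i + 1)) < ε }

/-- `I` is a periodic arc of `f` of period `s`: an arc with `f^s(I) ⊆ I` whose iterates
`I, f(I), …, f^{s-1}(I)` are pairwise disjoint. -/
def IsPeriodicArc {X : Type*} [TopologicalSpace X] (f : X → X) (I : Set X) (s : ℕ) : Prop :=
  IsArc I ∧ 1 ≤ s ∧ Set.MapsTo f^[s] I I ∧
    ∀ i j, i < j → j < s → Disjoint (f^[i] '' I) (f^[j] '' I)

/-- `Orb_f(I) = I ∪ f(I) ∪ … ∪ f^{s-1}(I)`. -/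
def arcOrbit {X : Type*} (f : X → X) (I : Set X) (s : ℕ) : Set X :=
  ⋃ i ∈ Finset.range s, f^[i] '' I

/-- `I` is an independence set for the pair `(U, V)` under `f`. -/
def IsIndepSetPair {X : Type*} (f : X → X) (U V : Set X) (I : Finset ℕ) : Prop :=
  ∀ J ⊆ I, J.Nonempty → ∀ s : ℕ → Bool,
    (⋂ j ∈ J, f^[j] ⁻¹' (if s j then U else V)).Nonempty

/-- `(x, y)` is an IN-pair of `(X, f)`. -/
def INPair {X : Type*} [TopologicalSpace X] (f : X → X) (x y : X) : Prop :=
  ∀ U ∈ nhds x, ∀ V ∈ nhds y, ∀ m : ℕ, ∃ I : Finset ℕ, m ≤ I.card ∧ IsIndepSetPair f U V I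

/-- The set `IN(X, f)` of IN-pairs of `(X, f)`. -/
def INPairs {X : Type*} [TopologicalSpace X] (f : X → X) : Set (X × X) :=
  { p | INPair f p.1 p.2 }

/-- `(x, y)` is an IN-pair of the restricted (sub)system `(Y, f|_Y)`, for `Y` invariant. -/
def INPairOn {X : Type*} [TopologicalSpace X] (f : X → X) (Y : Set X) (x y : X) : Prop :=
  x ∈ Y ∧ y ∈ Y ∧ ∀ U ∈ nhds x, ∀ V ∈ nhds y, ∀ m : ℕ, ∃ I : Finset ℕ, m ≤ I.card ∧
    ∀ J ⊆ I, J.Nonempty → ∀ s : ℕ → Bool,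
      (Y ∩ ⋂ j ∈ J, f^[j] ⁻¹' (if s j then U else V)).Nonempty

/-- `(x, y)` is a Li–Yorke pair for `f`. -/
def LiYorkePair {X : Type*} [MetricSpace X] (f : X → X) (x y : X) : Prop :=
  Filter.liminf (fun n : ℕ => dist (f^[n] x) (f^[n] y)) Filter.atTop = 0 ∧
    0 < Filter.limsup (fun n : ℕ => dist (f^[n] x) (f^[n] y)) Filter.atTop

/-!
Zero entropy forbids horseshoes, and without horseshoes a chain recurrent point outside an
invariant connected set never enters it; finite branching then makes some bounded iterate return to
the same side of that set. Let `A` and `B` be separated by a point `c`. If every pattern of visits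
to `A` and `B` at the times of a finite set `I` is realized by a chain recurrent point, two suitably
congruent times in `I` would contradict this once `I` is large: the invariant connected set is found
near the orbit of `c` when `c` is periodic or not chain recurrent, and otherwise `c` lies in a
nested sequence of periodic connected sets, as in a solenoid. So the patterns have bounded
dimension, a Sauer–Shelah argument leaves only `n ^ O(log n)` itineraries for any `n` times, and the
sequence entropy vanishes on every closed invariant set of chain recurrent points.

The ω-limit set is one of these because it is closed: at a limit point `c` of it that is not itself
an ω-limit point, shorter and shorter segments issuing from `c` are covered by iterates of one
another, and a point following this sequence of coverings accumulates at `c`.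
-/

section Segments

/-- The segment `[x, y]`, defined in an arbitrary space as the intersection of all connected sets
containing `x` and `y`. In a tree it is the unique arc from `x` to `y`. -/
def seg {X : Type*} [TopologicalSpace X] (x y : X) : Set X :=
  ⋂₀ {C | IsPreconnected C ∧ x ∈ C ∧ y ∈ C}

/-- The branch off `S` through `x`: the component of the complement of `S` containing `x`
(empty when `x ∈ S`). -/
abbrev branch {X : Type*} [TopologicalSpace X] (S : Set X) (x : X) : Set X :=
  connectedComponentIn Sᶜ x

/-- The topological properties of dendrites on which the geometry of segments rests: connectedness,
local connectedness, and segments that are themselves connected and closed. -/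
class Dendritic (X : Type*) [TopologicalSpace X] : Prop extends
    ConnectedSpace X, LocallyConnectedSpace X where
  isPreconnected_seg (x y : X) : IsPreconnected (seg x y)
  isClosed_seg (x y : X) : IsClosed (seg x y)

/-- Dendritic spaces with uniformly bounded branching, the abstract form of a finite tree: among
more than `N` points outside a connected set, two are joined by a segment avoiding that set. -/
class FinitelyBranched (X : Type*) [TopologicalSpace X] : Prop extends Dendritic X where
  exists_bound : ∃ N : ℕ, ∀ P : Set X, IsPreconnected P → ∀ p : Fin (N + 1) → X,
    (∀ i, p i ∉ P) → ∃ i j, i ≠ j ∧ Disjoint (seg (p i) (p j)) P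

section Basic

variable {X : Type*} [TopologicalSpace X] {x y : X}

theorem left_mem_seg (x y : X) : x ∈ seg x y := fun _ hC ↦ hC.2.1

theorem right_mem_seg (x y : X) : y ∈ seg x y := fun _ hC ↦ hC.2.2

theorem seg_subset {C : Set X} (hC : IsPreconnected C) (hx : x ∈ C) (hy : y ∈ C) : seg x y ⊆ C :=
  fun _ hz ↦ hz C ⟨hC, hx, hy⟩

theorem seg_comm (x y : X) : seg x y = seg y x := by
  simp only [seg, and_comm (a := x ∈ _)]

theorem seg_self (x : X) : seg x x = {x} :=
  (seg_subset isPreconnected_singleton rfl rfl).antisymm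
    (singleton_subset_iff.2 (left_mem_seg x x))

theorem isPreconnected_insert_branch {S : Set X} {d : X} (hd : d ∈ closure (branch S x)) :
    IsPreconnected (insert d (branch S x)) :=
  isPreconnected_connectedComponentIn.subset_closure (subset_insert _ _)
    (insert_subset hd subset_closure)

theorem mem_branch_of_mem_closure {S : Set X} (hx : x ∉ S) (hy : y ∈ closure (branch S x))
    (hyS : y ∉ S) : y ∈ branch S x :=
  (isPreconnected_insert_branch hy).subset_connectedComponentIn
    (mem_insert_of_mem _ (mem_connectedComponentIn hx))
    (insert_subset hyS (connectedComponentIn_subset _ _)) (mem_insert _ _)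

theorem isOpen_branch [LocallyConnectedSpace X] {S : Set X} (hS : IsClosed S) (x : X) :
    IsOpen (branch S x) :=
  hS.isOpen_compl.connectedComponentIn

theorem exists_mem_closure_branch_of_crossing [LocallyConnectedSpace X] {S C : Set X}
    (hS : IsClosed S) (hx : x ∉ S) (hC : IsPreconnected C) (hCS : (C ∩ S).Nonempty)
    (hCx : (C ∩ branch S x).Nonempty) : ∃ d ∈ C, d ∈ S ∧ d ∈ closure (branch S x) := by
  obtain ⟨s, hsC, hsS⟩ := hCS
  by_contra! hno
  have hcover : C ⊆ branch S x ∪ (closure (branch S x))ᶜ := fun y hy ↦ by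
    by_cases hyx : y ∈ closure (branch S x)
    · exact .inl (mem_branch_of_mem_closure hx hyx fun hyS ↦ hno y hy hyS hyx)
    · exact .inr hyx
  obtain ⟨w, -, hwx, hwx'⟩ := hC _ _ (isOpen_branch hS x) isClosed_closure.isOpen_compl hcover hCx
    ⟨s, hsC, hno s hsC hsS⟩
  exact hwx' (subset_closure hwx)

end Basic

section Dendritic

variable {X : Type*} [TopologicalSpace X] [Dendritic X] {a b c d u v w x y z : X}

theorem isPreconnected_seg (x y : X) : IsPreconnected (seg x y) := Dendritic.isPreconnected_seg x y

theorem isClosed_seg (x y : X) : IsClosed (seg x y) := Dendritic.isClosed_seg x y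

instance (priority := 100) Dendritic.t1Space : T1Space X :=
  ⟨fun x ↦ seg_self x ▸ isClosed_seg x x⟩

theorem seg_subset_seg (hu : u ∈ seg x y) (hv : v ∈ seg x y) : seg u v ⊆ seg x y :=
  seg_subset (isPreconnected_seg x y) hu hv

theorem seg_subset_union (x y z : X) : seg x z ⊆ seg x y ∪ seg y z :=
  seg_subset (IsPreconnected.union y (right_mem_seg x y) (left_mem_seg y z)
    (isPreconnected_seg x y) (isPreconnected_seg y z)) (.inl (left_mem_seg x y))
    (.inr (right_mem_seg y z))

theorem seg_eq_union (hz : z ∈ seg x y) : seg x y = seg x z ∪ seg z y :=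
  (seg_subset_union x z y).antisymm
    (union_subset (seg_subset_seg (left_mem_seg x y) hz) (seg_subset_seg hz (right_mem_seg x y)))

theorem mem_seg_trans (hvu : v ∈ seg d u) (huw : u ∈ seg d w) : v ∈ seg d w :=
  seg_subset_seg (left_mem_seg d w) huw hvu

theorem isPreconnected_of_seg_subset {C : Set X} (hC : ∀ x ∈ C, ∀ y ∈ C, seg x y ⊆ C) :
    IsPreconnected C :=
  isPreconnected_of_forall_pair fun x hx y hy ↦
    ⟨seg x y, hC x hx y hy, left_mem_seg x y, right_mem_seg x y, isPreconnected_seg x y⟩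

theorem isPreconnected_inter {C D : Set X} (hC : IsPreconnected C) (hD : IsPreconnected D) :
    IsPreconnected (C ∩ D) :=
  isPreconnected_of_seg_subset fun _ hx _ hy ↦
    subset_inter (seg_subset hC hx.1 hy.1) (seg_subset hD hx.2 hy.2)

theorem eq_of_seg_subset_pair (h : seg x y ⊆ {x, y}) : x = y := by
  by_contra hxy
  exact (isPreconnected_seg x y).infinite_of_nontrivial
    ⟨x, left_mem_seg x y, y, right_mem_seg x y, hxy⟩ ((toFinite {x, y}).subset h)

theorem mem_branch_iff_disjoint_seg {S : Set X} (hx : x ∉ S) :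
    y ∈ branch S x ↔ Disjoint (seg x y) S := by
  refine ⟨fun hy ↦ disjoint_compl_left.mono_left ?_, fun h ↦ ?_⟩
  · exact (seg_subset isPreconnected_connectedComponentIn (mem_connectedComponentIn hx) hy).trans
      (connectedComponentIn_subset _ _)
  · exact (isPreconnected_seg x y).subset_connectedComponentIn (left_mem_seg x y)
      h.subset_compl_right (right_mem_seg x y)

theorem exists_mem_closure_branch {S : Set X} (hS : IsClosed S) (hne : S.Nonempty) (hx : x ∉ S) :
    ∃ d ∈ S, d ∈ closure (branch S x) := by
  obtain ⟨s, hs⟩ := hne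
  obtain ⟨d, -, hd⟩ := exists_mem_closure_branch_of_crossing hS hx isPreconnected_univ
    ⟨s, mem_univ s, hs⟩ ⟨x, mem_univ x, mem_connectedComponentIn hx⟩
  exact ⟨d, hd⟩

theorem seg_antisymm (hu : u ∈ seg d w) (hw : w ∈ seg d u) : u = w := by
  by_contra hne
  by_cases hd : d ∈ ({u} : Set X)
  · rw [mem_singleton_iff.1 hd, seg_self] at hw
    exact hne hw.symm
  obtain ⟨e, rfl, he⟩ := exists_mem_closure_branch isClosed_singleton (singleton_nonempty u) hd
  rcases seg_subset (isPreconnected_insert_branch he)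
    (mem_insert_of_mem _ (mem_connectedComponentIn hd)) (mem_insert _ _) hw with h | h
  · exact hne h.symm
  · exact disjoint_left.1 ((mem_branch_iff_disjoint_seg hd).1 h) hu rfl

theorem mem_seg_total (hu : u ∈ seg d a) (hv : v ∈ seg d a) : u ∈ seg d v ∨ v ∈ seg d u := by
  refine (seg_eq_union hv ▸ hu).imp_right fun huv ↦ ?_
  refine (seg_eq_union hu ▸ hv).elim id fun hvu ↦ ?_
  rw [seg_comm] at huv hvu
  exact seg_antisymm huv hvu ▸ right_mem_seg d u

theorem eq_of_mem_seg_of_mem_seg (hu : u ∈ seg d a) (hdu : w ∈ seg d u) (hua : w ∈ seg u a) :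
    w = u := by
  rcases seg_eq_union (mem_seg_trans hdu hu) ▸ hu with h | h
  · exact (seg_antisymm h hdu).symm
  · rw [seg_comm] at hua h
    exact seg_antisymm hua h

theorem mem_seg_between (hvu : v ∈ seg d u) (huw : u ∈ seg d w) : u ∈ seg v w := by
  rcases seg_eq_union (mem_seg_trans hvu huw) ▸ huw with h | h
  · exact seg_antisymm hvu h ▸ left_mem_seg v w
  · exact h

theorem isOpen_setOf_notMem_seg (d v : X) : IsOpen {w | v ∉ seg d w} := by
  by_cases hd : d = v
  · subst hd
    simp only [left_mem_seg, not_true_eq_false, ofPred_false, isOpen_empty]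
  · have : {w | v ∉ seg d w} = branch {v} d := ext fun w ↦ by
      rw [mem_branch_iff_disjoint_seg (mt mem_singleton_iff.1 hd), disjoint_singleton_right]; rfl
    exact this ▸ isOpen_branch isClosed_singleton d

theorem eq_of_mem_closure_branch {S : Set X} (hS : IsPreconnected S) (hd : d ∈ S)
    (hdx : d ∈ closure (branch S x)) (hc : c ∈ S) (hcx : c ∈ closure (branch S x)) : d = c := by
  have hcon : IsPreconnected (branch S x ∪ {d, c}) :=
    isPreconnected_connectedComponentIn.subset_closure subset_union_left
      (union_subset subset_closure (insert_subset hdx (singleton_subset_iff.2 hcx)))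
  refine eq_of_seg_subset_pair fun y hy ↦ ?_
  refine (seg_subset hcon (by simp) (by simp) hy).resolve_left fun h ↦ ?_
  exact connectedComponentIn_subset _ _ h (seg_subset hS hd hc hy)

theorem exists_gate_of_branch {S : Set X} (hS : IsClosed S) (hSc : IsPreconnected S)
    (hne : S.Nonempty) (hx : x ∉ S) :
    ∃ d ∈ S, d ∈ closure (branch S x) ∧ ∀ C : Set X, IsPreconnected C → (C ∩ S).Nonempty →
      (C ∩ branch S x).Nonempty → d ∈ C := by
  obtain ⟨d, hd, hdx⟩ := exists_mem_closure_branch hS hne hx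
  refine ⟨d, hd, hdx, fun C hC hCS hCx ↦ ?_⟩
  obtain ⟨c, hcC, hcS, hcx⟩ := exists_mem_closure_branch_of_crossing hS hx hC hCS hCx
  exact eq_of_mem_closure_branch hSc hd hdx hcS hcx ▸ hcC

theorem exists_gate {S : Set X} (hS : IsClosed S) (hSc : IsPreconnected S) (hne : S.Nonempty)
    (x : X) : ∃ w ∈ S, ∀ s ∈ S, w ∈ seg x s := by
  by_cases hx : x ∈ S
  · exact ⟨x, hx, fun s _ ↦ left_mem_seg x s⟩
  obtain ⟨d, hd, -, hgate⟩ := exists_gate_of_branch hS hSc hne hx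
  exact ⟨d, hd, fun s hs ↦ hgate _ (isPreconnected_seg x s) ⟨s, right_mem_seg x s, hs⟩
    ⟨x, left_mem_seg x s, mem_connectedComponentIn hx⟩⟩

theorem exists_mem_seg_ne_mem_open (hdy : d ≠ y) {O : Set X} (hO : IsOpen O) (hd : d ∈ O) :
    ∃ z ∈ seg d y, z ≠ d ∧ z ∈ O := by
  have hacc := (isPreconnected_seg d y).preperfect_of_nontrivial
    ⟨d, left_mem_seg d y, y, right_mem_seg d y, hdy⟩ d (left_mem_seg d y)
  obtain ⟨z, ⟨hzO, hz⟩, hzd⟩ := accPt_iff_nhds.1 hacc O (hO.mem_nhds hd)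
  exact ⟨z, hz, hzd, hzO⟩

theorem exists_isOpen_isPreconnected_subset {O : Set X} (hO : IsOpen O) (hd : d ∈ O) :
    ∃ O' ⊆ O, IsOpen O' ∧ IsPreconnected O' ∧ d ∈ O' :=
  ⟨connectedComponentIn O d, connectedComponentIn_subset _ _, hO.connectedComponentIn,
    isPreconnected_connectedComponentIn, mem_connectedComponentIn hd⟩

end Dendritic

section FinitelyBranched

variable {X : Type*} [TopologicalSpace X] [FinitelyBranched X] {d y : X}

variable (X) in
/-- A number `N` such that among any `N + 1` points outside a connected set, two are joined by a
segment avoiding that set. -/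
noncomputable def branchBound : ℕ := (FinitelyBranched.exists_bound (X := X)).choose

theorem exists_disjoint_seg {P : Set X} (hP : IsPreconnected P) (p : ℕ → X)
    (hp : ∀ i, p i ∉ P) : ∃ i j, i < j ∧ j ≤ branchBound X ∧ Disjoint (seg (p i) (p j)) P := by
  obtain ⟨i, j, hij, hdisj⟩ := FinitelyBranched.exists_bound.choose_spec P hP
    (fun i : Fin (branchBound X + 1) ↦ p i) fun i ↦ hp i
  rcases lt_or_gt_of_ne hij with h | h
  · exact ⟨i, j, h, Nat.lt_succ_iff.1 j.2, hdisj⟩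
  · exact ⟨j, i, h, Nat.lt_succ_iff.1 i.2, seg_comm (p i) (p j) ▸ hdisj⟩

theorem finite_image_compl {P : Set X} (hP : IsPreconnected P) {β : Type*}
    (g : X → β) (hg : ∀ x ∉ P, ∀ y ∉ P, Disjoint (seg x y) P → g x = g y) : (g '' Pᶜ).Finite := by
  by_contra hinf
  have e := Set.Infinite.natEmbedding (g '' Pᶜ) hinf
  choose p hp hgp using fun n ↦ (e n).2
  obtain ⟨i, j, hij, -, hdisj⟩ := exists_disjoint_seg hP p hp
  refine hij.ne (e.injective (Subtype.ext ?_))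
  rw [← hgp i, ← hgp j, hg _ (hp i) _ (hp j) hdisj]

theorem finite_branches {S : Set X} (hS : IsPreconnected S) : (branch S '' Sᶜ).Finite :=
  finite_image_compl hS _ fun _ hx _ _ hdisj ↦
    connectedComponentIn_eq ((mem_branch_iff_disjoint_seg hx).2 hdisj)

theorem finite_closure_diff {E : Set X} (hE : IsPreconnected E) : (closure E \ E).Finite := by
  by_contra hinf
  have e := Set.Infinite.natEmbedding _ hinf
  obtain ⟨i, j, hij, -, hdisj⟩ := exists_disjoint_seg hE (fun n ↦ (e n).1) fun n ↦ (e n).2.2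
  have hcon : IsPreconnected (E ∪ {(e i).1, (e j).1}) :=
    hE.subset_closure subset_union_left (union_subset subset_closure
      (insert_subset (e i).2.1 (singleton_subset_iff.2 (e j).2.1)))
  refine hij.ne (e.injective (Subtype.ext (eq_of_seg_subset_pair fun z hz ↦ ?_)))
  exact (seg_subset hcon (by simp) (by simp) hz).resolve_left (disjoint_left.1 hdisj hz)

/-- Only finitely many gates to `seg d y` differ from `d`, so near `d` the segment has no other
branch points. -/
theorem exists_unbranched_germ (hdy : d ≠ y) {O : Set X} (hO : IsOpen O) (hd : d ∈ O) :
    ∃ z ∈ seg d y, z ≠ d ∧ seg d z ⊆ O ∧ ∀ x, d ∉ seg x y → x ∈ seg d z ∨ z ∈ seg d x := by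
  choose gate gate_mem gate_mem_seg using
    exists_gate (isClosed_seg d y) (isPreconnected_seg d y) ⟨d, left_mem_seg d y⟩
  have hfin : (gate '' (seg d y)ᶜ).Finite := by
    refine finite_image_compl (isPreconnected_seg d y) _ fun u _ v _ hdisj ↦ ?_
    have hmem : gate u ∈ seg v (gate v) :=
      (seg_subset_union u v (gate v) (gate_mem_seg u _ (gate_mem v))).resolve_left
        fun h ↦ disjoint_left.1 hdisj h (gate_mem u)
    exact seg_antisymm hmem (gate_mem_seg v _ (gate_mem u))
  obtain ⟨O', hO'sub, hO', hO'con, hdO'⟩ := exists_isOpen_isPreconnected_subset (hO.inter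
    (hfin.subset (sdiff_subset (t := {d}))).isClosed.isOpen_compl) (d := d) ⟨hd, by simp⟩
  obtain ⟨z, hz, hzd, hzO'⟩ := exists_mem_seg_ne_mem_open hdy hO' hdO'
  have hsub := (seg_subset hO'con hdO' hzO').trans hO'sub
  refine ⟨z, hz, hzd, fun w hw ↦ (hsub hw).1, fun x hx ↦ ?_⟩
  by_cases hxL : x ∈ seg d y
  · exact mem_seg_total hxL hz
  have hne : gate x ≠ d := fun h ↦ hx (h ▸ gate_mem_seg x y (right_mem_seg d y))
  have hgx : gate x ∈ seg d x := seg_comm x d ▸ gate_mem_seg x d (left_mem_seg d y)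
  refine .inr ((mem_seg_total (gate_mem x) hz).elim (fun h ↦ ?_) fun h ↦ mem_seg_trans h hgx)
  exact absurd ⟨mem_image_of_mem _ hxL, hne⟩ (hsub h).2

end FinitelyBranched

end Segments

section Trees

open scoped unitInterval

/-- `γ` is the arc from `x` to `y` in `Z`: it is injective, and every connected subset of `Z`
containing its endpoints contains all of it. -/
structure IsLeastArc {X : Type*} [TopologicalSpace X] (Z : Set X) {x y : X} (γ : Path x y) :
    Prop where
  injective : Injective γ
  range_subset : range γ ⊆ Z
  range_subset_of_isPreconnected : ∀ C ⊆ Z, IsPreconnected C → x ∈ C → y ∈ C → range γ ⊆ C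

/-- Any two points of `Z` are the endpoints of a least arc in `Z`. This is the inductive form of
being a tree: it is stable under gluing at a single point. -/
def HasLeastArcs {X : Type*} [TopologicalSpace X] (Z : Set X) : Prop :=
  ∀ x ∈ Z, ∀ y ∈ Z, x ≠ y → ∃ γ : Path x y, IsLeastArc Z γ

variable {X : Type*} [TopologicalSpace X]

theorem convexComb_injective {s t : I} (hst : s ≠ t) : Injective (Icc.convexComb s t) := by
  intro u v huv
  have h : ((u : ℝ) - v) * (t - s) = 0 := by
    have := congrArg Subtype.val huv
    simp only [Icc.coe_convexComb] at this
    linarith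
  refine Subtype.ext (sub_eq_zero.1 ((mul_eq_zero.1 h).resolve_right fun h ↦ hst ?_))
  exact Subtype.ext (sub_eq_zero.1 h).symm

theorem exists_isEmbedding_range_eq_of_isArc {A : Set X} (hA : IsArc A) :
    ∃ j : I → X, IsEmbedding j ∧ range j = A := by
  obtain ⟨e⟩ := hA
  refine ⟨Subtype.val ∘ e.symm, .comp .subtypeVal e.symm.isEmbedding, ?_⟩
  rw [e.symm.surjective.range_comp, Subtype.range_coe]

section Arc

variable {j : I → X}

theorem ordConnected_preimage_of_isPreconnected (hj : IsEmbedding j) {C : Set X}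
    (hC : IsPreconnected C) (hCj : C ⊆ range j) : (j ⁻¹' C).OrdConnected := by
  refine IsPreconnected.ordConnected ?_
  rwa [← hj.isInducing.isPreconnected_image, image_preimage_eq_of_subset hCj]

theorem eq_zero_or_eq_one_of_isArcEndpoint (hj : IsEmbedding j) {p : X}
    (hp : IsArcEndpoint (range j) p) : p = j 0 ∨ p = j 1 := by
  obtain ⟨⟨t, rfl⟩, hconn⟩ := hp
  by_contra! hne
  have hord := ordConnected_preimage_of_isPreconnected hj hconn.isPreconnected sdiff_subset
  exact (hord.out (x := 0) (y := 1) ⟨mem_range_self _, hne.1.symm⟩ ⟨mem_range_self _, hne.2.symm⟩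
    ⟨unitInterval.nonneg', unitInterval.le_one'⟩).2 rfl

theorem hasLeastArcs_range (hj : IsEmbedding j) : HasLeastArcs (range j) := by
  rintro _ ⟨s, rfl⟩ _ ⟨t, rfl⟩ hst
  let γ : Path (j 0) (j 1) := ⟨⟨j, hj.continuous⟩, rfl, rfl⟩
  refine ⟨γ.subpath s t, hj.injective.comp (convexComb_injective (ne_of_apply_ne j hst)), ?_, ?_⟩
  · rw [Path.range_subpath]
    exact image_subset_range _ _
  · intro C hCj hC hs ht
    rw [Path.range_subpath, image_subset_iff]
    exact (ordConnected_preimage_of_isPreconnected hj hC hCj).uIcc_subset hs ht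

end Arc

theorem eq_or_endpoints_of_trans_eq {x p y : X} {γ : Path x p} {δ : Path p y} (hγ : Injective γ)
    (hδ : Injective δ) (hγδ : ∀ s t, γ s = δ t → (s = 1 ∧ t = 0) ∨ (s = 0 ∧ t = 1)) {a b : I}
    (hab : (γ.trans δ) a = (γ.trans δ) b) :
    a = b ∨ (a = 0 ∧ b = 1 ∧ x = y) ∨ (a = 1 ∧ b = 0 ∧ x = y) := by
  wlog hle : a ≤ b generalizing a b
  · rcases this hab.symm (le_of_not_ge hle) with h | ⟨hb, ha, hxy⟩ | ⟨hb, ha, hxy⟩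
    exacts [.inl h.symm, .inr (.inr ⟨ha, hb, hxy⟩), .inr (.inl ⟨ha, hb, hxy⟩)]
  rw [Path.trans_apply, Path.trans_apply] at hab
  rw [← Subtype.coe_le_coe] at hle
  split_ifs at hab with ha hb hb
  · have := congrArg Subtype.val (hγ hab)
    exact .inl (Subtype.ext (by linarith))
  · rcases hγδ _ _ hab with ⟨hs, ht⟩ | ⟨hs, ht⟩
    · have hs' := congrArg Subtype.val hs
      have ht' := congrArg Subtype.val ht
      norm_num at hs' ht'
      exact .inl (Subtype.ext (by linarith))
    · rw [hs, ht, γ.source, δ.target] at hab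
      have hs' := congrArg Subtype.val hs
      have ht' := congrArg Subtype.val ht
      norm_num at hs' ht'
      exact .inr (.inl ⟨hs', Subtype.ext (by rw [Set.Icc.coe_one]; linarith), hab⟩)
  · linarith
  · have := congrArg Subtype.val (hδ hab)
    exact .inl (Subtype.ext (by linarith))

section Gluing

variable {Z₁ Z₂ : Set X} {p x y : X}

theorem IsLeastArc.symm {γ : Path x y} (hγ : IsLeastArc Z₁ γ) : IsLeastArc Z₁ γ.symm where
  injective := hγ.injective.comp unitInterval.symm_bijective.injective
  range_subset := γ.symm_range ▸ hγ.range_subset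
  range_subset_of_isPreconnected _ hCZ hC hy hx :=
    γ.symm_range ▸ hγ.range_subset_of_isPreconnected _ hCZ hC hx hy

/-- Collapsing `Z₂` to the point `p` is a retraction of `Z₁ ∪ Z₂` onto `Z₁`. -/
theorem isPreconnected_inter_left_of_inter_eq_singleton {C : Set X} (h₁ : IsClosed Z₁)
    (h₂ : IsClosed Z₂) (hp : Z₁ ∩ Z₂ = {p}) (hC : IsPreconnected C) (hCZ : C ⊆ Z₁ ∪ Z₂) :
    IsPreconnected (C ∩ Z₁) := by
  classical
  rcases (C ∩ Z₁).eq_empty_or_nonempty with hempty | hne₁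
  · exact hempty ▸ isPreconnected_empty
  rcases (C ∩ Z₂).eq_empty_or_nonempty with hempty | hne₂
  · rwa [inter_eq_left.2 fun x hx ↦ (hCZ hx).resolve_right fun h ↦
      notMem_empty x (hempty ▸ ⟨hx, h⟩)]
  obtain ⟨q, hqC, hq⟩ := isPreconnected_closed_iff.1 hC Z₁ Z₂ h₁ h₂ hCZ hne₁ hne₂
  obtain rfl : q = p := (hp ▸ hq : q ∈ ({p} : Set X))
  let r : X → X := Z₁.piecewise id fun _ ↦ q
  have hr₁ : EqOn r id Z₁ := piecewise_eqOn _ _ _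
  have hr₂ : EqOn r (fun _ ↦ q) Z₂ := fun x hx ↦ by
    by_cases hx₁ : x ∈ Z₁
    · exact (hr₁ hx₁).trans (hp ▸ ⟨hx₁, hx⟩ : x ∈ ({q} : Set X))
    · exact piecewise_eq_of_notMem _ _ _ hx₁
  have hr : ContinuousOn r (Z₁ ∪ Z₂) :=
    (continuousOn_id.congr hr₁).union_of_isClosed (continuousOn_const.congr hr₂) h₁ h₂
  convert hC.image r (hr.mono hCZ) using 1
  refine Subset.antisymm (fun x hx ↦ ⟨x, hx.1, hr₁ hx.2⟩) ?_
  rintro _ ⟨x, hx, rfl⟩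
  rcases hCZ hx with hxZ | hxZ
  · rw [hr₁ hxZ]
    exact ⟨hx, hxZ⟩
  · rw [hr₂ hxZ]
    exact ⟨hqC, hq.1⟩

theorem IsLeastArc.union (h₁ : IsClosed Z₁) (h₂ : IsClosed Z₂) (hp : Z₁ ∩ Z₂ = {p}) (hx : x ∈ Z₁)
    (hy : y ∈ Z₁) {γ : Path x y} (hγ : IsLeastArc Z₁ γ) : IsLeastArc (Z₁ ∪ Z₂) γ where
  injective := hγ.injective
  range_subset := hγ.range_subset.trans subset_union_left
  range_subset_of_isPreconnected _ hCZ hC hxC hyC :=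
    (hγ.range_subset_of_isPreconnected _ inter_subset_right
      (isPreconnected_inter_left_of_inter_eq_singleton h₁ h₂ hp hC hCZ) ⟨hxC, hx⟩
      ⟨hyC, hy⟩).trans inter_subset_left

theorem IsLeastArc.trans (h₁ : IsClosed Z₁) (h₂ : IsClosed Z₂) (hp : Z₁ ∩ Z₂ = {p}) (hx : x ∈ Z₁)
    (hy : y ∈ Z₂) (hxy : x ≠ y) {γ : Path x p} {δ : Path p y} (hγ : IsLeastArc Z₁ γ)
    (hδ : IsLeastArc Z₂ δ) : IsLeastArc (Z₁ ∪ Z₂) (γ.trans δ) where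
  injective s t hst := by
    have hmeet : ∀ s t, γ s = δ t → (s = 1 ∧ t = 0) ∨ (s = 0 ∧ t = 1) := fun s t hst ↦ by
      have hsp : γ s = p := by
        rw [← mem_singleton_iff, ← hp]
        exact ⟨hγ.range_subset (mem_range_self s), hst ▸ hδ.range_subset (mem_range_self t)⟩
      exact .inl ⟨hγ.injective (hsp.trans γ.target.symm),
        hδ.injective ((hst.symm.trans hsp).trans δ.source.symm)⟩
    refine (eq_or_endpoints_of_trans_eq hγ.injective hδ.injective hmeet hst).resolve_right ?_
    rintro (⟨-, -, h⟩ | ⟨-, -, h⟩) <;> exact hxy h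
  range_subset := γ.trans_range δ ▸ union_subset_union hγ.range_subset hδ.range_subset
  range_subset_of_isPreconnected C hCZ hC hxC hyC := by
    obtain ⟨q, hqC, hq⟩ :=
      isPreconnected_closed_iff.1 hC Z₁ Z₂ h₁ h₂ hCZ ⟨x, hxC, hx⟩ ⟨y, hyC, hy⟩
    obtain rfl : q = p := (hp ▸ hq : q ∈ ({p} : Set X))
    rw [γ.trans_range δ]
    rw [union_comm] at hCZ
    exact union_subset
      ((hγ.union h₁ h₂ hp hx hq.1).range_subset_of_isPreconnected C (union_comm Z₂ Z₁ ▸ hCZ) hC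
        hxC hqC)
      ((hδ.union h₂ h₁ (inter_comm Z₁ Z₂ ▸ hp) hq.2 hy).range_subset_of_isPreconnected C hCZ hC
        hqC hyC)

theorem HasLeastArcs.union (h₁ : IsClosed Z₁) (h₂ : IsClosed Z₂) (hp : Z₁ ∩ Z₂ = {p})
    (hZ₁ : HasLeastArcs Z₁) (hZ₂ : HasLeastArcs Z₂) : HasLeastArcs (Z₁ ∪ Z₂) := by
  have hp' : Z₂ ∩ Z₁ = {p} := inter_comm Z₁ Z₂ ▸ hp
  have hpZ : p ∈ Z₁ ∩ Z₂ := hp ▸ mem_singleton p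
  have across : ∀ x ∈ Z₁, ∀ y ∈ Z₂, x ≠ y → ∃ γ : Path x y, IsLeastArc (Z₁ ∪ Z₂) γ := by
    intro x hx y hy hxy
    rcases eq_or_ne x p with rfl | hxp
    · obtain ⟨δ, hδ⟩ := hZ₂ x hpZ.2 y hy hxy
      exact ⟨δ, union_comm Z₂ Z₁ ▸ hδ.union h₂ h₁ hp' hpZ.2 hy⟩
    rcases eq_or_ne p y with rfl | hpy
    · obtain ⟨γ, hγ⟩ := hZ₁ x hx p hpZ.1 hxy
      exact ⟨γ, hγ.union h₁ h₂ hp hx hpZ.1⟩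
    obtain ⟨γ, hγ⟩ := hZ₁ x hx p hpZ.1 hxp
    obtain ⟨δ, hδ⟩ := hZ₂ p hpZ.2 y hy hpy
    exact ⟨γ.trans δ, hγ.trans h₁ h₂ hp hx hy hxy hδ⟩
  rintro x (hx | hx) y (hy | hy) hxy
  · obtain ⟨γ, hγ⟩ := hZ₁ x hx y hy hxy
    exact ⟨γ, hγ.union h₁ h₂ hp hx hy⟩
  · exact across x hx y hy hxy
  · obtain ⟨γ, hγ⟩ := across y hy x hx hxy.symm
    exact ⟨γ.symm, hγ.symm⟩
  · obtain ⟨γ, hγ⟩ := hZ₂ x hx y hy hxy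
    exact ⟨γ, union_comm Z₂ Z₁ ▸ hγ.union h₂ h₁ hp' hx hy⟩

end Gluing

theorem isSimpleClosedCurve_range_of_loop [T2Space X] {a : X} (γ : Path a a)
    (hγ : ∀ s t, γ s = γ t → s = t ∨ (s = 0 ∧ t = 1) ∨ (s = 1 ∧ t = 0)) :
    IsSimpleClosedCurve (range γ) := by
  have : Fact ((0 : ℝ) < 1) := ⟨one_pos⟩
  let e : AddCircle (1 : ℝ) ≃ₜ Metric.sphere (0 : ℂ) 1 := AddCircle.homeomorphCircle one_ne_zero
  have hI : Icc (0 : ℝ) (0 + 1) = I := by rw [zero_add]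
  let c : Icc (0 : ℝ) (0 + 1) → I := fun t ↦ ⟨t, hI ▸ t.2⟩
  have hc : ∀ {t}, c t = 0 → t = ⟨0, by simp⟩ := fun h ↦
    Subtype.ext (congrArg (fun t : I ↦ (t : ℝ)) h)
  have hc' : ∀ {t}, c t = 1 → t = ⟨0 + 1, by simp⟩ := fun h ↦
    Subtype.ext ((congrArg (fun t : I ↦ (t : ℝ)) h).trans (zero_add 1).symm)
  let q : Quot (AddCircle.EndpointIdent (1 : ℝ) 0) → X :=
    Quot.lift (γ ∘ c) (by
      rintro _ _ ⟨⟩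
      exact γ.source.trans ((congrArg γ (Subtype.ext (zero_add 1))).trans γ.target).symm)
  have hq : Continuous q := continuous_quot_lift _ (by fun_prop)
  have hinj : Injective q := by
    rintro ⟨s⟩ ⟨t⟩ hst
    rcases hγ _ _ hst with h | ⟨hs, ht⟩ | ⟨hs, ht⟩
    · exact congrArg _ (Subtype.ext (congrArg (fun t : I ↦ (t : ℝ)) h))
    · rw [hc hs, hc' ht]
      exact Quot.sound .mk
    · rw [hc' hs, hc ht]
      exact (Quot.sound .mk).symm
  have hrange : range q = range γ := by
    refine Subset.antisymm ?_ ?_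
    · rintro _ ⟨⟨t⟩, rfl⟩
      exact mem_range_self _
    · rintro _ ⟨t, rfl⟩
      exact ⟨Quot.mk _ ⟨t, hI.symm ▸ t.2⟩, rfl⟩
  let h := AddCircle.homeoIccQuot (1 : ℝ) 0
  have : CompactSpace (Quot (AddCircle.EndpointIdent (1 : ℝ) 0)) := h.compactSpace
  exact ⟨hrange ▸ (hq.isClosedEmbedding hinj).isEmbedding.toHomeomorph.symm.trans (h.symm.trans e)⟩

section Tree

theorem subsingleton_inter_range [T2Space X] {Z : Set X} (hZ : HasLeastArcs Z)
    (hX : ∀ S : Set X, ¬IsSimpleClosedCurve S) {j : I → X} (hj : IsEmbedding j)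
    (hend : ∀ t, j t ∈ Z → t = 0 ∨ t = 1) : (Z ∩ range j).Subsingleton := by
  by_contra hsub
  have h01 : j 0 ∈ Z ∧ j 1 ∈ Z := by
    obtain ⟨_, ⟨hs, s, rfl⟩, _, ⟨ht, t, rfl⟩, hst⟩ := not_subsingleton_iff.1 hsub
    rcases hend s hs with rfl | rfl <;> rcases hend t ht with rfl | rfl
    exacts [absurd rfl hst, ⟨hs, ht⟩, ⟨ht, hs⟩, absurd rfl hst]
  obtain ⟨δ, hδ⟩ := hZ _ h01.2 _ h01.1 fun h ↦ zero_ne_one (hj.injective h).symm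
  let γ : Path (j 0) (j 1) := ⟨⟨j, hj.continuous⟩, rfl, rfl⟩
  have hmeet : ∀ s t, γ s = δ t → (s = 1 ∧ t = 0) ∨ (s = 0 ∧ t = 1) := by
    intro s t hst
    rcases hend s (show γ s ∈ Z from hst ▸ hδ.range_subset (mem_range_self t)) with rfl | rfl
    · exact .inr ⟨rfl, hδ.injective (hst.symm.trans δ.target.symm)⟩
    · exact .inl ⟨rfl, hδ.injective (hst.symm.trans δ.source.symm)⟩
  refine hX _ (isSimpleClosedCurve_range_of_loop (γ.trans δ) fun s t hst ↦ ?_)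
  rcases eq_or_endpoints_of_trans_eq hj.injective hδ.injective hmeet hst with h | h | h
  exacts [.inl h, .inr (.inl ⟨h.1, h.2.1⟩), .inr (.inr ⟨h.1, h.2.1⟩)]

theorem exists_inter_sUnion_nonempty [PreconnectedSpace X] {𝒜 𝓑 : Finset (Set X)}
    (hcl : ∀ A ∈ 𝒜, IsClosed A) (hne : ∀ A ∈ 𝒜, A.Nonempty) (hun : ⋃₀ (𝒜 : Set (Set X)) = univ)
    (h𝓑 : 𝓑 ⊂ 𝒜) (h𝓑ne : 𝓑.Nonempty) :
    ∃ A ∈ 𝒜, A ∉ 𝓑 ∧ (⋃₀ (𝓑 : Set (Set X)) ∩ A).Nonempty := by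
  classical
  obtain ⟨A, hA, hA𝓑⟩ := Finset.exists_of_ssubset h𝓑
  obtain ⟨B, hB⟩ := h𝓑ne
  have hclosed : ∀ 𝓒 ⊆ 𝒜, IsClosed (⋃₀ (𝓒 : Set (Set X))) := fun 𝓒 h𝓒 ↦
    sUnion_eq_biUnion ▸ 𝓒.finite_toSet.isClosed_biUnion fun A hA ↦ hcl A (h𝓒 hA)
  have hcover : univ ⊆ ⋃₀ (𝓑 : Set (Set X)) ∪ ⋃₀ ((𝒜 \ 𝓑 : Finset (Set X)) : Set (Set X)) := by
    rw [← sUnion_union, ← Finset.coe_union, Finset.union_sdiff_of_subset h𝓑.1, hun]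
  obtain ⟨b, hb⟩ := hne B (h𝓑.1 hB)
  obtain ⟨a, ha⟩ := hne A hA
  obtain ⟨p, -, hp, A', hA', hpA'⟩ := isPreconnected_closed_iff.1 isPreconnected_univ _ _
    (hclosed 𝓑 h𝓑.1) (hclosed (𝒜 \ 𝓑) Finset.sdiff_subset) hcover ⟨b, trivial, B, hB, hb⟩
    ⟨a, trivial, A, Finset.mem_sdiff.2 ⟨hA, hA𝓑⟩, ha⟩
  obtain ⟨hA', hA'𝓑⟩ := Finset.mem_sdiff.1 hA'
  exact ⟨A', hA', hA'𝓑, p, hp, hpA'⟩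

theorem IsArc.isClosed [T2Space X] {A : Set X} (hA : IsArc A) : IsClosed A := by
  obtain ⟨j, hj, rfl⟩ := exists_isEmbedding_range_eq_of_isArc hA
  exact (isCompact_range hj.continuous).isClosed

theorem IsArc.nonempty {A : Set X} (hA : IsArc A) : A.Nonempty := by
  obtain ⟨j, -, rfl⟩ := exists_isEmbedding_range_eq_of_isArc hA
  exact range_nonempty j

theorem hasLeastArcs_univ [T2Space X] [ConnectedSpace X] {𝒜 : Finset (Set X)}
    (harc : ∀ A ∈ 𝒜, IsArc A) (hun : ⋃₀ (𝒜 : Set (Set X)) = univ)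
    (hend : ∀ A ∈ 𝒜, ∀ B ∈ 𝒜, A ≠ B → ∀ p ∈ A ∩ B, IsArcEndpoint A p)
    (hX : ∀ S : Set X, ¬IsSimpleClosedCurve S) : HasLeastArcs (univ : Set X) := by
  classical
  let P : Finset (Set X) → Prop := fun 𝓑 ↦
    𝓑 ⊆ 𝒜 ∧ 𝓑.Nonempty ∧ HasLeastArcs (⋃₀ (𝓑 : Set (Set X)))
  obtain ⟨A, hA, -⟩ : ∃ A ∈ 𝒜, Classical.arbitrary X ∈ A := by
    simpa using (hun ▸ mem_univ _ : Classical.arbitrary X ∈ ⋃₀ (𝒜 : Set (Set X)))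
  have hPA : P {A} := by
    obtain ⟨j, hj, rfl⟩ := exists_isEmbedding_range_eq_of_isArc (harc A hA)
    exact ⟨by simpa using hA, by simp, by simpa using hasLeastArcs_range hj⟩
  have hfin : {𝓑 | P 𝓑}.Finite := 𝒜.powerset.finite_toSet.subset fun 𝓑 h ↦ by simpa using h.1
  obtain ⟨𝓑, ⟨h𝓑, hne, hleast⟩, hmax⟩ := hfin.exists_maximal ⟨{A}, hPA⟩
  rcases h𝓑.eq_or_ssubset with rfl | hss
  · rwa [hun] at hleast
  obtain ⟨A, hA, hA𝓑, p, hp⟩ := exists_inter_sUnion_nonempty (fun A hA ↦ (harc A hA).isClosed)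
    (fun A hA ↦ (harc A hA).nonempty) hun hss hne
  obtain ⟨j, hj, rfl⟩ := exists_isEmbedding_range_eq_of_isArc (harc A hA)
  have hsub : (⋃₀ (𝓑 : Set (Set X)) ∩ range j).Subsingleton := by
    refine subsingleton_inter_range hleast hX hj fun t ⟨B, hB, ht⟩ ↦ ?_
    have hne : range j ≠ B := fun h ↦ hA𝓑 (h ▸ hB)
    exact (eq_zero_or_eq_one_of_isArcEndpoint hj
      (hend _ hA B (h𝓑 hB) hne (j t) ⟨mem_range_self t, ht⟩)).imp (hj.injective ·) (hj.injective ·)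
  have hclosed : IsClosed (⋃₀ (𝓑 : Set (Set X))) :=
    sUnion_eq_biUnion ▸ 𝓑.finite_toSet.isClosed_biUnion fun B hB ↦ (harc B (h𝓑 hB)).isClosed
  have hP : P (insert (range j) 𝓑) := by
    refine ⟨Finset.insert_subset hA h𝓑, Finset.insert_nonempty _ _, ?_⟩
    rw [Finset.coe_insert, sUnion_insert, union_comm]
    exact hleast.union hclosed (harc _ hA).isClosed (hsub.eq_singleton_of_mem hp)
      (hasLeastArcs_range hj)
  exact absurd (hmax hP (Finset.subset_insert _ _) (Finset.mem_insert_self _ _)) hA𝓑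

theorem IsLeastArc.seg_eq {x y : X} {γ : Path x y} (hγ : IsLeastArc univ γ) :
    seg x y = range γ :=
  Subset.antisymm
    (seg_subset (isPreconnected_range γ.continuous) ⟨0, γ.source⟩ ⟨1, γ.target⟩)
    (subset_sInter fun C hC ↦
      hγ.range_subset_of_isPreconnected C (subset_univ C) hC.1 hC.2.1 hC.2.2)

theorem locallyConnectedSpace_of_sUnion_isArc [T2Space X] {𝒜 : Finset (Set X)}
    (harc : ∀ A ∈ 𝒜, IsArc A) (hun : ⋃₀ (𝒜 : Set (Set X)) = univ) : LocallyConnectedSpace X := by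
  choose j hj hjA using fun A : 𝒜 ↦ exists_isEmbedding_range_eq_of_isArc (harc A A.2)
  have : LocallyPathConnectedSpace I := (convex_Icc (0 : ℝ) 1).locallyPathConnectedSpace
  let Φ : (Σ _ : 𝒜, I) → X := fun p ↦ j p.1 p.2
  have hΦ : Continuous Φ := continuous_sigma fun A ↦ (hj A).continuous
  have hsurj : Surjective Φ := by
    intro x
    obtain ⟨A, hA, hx⟩ : x ∈ ⋃₀ (𝒜 : Set (Set X)) := hun ▸ mem_univ x
    obtain ⟨t, rfl⟩ : x ∈ range (j ⟨A, hA⟩) := hjA ⟨A, hA⟩ ▸ hx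
    exact ⟨⟨⟨A, hA⟩, t⟩, rfl⟩
  have := (hΦ.isClosedMap.isQuotientMap hΦ hsurj).locallyPathConnectedSpace
  infer_instance

theorem disjoint_uIcc_of_ordConnected {α : Type*} [LinearOrder α] {S : Set α}
    (hS : S.OrdConnected) {s t : α} (hs : s ∉ S) (ht : t ∉ S)
    (hst : (∃ q ∈ S, q < s) ↔ ∃ q ∈ S, q < t) : Disjoint (uIcc s t) S := by
  wlog hle : s ≤ t generalizing s t
  · exact uIcc_comm s t ▸ this ht hs hst.symm (le_of_not_ge hle)
  rw [uIcc_of_le hle, disjoint_left]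
  rintro q ⟨hsq, hqt⟩ hq
  obtain ⟨r, hr, hrs⟩ := hst.2 ⟨q, hq, hqt.lt_of_ne fun h ↦ ht (h ▸ hq)⟩
  exact hs (hS.out hr hq ⟨hrs.le, hsq⟩)

theorem exists_disjoint_seg_of_sUnion_isArc [Dendritic X] {𝒜 : Finset (Set X)}
    (harc : ∀ A ∈ 𝒜, IsArc A) (hun : ⋃₀ (𝒜 : Set (Set X)) = univ) {P : Set X}
    (hP : IsPreconnected P) {ι : Type*} [Fintype ι] (hι : 2 * 𝒜.card < Fintype.card ι) (p : ι → X)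
    (hp : ∀ i, p i ∉ P) : ∃ i j, i ≠ j ∧ Disjoint (seg (p i) (p j)) P := by
  classical
  choose! j hj hjA using fun A hA ↦ exists_isEmbedding_range_eq_of_isArc (harc A hA)
  have hex : ∀ i, ∃ A ∈ 𝒜, ∃ t, j A t = p i := fun i ↦ by
    obtain ⟨A, hA, hi⟩ : p i ∈ ⋃₀ (𝒜 : Set (Set X)) := hun ▸ mem_univ (p i)
    exact ⟨A, hA, mem_range.1 ((hjA A hA).ge hi)⟩
  choose A hA t ht using hex
  let side : ι → Prop := fun i ↦ ∃ q ∈ j (A i) ⁻¹' P, q < t i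
  -- On each arc, the points outside `P` lie on one of two sides of the trace of `P`.
  obtain ⟨i, -, k, -, hik, hside⟩ := Finset.exists_ne_map_eq_of_card_lt_of_maps_to
    (s := Finset.univ) (t := 𝒜 ×ˢ Finset.univ) (f := fun i ↦ (A i, decide (side i)))
    (by simpa [mul_comm] using hι) (by simp [hA, em])
  obtain ⟨hAik : A i = A k, hside⟩ := Prod.ext_iff.1 hside
  have hord : (j (A i) ⁻¹' P).OrdConnected := by
    rw [← preimage_inter_range]
    exact ordConnected_preimage_of_isPreconnected (hj _ (hA i))
      (isPreconnected_inter hP (isPreconnected_range (hj _ (hA i)).continuous)) inter_subset_right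
  have hdisj : Disjoint (uIcc (t i) (t k)) (j (A i) ⁻¹' P) := by
    refine disjoint_uIcc_of_ordConnected hord (fun h ↦ hp i (ht i ▸ h))
      (fun h ↦ hp k (ht k ▸ hAik ▸ h)) ?_
    simpa only [side, decide_eq_decide, ← hAik] using hside
  refine ⟨i, k, hik, disjoint_left.2 fun x hx hxP ↦ ?_⟩
  obtain ⟨s, hs, rfl⟩ := seg_subset (C := j (A i) '' uIcc (t i) (t k))
    (isPreconnected_uIcc.image _ (hj _ (hA i)).continuous.continuousOn)
    ⟨t i, left_mem_uIcc, ht i⟩ ⟨t k, right_mem_uIcc, by rw [hAik]; exact ht k⟩ hx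
  exact disjoint_left.1 hdisj hs hxP

end Tree

theorem IsTree.dendritic {X : Type*} [MetricSpace X] (hX : IsTree X) : Dendritic X := by
  obtain ⟨_, _, ⟨𝒜, harc, hun, hend⟩, hscc⟩ := hX
  have hleast := hasLeastArcs_univ harc hun (fun A hA B hB hne p hp ↦ (hend A hA B hB hne p hp).1)
    hscc
  have hseg : ∀ x y : X, IsPreconnected (seg x y) ∧ IsClosed (seg x y) := by
    intro x y
    rcases eq_or_ne x y with rfl | hxy
    · rw [seg_self]
      exact ⟨isPreconnected_singleton, isClosed_singleton⟩
    · obtain ⟨γ, hγ⟩ := hleast x trivial y trivial hxy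
      rw [hγ.seg_eq]
      exact ⟨isPreconnected_range γ.continuous, (isCompact_range γ.continuous).isClosed⟩
  have := locallyConnectedSpace_of_sUnion_isArc harc hun
  exact ⟨fun x y ↦ (hseg x y).1, fun x y ↦ (hseg x y).2⟩

theorem IsTree.finitelyBranched {X : Type*} [MetricSpace X] (hX : IsTree X) :
    FinitelyBranched X := by
  have := hX.dendritic
  obtain ⟨𝒜, harc, hun, -⟩ := hX.2.2.1
  refine ⟨2 * 𝒜.card, fun P hP p hp ↦ ?_⟩
  exact exists_disjoint_seg_of_sUnion_isArc harc hun hP (by simp) p hp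

end Trees

section Horseshoes

/-- Some positive iterate of `Q` under `f` covers a member of the family `𝒜`. -/
def CoversMember {X : Type*} (f : X → X) (𝒜 : Set (Set X)) (Q : Set X) : Prop :=
  ∃ n ≥ 1, ∃ A ∈ 𝒜, A ⊆ f^[n] '' Q

/-- `𝒜` is a generalized horseshoe for `f`: every member contains two disjoint closed pieces each
of which eventually covers a member again. The covering times may vary. -/
structure IsHorseshoe {X : Type*} [TopologicalSpace X] (f : X → X) (𝒜 : Set (Set X)) : Prop where
  finite : 𝒜.Finite
  nonempty : 𝒜.Nonempty
  nonempty_of_mem : ∀ A ∈ 𝒜, A.Nonempty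
  exists_disjoint : ∀ A ∈ 𝒜, ∃ Q : Bool → Set X, Disjoint (Q true) (Q false) ∧
    ∀ b, IsClosed (Q b) ∧ Q b ⊆ A ∧ CoversMember f 𝒜 (Q b)

variable {X : Type*} {f : X → X}

theorem CoversMember.of_iterate {k : ℕ} (hk : 1 ≤ k) {𝒜 : Set (Set X)} {Q : Set X}
    (hQ : CoversMember f^[k] 𝒜 Q) : CoversMember f 𝒜 Q := by
  obtain ⟨n, hn, A, hA, hAQ⟩ := hQ
  exact ⟨k * n, Nat.mul_pos hk hn, A, hA, iterate_mul f k n ▸ hAQ⟩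

/-- Pulling back along the two branches doubles the number of separated points. -/
theorem exists_card_eq_two_pow_of_covering {ι : Type*} {A : ι → Set X} {Q : ι → Bool → Set X}
    (hA : ∀ i, (A i).Nonempty) (hQ : ∀ i, Disjoint (Q i true) (Q i false))
    (hQA : ∀ i b, Q i b ⊆ A i) {N : ℕ} (hN : 0 < N)
    (hcov : ∀ i b, ∃ n ≤ N, ∃ k, A k ⊆ f^[n] '' Q i b) (m : ℕ) (i : ι) :
    ∃ S : Finset X, (S : Set X) ⊆ A i ∧ S.card = 2 ^ m ∧ (S : Set X).Pairwise fun x y ↦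
      ∃ t < m * N, ∃ i b, f^[t] x ∈ Q i b ∧ f^[t] y ∈ Q i !b := by
  classical
  induction m generalizing i with
  | zero =>
    obtain ⟨x, hx⟩ := hA i
    exact ⟨{x}, by simpa using hx, by simp, by simp⟩
  | succ m ih =>
    choose n hn k hk using hcov i
    choose S hSA hScard hSsep using fun b ↦ ih (k b)
    choose! g hg hfg using fun b x (hx : x ∈ S b) ↦ hk b (hSA b hx)
    have hmem : ∀ b, ∀ x ∈ (S b).image (g b), x ∈ Q i b := fun b x hx ↦ by
      obtain ⟨y, hy, rfl⟩ := Finset.mem_image.1 hx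
      exact hg b y hy
    have hcard : ∀ b, ((S b).image (g b)).card = 2 ^ m := fun b ↦
      (Finset.card_image_of_injOn (LeftInvOn.injOn (hfg b))).trans (hScard b)
    have hdisj : Disjoint ((S true).image (g true)) ((S false).image (g false)) :=
      Finset.disjoint_left.2 fun x hx hx' ↦
        disjoint_left.1 (hQ i) (hmem true x hx) (hmem false x hx')
    refine ⟨Finset.univ.biUnion fun b ↦ (S b).image (g b), fun x hx ↦ ?_, ?_, ?_⟩
    · obtain ⟨b, -, hx⟩ := Finset.mem_biUnion.1 hx
      exact hQA i b (hmem b x hx)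
    · rw [Fintype.univ_bool, Finset.biUnion_insert, Finset.singleton_biUnion,
        Finset.card_union_of_disjoint hdisj, hcard, hcard, pow_succ, mul_two]
    intro x hx y hy hxy
    obtain ⟨b, -, hx⟩ := Finset.mem_biUnion.1 hx
    obtain ⟨b', -, hy⟩ := Finset.mem_biUnion.1 hy
    rcases eq_or_ne b' b with rfl | hb
    · obtain ⟨x, hxS, rfl⟩ := Finset.mem_image.1 hx
      obtain ⟨y, hyS, rfl⟩ := Finset.mem_image.1 hy
      obtain ⟨t, ht, i', b, hx', hy'⟩ := hSsep b' hxS hyS (ne_of_apply_ne _ hxy)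
      refine ⟨t + n b', by linarith [hn b', add_one_mul m N], i', b, ?_, ?_⟩
      · rwa [iterate_add_apply, hfg b' x hxS]
      · rwa [iterate_add_apply, hfg b' y hyS]
    · exact ⟨0, by positivity, i, b, hmem b x hx, Bool.eq_not_of_ne hb ▸ hmem b' y hy⟩

theorem card_le_seqCoverCountOn [TopologicalSpace X] {Y : Set X} (hY : MapsTo f Y Y) {a : ℕ → ℕ}
    {𝒰 : Finset (Set X)} (h𝒰 : IsOpenCoverOn Y 𝒰) {n : ℕ} {S : Finset X} (hSY : (S : Set X) ⊆ Y)
    (hS : (S : Set X).Pairwise fun x y ↦ ∃ i < n, ∀ U ∈ 𝒰, f^[a i] x ∈ U → f^[a i] y ∉ U) :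
    S.card ≤ seqCoverCountOn f Y a 𝒰 n := by
  classical
  have hcover : ∀ y ∈ Y, ∀ i : Fin n, ∃ U : 𝒰, f^[a i] y ∈ (U : Set X) := fun y hy i ↦ by
    obtain ⟨U, hU, hyU⟩ := h𝒰.2 (hY.iterate (a i) hy)
    exact ⟨⟨U, hU⟩, hyU⟩
  refine le_csInf ?_ ?_
  · let e := Fintype.equivFin (Fin n → 𝒰)
    refine ⟨Fintype.card (Fin n → 𝒰), fun j i ↦ (e.symm j i : Set X), fun j i ↦ (e.symm j i).2,
      fun y hy ↦ ?_⟩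
    choose U hU using hcover y hy
    exact mem_iUnion.2 ⟨e U, mem_iInter.2 fun i ↦ by simpa using hU i⟩
  · rintro m ⟨c, hc, hYc⟩
    choose F hF using fun y : S ↦ mem_iUnion.1 (hYc (hSY y.2))
    have hinj : Injective F := by
      intro x y hxy
      by_contra hne
      obtain ⟨i, hi, hsep⟩ := hS x.2 y.2 (Subtype.coe_ne_coe.2 hne)
      exact hsep _ (hc (F x) ⟨i, hi⟩) (mem_iInter.1 (hF x) ⟨i, hi⟩)
        (hxy ▸ mem_iInter.1 (hF y) ⟨i, hi⟩)
    simpa using Fintype.card_le_of_injective F hinj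

theorem exists_isOpenCoverOn_separating [TopologicalSpace X] {ι : Type*} [Finite ι]
    {Q : ι → Bool → Set X} (hQc : ∀ i b, IsClosed (Q i b))
    (hQ : ∀ i, Disjoint (Q i true) (Q i false)) :
    ∃ 𝒰 : Finset (Set X), IsOpenCoverOn univ 𝒰 ∧
      ∀ U ∈ 𝒰, ∀ i b, ∀ x ∈ Q i b, ∀ y ∈ Q i !b, x ∈ U → y ∉ U := by
  let V : (ι → Bool) → Set X := fun σ ↦ ⋂ i, (Q i (σ i))ᶜ
  refine ⟨(finite_range V).toFinset, ⟨fun U hU ↦ ?_, fun x _ ↦ ?_⟩, fun U hU i b x hx y hy hxU ↦ ?_⟩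
  · obtain ⟨σ, rfl⟩ := (finite_range V).mem_toFinset.1 hU
    exact isOpen_iInter_of_finite fun i ↦ (hQc i (σ i)).isOpen_compl
  · have hσ : ∀ i, ∃ b, x ∉ Q i b := fun i ↦ by
      by_cases hx : x ∈ Q i true
      · exact ⟨false, disjoint_left.1 (hQ i) hx⟩
      · exact ⟨true, hx⟩
    choose σ hσ using hσ
    exact ⟨V σ, by simp, mem_iInter.2 hσ⟩
  · obtain ⟨σ, rfl⟩ := (finite_range V).mem_toFinset.1 hU
    have hxσ : x ∉ Q i (σ i) := mem_iInter.1 hxU i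
    rcases eq_or_ne (σ i) b with rfl | hb
    · exact absurd hx hxσ
    · exact fun hyU ↦ mem_iInter.1 hyU i (Bool.eq_not_of_ne hb ▸ hy)

theorem topEntropy_ne_zero_of_two_pow_le [TopologicalSpace X] {𝒰 : Finset (Set X)}
    (h𝒰 : IsOpenCoverOn univ 𝒰) {N : ℕ} (hN : 0 < N)
    (hcount : ∀ m, 2 ^ m ≤ seqCoverCountOn f univ id 𝒰 (m * N)) : topEntropy f ≠ 0 := by
  have hN' : (0 : ℝ) < N := by exact_mod_cast hN
  have hlow : ENNReal.ofReal (Real.log 2 / N) ≤ topEntropy f := by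
    refine le_trans ?_ (le_iSup₂ (f := fun (𝒰 : Finset (Set X)) (_ : IsOpenCoverOn univ 𝒰) ↦ _)
      𝒰 h𝒰)
    refine le_limsup_of_frequently_le (frequently_atTop.2 fun M ↦ ?_) (by isBoundedDefault)
    refine ⟨(M + 1) * N, by nlinarith, ENNReal.ofReal_le_ofReal ?_⟩
    have hlog : (M + 1 : ℕ) * Real.log 2 ≤
        Real.log (seqCoverCountOn f univ id 𝒰 ((M + 1) * N)) := by
      rw [← Real.log_pow]
      exact Real.log_le_log (by positivity) (by exact_mod_cast hcount (M + 1))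
    rw [div_le_div_iff₀ hN' (by positivity)]
    push_cast at hlog ⊢
    nlinarith
  refine ((ENNReal.ofReal_pos.2 ?_).trans_le hlow).ne'
  exact div_pos (Real.log_pos one_lt_two) hN'

theorem IsHorseshoe.topEntropy_ne_zero [TopologicalSpace X] {𝒜 : Set (Set X)}
    (h𝒜 : IsHorseshoe f 𝒜) : topEntropy f ≠ 0 := by
  have := h𝒜.finite.to_subtype
  have := Fintype.ofFinite 𝒜
  choose Q hQ hQb using fun A : 𝒜 ↦ h𝒜.exists_disjoint A A.2
  choose hQc hQA n _ B hB hBQ using hQb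
  obtain ⟨N, hN⟩ : ∃ N, ∀ A b, n A b ≤ N := by
    obtain ⟨N, hN⟩ := (finite_range fun p : 𝒜 × Bool ↦ n p.1 p.2).bddAbove
    exact ⟨N, fun A b ↦ hN ⟨(A, b), rfl⟩⟩
  obtain ⟨𝒰, h𝒰, hsep⟩ := exists_isOpenCoverOn_separating hQc hQ
  obtain ⟨A₀, hA₀⟩ := h𝒜.nonempty
  refine topEntropy_ne_zero_of_two_pow_le h𝒰 N.succ_pos fun m ↦ ?_
  obtain ⟨S, -, hcard, hS⟩ := exists_card_eq_two_pow_of_covering (A := fun A : 𝒜 ↦ (A : Set X))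
    (fun A ↦ h𝒜.nonempty_of_mem A A.2) hQ hQA N.succ_pos
    (fun A b ↦ ⟨n A b, (hN A b).trans N.le_succ, ⟨B A b, hB A b⟩, hBQ A b⟩) m ⟨A₀, hA₀⟩
  rw [← hcard]
  refine card_le_seqCoverCountOn (mapsTo_univ f univ) h𝒰 (subset_univ _) (hS.mono' ?_)
  rintro x y ⟨t, ht, A, b, hx, hy⟩
  exact ⟨t, ht, fun U hU ↦ hsep U hU A b _ hx _ hy⟩

/-- The dynamical form of `topEntropy f = 0`; unlike the latter it passes to iterates at once. -/
def NoHorseshoe [TopologicalSpace X] (f : X → X) : Prop := ∀ 𝒜, ¬IsHorseshoe f 𝒜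

theorem NoHorseshoe.iterate [TopologicalSpace X] (hf : NoHorseshoe f) {k : ℕ} (hk : 1 ≤ k) :
    NoHorseshoe f^[k] := by
  refine fun 𝒜 h𝒜 ↦ hf 𝒜 ⟨h𝒜.finite, h𝒜.nonempty, h𝒜.nonempty_of_mem, fun A hA ↦ ?_⟩
  obtain ⟨Q, hdisj, hQ⟩ := h𝒜.exists_disjoint A hA
  exact ⟨Q, hdisj, fun b ↦ ⟨(hQ b).1, (hQ b).2.1, (hQ b).2.2.of_iterate hk⟩⟩

theorem noHorseshoe_of_topEntropy_eq_zero [TopologicalSpace X] (hf : topEntropy f = 0) :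
    NoHorseshoe f := fun _ h𝒜 ↦ h𝒜.topEntropy_ne_zero hf

end Horseshoes

section ChainRecurrence

theorem mem_omegaLimitSet_iff {X : Type*} [TopologicalSpace X] {f : X → X} {x y : X} :
    y ∈ omegaLimitSet f x ↔ ∀ W, IsOpen W → y ∈ W → ∀ n, ∃ k ≥ n, f^[k] x ∈ W := by
  simp only [omegaLimitSet, mem_iInter, mem_closure_iff]
  constructor
  · intro h W hW hy n
    obtain ⟨_, hW, k, hk, rfl⟩ := h n W hW hy
    exact ⟨k, hk, hW⟩
  · intro h n W hW hy
    obtain ⟨k, hk, hkW⟩ := h W hW hy n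
    exact ⟨f^[k] x, hkW, k, hk, rfl⟩

variable {X : Type*} [MetricSpace X] {f : X → X} {z : X}

theorem EpsChain.exists_periodic {ε : ℝ} (h : EpsChain f ε z z) :
    ∃ n ≥ 1, ∃ c : ℕ → X, (∀ i, dist (f (c i)) (c (i + 1)) < ε) ∧ (∀ i, c (i + n) = c i) ∧
      ∀ m, c (m * n) = z := by
  obtain ⟨n, hn, c, h0, hcn, hc⟩ := h
  refine ⟨n, hn, fun i ↦ c (i % n), fun i ↦ ?_, fun i ↦ by simp, fun m ↦ by simp [h0]⟩
  have hstep := hc (i % n) (Nat.mod_lt i hn)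
  rcases (Nat.succ_le_of_lt (Nat.mod_lt i hn)).lt_or_eq with hlt | heq
  · have hmod : (i + 1) % n = i % n + 1 := by rw [← Nat.mod_add_mod, Nat.mod_eq_of_lt hlt]
    simpa only [hmod] using hstep
  · have hmod : (i + 1) % n = 0 := by
      rw [← Nat.mod_add_mod, show i % n + 1 = n from heq, Nat.mod_self]
    rw [show i % n + 1 = n from heq, hcn] at hstep
    simpa only [hmod, h0] using hstep

variable [CompactSpace X]

theorem exists_epsChain_of_near_ends (hf : Continuous f) {ε : ℝ} (hε : 0 < ε) :
    ∃ δ > 0, ∀ (x : X) (n : ℕ) (c : ℕ → X), 1 ≤ n → (∀ i < n, dist (f (c i)) (c (i + 1)) < δ) →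
      dist x (c 0) < δ → dist (c n) x < δ → EpsChain f ε x x := by
  obtain ⟨δ, hδ, hfδ⟩ := Metric.uniformContinuous_iff.1
    (CompactSpace.uniformContinuous_of_continuous hf) (ε / 3) (by linarith)
  refine ⟨min δ (ε / 3), by positivity, fun x n c hn hc h0 h1 ↦ ?_⟩
  let c' : ℕ → X := fun i ↦ if i = 0 ∨ i = n then x else c i
  have hnear : ∀ i, dist (c' i) (c i) < min δ (ε / 3) := by
    intro i
    simp only [c']
    split_ifs with hi
    · rcases hi with rfl | rfl
      · exact h0
      · rwa [dist_comm]
    · rw [dist_self]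
      positivity
  refine ⟨n, hn, c', by simp [c'], by simp [c'], fun i hi ↦ ?_⟩
  calc dist (f (c' i)) (c' (i + 1))
      ≤ dist (f (c' i)) (f (c i)) + dist (f (c i)) (c (i + 1)) + dist (c (i + 1)) (c' (i + 1)) :=
        dist_triangle4 _ _ _ _
    _ < ε / 3 + ε / 3 + ε / 3 := by
        gcongr
        · exact hfδ ((hnear i).trans_le (min_le_left _ _))
        · exact (hc i hi).trans_le (min_le_right _ _)
        · rw [dist_comm]
          exact (hnear (i + 1)).trans_le (min_le_right _ _)
    _ = ε := by ring

theorem isClosed_chainRecurrentSet (hf : Continuous f) : IsClosed (chainRecurrentSet f) := by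
  rw [← closure_subset_iff_isClosed]
  intro x hx ε hε
  obtain ⟨δ, hδ, h⟩ := exists_epsChain_of_near_ends hf hε
  obtain ⟨y, hy, hxy⟩ := Metric.mem_closure_iff.1 hx δ hδ
  obtain ⟨n, hn, c, h0, h1, hc⟩ := hy δ hδ
  exact h x n c hn hc (by rwa [h0]) (by rwa [h1, dist_comm])

theorem mapsTo_chainRecurrentSet (hf : Continuous f) :
    MapsTo f (chainRecurrentSet f) (chainRecurrentSet f) := by
  intro z hz ε hε
  obtain ⟨δ, hδ, h⟩ := exists_epsChain_of_near_ends hf hε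
  obtain ⟨n, hn, c, hc, hper, hcz⟩ := (hz δ hδ).exists_periodic
  have hfz : dist (f z) (c 1) < δ := by simpa only [← hcz 0, zero_mul] using hc 0
  refine h (f z) n (fun i ↦ c (i + 1)) hn (fun i _ ↦ hc (i + 1)) hfz ?_
  rwa [show c (n + 1) = c 1 by rw [add_comm, hper], dist_comm]

theorem nonWanderingSet_subset_chainRecurrentSet (hf : Continuous f) :
    nonWanderingSet f ⊆ chainRecurrentSet f := by
  intro x hx ε hε
  obtain ⟨δ, hδ, h⟩ := exists_epsChain_of_near_ends hf hε
  obtain ⟨n, hn, y, hny, hy⟩ := hx (Metric.ball x δ) Metric.isOpen_ball (Metric.mem_ball_self hδ)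
  refine h x n (fun i ↦ f^[i] y) hn (fun i _ ↦ ?_) (by rwa [dist_comm]) hny
  simpa only [iterate_succ_apply', dist_self] using hδ

theorem omegaSet_subset_chainRecurrentSet (hf : Continuous f) :
    omegaSet f ⊆ chainRecurrentSet f := by
  intro y hy ε hε
  obtain ⟨x, hx⟩ := mem_iUnion.1 hy
  obtain ⟨δ, hδ, h⟩ := exists_epsChain_of_near_ends hf hε
  have hvisit := mem_omegaLimitSet_iff.1 hx _ Metric.isOpen_ball (Metric.mem_ball_self hδ)
  obtain ⟨k, -, hk⟩ := hvisit 0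
  obtain ⟨l, hl, hl'⟩ := hvisit (k + 1)
  refine h y (l - k) (fun i ↦ f^[i + k] x) (by omega) (fun i _ ↦ ?_) ?_ ?_
  · simpa only [add_right_comm i 1 k, iterate_succ_apply', dist_self] using hδ
  · rw [zero_add, dist_comm]
    exact hk
  · rwa [Nat.sub_add_cancel (by omega)]

theorem exists_forall_dist_iterate_lt (hf : Continuous f) (k : ℕ) {ε : ℝ} (hε : 0 < ε) :
    ∃ δ > 0, ∀ c : ℕ → X, (∀ i, dist (f (c i)) (c (i + 1)) < δ) →
      ∀ i, dist (f^[k] (c i)) (c (i + k)) < ε := by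
  induction k generalizing ε with
  | zero => exact ⟨1, one_pos, fun c _ i ↦ by simpa using hε⟩
  | succ k ih =>
    obtain ⟨η, hη, hfη⟩ := Metric.uniformContinuous_iff.1
      (CompactSpace.uniformContinuous_of_continuous hf) (ε / 2) (half_pos hε)
    obtain ⟨δ, hδ, hk⟩ := ih hη
    refine ⟨min δ (ε / 2), by positivity, fun c hc i ↦ ?_⟩
    have hlast := (hc (i + k)).trans_le (min_le_right _ _)
    have hfirst := hfη (hk c (fun i ↦ (hc i).trans_le (min_le_left _ _)) i)
    rw [iterate_succ_apply', ← add_assoc]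
    linarith [dist_triangle (f (f^[k] (c i))) (f (c (i + k))) (c (i + k + 1))]

theorem mem_chainRecurrentSet_iterate (hf : Continuous f) {k : ℕ} (hz : z ∈ chainRecurrentSet f) :
    z ∈ chainRecurrentSet f^[k] := by
  intro ε hε
  obtain ⟨δ, hδ, h⟩ := exists_forall_dist_iterate_lt hf k hε
  obtain ⟨n, hn, c, hc, -, hcz⟩ := (hz δ hδ).exists_periodic
  refine ⟨n, hn, fun i ↦ c (i * k), by simpa using hcz 0,
    (congrArg c (mul_comm n k)).trans (hcz k), fun i _ ↦ ?_⟩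
  simpa only [add_mul, one_mul] using h c hc (i * k)

/-- A fine pseudo-orbit from `z` back to `z` is trapped in `S` after its first step. -/
theorem mem_image_of_mapsTo_interior (hf : Continuous f) {S : Set X} (hS : IsClosed S)
    (hSS : MapsTo f S (interior S)) (hz : z ∈ chainRecurrentSet f) (hfz : f z ∈ interior S) :
    z ∈ f '' S := by
  have hcomp : IsCompact (f '' S) := hS.isCompact.image hf
  obtain ⟨ε, hε, hth⟩ := (hcomp.insert (f z)).exists_thickening_subset_open isOpen_interior
    (insert_subset hfz hSS.image_subset)
  have htrap : ∀ x ∈ insert z S, ∀ y, dist (f x) y < ε → y ∈ S := fun x hx y hxy ↦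
    interior_subset (hth (Metric.mem_thickening_iff.2
      ⟨f x, image_insert_eq ▸ mem_image_of_mem f hx, by rwa [dist_comm]⟩))
  rw [← hcomp.isClosed.closure_eq, Metric.mem_closure_iff]
  intro η hη
  obtain ⟨n, hn, c, hc, -, hcz⟩ := (hz (min ε η) (lt_min hε hη)).exists_periodic
  have hcS : ∀ i, c (i + 1) ∈ S := by
    intro i
    induction i with
    | zero =>
      exact htrap (c 0) (.inl (by simpa using hcz 0)) _ ((hc 0).trans_le (min_le_left _ _))
    | succ i ih => exact htrap _ (.inr ih) _ ((hc _).trans_le (min_le_left _ _))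
  refine ⟨_, mem_image_of_mem f (hcS (2 * n - 2)), ?_⟩
  have hlast := (hc (2 * n - 2 + 1)).trans_le (min_le_right ε η)
  rwa [show 2 * n - 2 + 1 + 1 = 2 * n by omega, hcz 2, dist_comm] at hlast

end ChainRecurrence

section Collars

/-- The branches off `closure E` whose attaching point lies in `E` itself. -/
def innerBranches {X : Type*} [TopologicalSpace X] (E : Set X) : Set (Set X) :=
  {K ∈ branch (closure E) '' (closure E)ᶜ | ∃ d ∈ E, d ∈ closure K}

/-- The union of the closed branches off `closure E` that do not touch `E`. -/
def outerRegion {X : Type*} [TopologicalSpace X] (E : Set X) : Set X :=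
  ⋃ K ∈ branch (closure E) '' (closure E)ᶜ \ innerBranches E, closure K

/-- A choice, in each inner branch `K` of `E`, of a segment `[base K, tip K]` (the arm) that leaves
`E` at `base K` without branching off. Together with `closure E` the arms form a neighbourhood
of `E`. -/
structure Collar {X : Type*} [TopologicalSpace X] (E : Set X) where
  base : innerBranches E → X
  tip : innerBranches E → X
  base_mem : ∀ K, base K ∈ E
  base_mem_closure : ∀ K : innerBranches E, base K ∈ closure (K : Set X)
  tip_mem : ∀ K : innerBranches E, tip K ∈ (K : Set X)
  mem_arm_or_tip_mem : ∀ (K : innerBranches E), ∀ w ∈ (K : Set X),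
    w ∈ seg (base K) (tip K) ∨ tip K ∈ seg (base K) w

namespace Collar

variable {X : Type*} [TopologicalSpace X] {E : Set X}

/-- The segment of the collar in the inner branch `K`. -/
def arm (c : Collar E) (K : innerBranches E) : Set X := seg (c.base K) (c.tip K)

/-- The neighbourhood of `E` formed by `closure E` and the arms. -/
def nhd (c : Collar E) : Set X := closure E ∪ ⋃ K, c.arm K

theorem arm_subset_nhd (c : Collar E) (K : innerBranches E) : c.arm K ⊆ c.nhd :=
  (subset_iUnion c.arm K).trans subset_union_right

end Collar

variable {X : Type*} [TopologicalSpace X] {E : Set X} {w : X}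

theorem notMem_closure_of_mem_innerBranches {K : Set X} (hK : K ∈ innerBranches E) (hw : w ∈ K) :
    w ∉ closure E := by
  obtain ⟨⟨x, -, rfl⟩, -⟩ := hK
  exact connectedComponentIn_subset _ _ hw

theorem branch_mem_innerBranches (hw : w ∉ closure E) (hw' : w ∉ outerRegion E) :
    branch (closure E) w ∈ innerBranches E := by
  by_contra hK
  exact hw' (mem_biUnion ⟨mem_image_of_mem _ hw, hK⟩
    (subset_closure (mem_connectedComponentIn hw)))

theorem notMem_outerRegion (hw : w ∈ E) : w ∉ outerRegion E := by
  intro h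
  obtain ⟨K, hK, hwK⟩ := mem_iUnion₂.1 h
  exact hK.2 ⟨hK.1, w, hw, hwK⟩

namespace Collar

variable {c : Collar E} {K : innerBranches E}

theorem tip_ne_base (c : Collar E) (K : innerBranches E) : c.tip K ≠ c.base K := fun h ↦
  notMem_closure_of_mem_innerBranches K.2 (c.tip_mem K) (h ▸ subset_closure (c.base_mem K))

theorem notMem_closure_of_mem_arm (hw : w ∈ c.arm K) (hne : w ≠ c.base K) : w ∉ closure E := by
  refine notMem_closure_of_mem_innerBranches K.2 ?_
  have hK : IsPreconnected (insert (c.base K) (K : Set X)) := by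
    obtain ⟨⟨x, -, hx⟩, -⟩ := K.2
    have hd := c.base_mem_closure K
    rw [← hx] at hd ⊢
    exact isPreconnected_insert_branch hd
  exact (seg_subset hK (mem_insert _ _) (mem_insert_of_mem _ (c.tip_mem K)) hw).resolve_left hne

theorem tip_mem_seg_of_notMem_nhd (hw : w ∈ (K : Set X)) (hwc : w ∉ c.nhd) :
    c.tip K ∈ seg (c.base K) w :=
  (c.mem_arm_or_tip_mem K w hw).resolve_left fun h ↦ hwc (c.arm_subset_nhd K h)

end Collar

variable [FinitelyBranched X]

theorem finite_innerBranches (hE : IsPreconnected E) : (innerBranches E).Finite :=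
  (finite_branches hE.closure).subset fun _ hK ↦ hK.1

theorem isClosed_outerRegion (hE : IsPreconnected E) : IsClosed (outerRegion E) :=
  ((finite_branches hE.closure).subset sdiff_subset).isClosed_biUnion fun _ _ ↦ isClosed_closure

theorem innerBranches_nonempty (hE : IsPreconnected E) (h : ¬E ⊆ interior (closure E)) :
    (innerBranches E).Nonempty := by
  obtain ⟨x, hxE, hx⟩ := not_subset.1 h
  have hcover : (closure E)ᶜ ⊆ ⋃ K ∈ branch (closure E) '' (closure E)ᶜ, closure K := fun y hy ↦
    mem_biUnion (mem_image_of_mem _ hy) (subset_closure (mem_connectedComponentIn hy))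
  have hclosed : IsClosed (⋃ K ∈ branch (closure E) '' (closure E)ᶜ, closure K) :=
    (finite_branches hE.closure).isClosed_biUnion fun _ _ ↦ isClosed_closure
  rw [← mem_compl_iff, ← closure_compl] at hx
  obtain ⟨K, hK, hxK⟩ := mem_iUnion₂.1 (closure_minimal hcover hclosed hx)
  exact ⟨K, hK, x, hxE, hxK⟩

theorem exists_collar_arm_subset {O : Set X} (hO : IsOpen O) (hEO : E ⊆ O) :
    ∃ c : Collar E, ∀ K, c.arm K ⊆ O := by
  have harm : ∀ K : innerBranches E, ∃ d ∈ E, d ∈ closure (K : Set X) ∧ ∃ y ∈ (K : Set X),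
      seg d y ⊆ O ∧ ∀ w ∈ (K : Set X), w ∈ seg d y ∨ y ∈ seg d w := by
    rintro ⟨_, ⟨x, hx, rfl⟩, d, hdE, hdx⟩
    have hdK : d ∉ branch (closure E) x := fun h ↦
      connectedComponentIn_subset _ _ h (subset_closure hdE)
    have hne : d ≠ x := fun h ↦ hx (h ▸ subset_closure hdE)
    obtain ⟨y, hy, hyd, hyO, hgerm⟩ := exists_unbranched_germ hne hO (hEO hdE)
    refine ⟨d, hdE, hdx, y, ?_, hyO, fun w hw ↦ hgerm w fun hd ↦ hdK ?_⟩
    · exact (seg_subset (isPreconnected_insert_branch hdx) (mem_insert _ _)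
        (mem_insert_of_mem _ (mem_connectedComponentIn hx)) hy).resolve_left hyd
    · exact seg_subset isPreconnected_connectedComponentIn hw (mem_connectedComponentIn hx) hd
  choose d hdE hd y hy hO hgerm using harm
  exact ⟨⟨d, y, hdE, hd, hy, hgerm⟩, hO⟩

namespace Collar

theorem subset_interior_nhd (hE : IsPreconnected E) (c : Collar E) : E ⊆ interior c.nhd := by
  have := (finite_innerBranches hE).to_subtype
  let R : Set X := outerRegion E ∪ ⋃ K, {w | c.tip K ∈ seg (c.base K) w}
  have hR : IsClosed R := (isClosed_outerRegion hE).union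
    (isClosed_iUnion_of_finite fun K ↦ ⟨isOpen_setOf_notMem_seg (c.base K) (c.tip K)⟩)
  refine fun w hw ↦ mem_interior.2 ⟨Rᶜ, fun v hv ↦ ?_, hR.isOpen_compl, ?_⟩
  · by_contra hvc
    have hK := branch_mem_innerBranches (fun h ↦ hvc (.inl h)) fun h ↦ hv (.inl h)
    exact hv (.inr (mem_iUnion.2 ⟨⟨_, hK⟩,
      tip_mem_seg_of_notMem_nhd (mem_connectedComponentIn fun h ↦ hvc (.inl h)) hvc⟩))
  · rintro (h | h)
    · exact notMem_outerRegion hw h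
    · obtain ⟨K, hK⟩ := mem_iUnion.1 h
      exact notMem_closure_of_mem_innerBranches K.2 (c.tip_mem K)
        (subset_closure (seg_subset hE (c.base_mem K) hw hK))

theorem exists_arm_subset (hE : IsPreconnected E) (c : Collar E) {B : Set X}
    (hB : IsPreconnected B) (hBE : (B ∩ closure E).Nonempty) (hwB : w ∈ B) (hwc : w ∉ c.nhd)
    (hw : w ∉ outerRegion E) : ∃ K, c.arm K ⊆ B := by
  have hwE : w ∉ closure E := fun h ↦ hwc (.inl h)
  let K : innerBranches E := ⟨_, branch_mem_innerBranches hwE hw⟩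
  have hwK : w ∈ (K : Set X) := mem_connectedComponentIn hwE
  obtain ⟨d, hdB, hdE, hdK⟩ :=
    exists_mem_closure_branch_of_crossing isClosed_closure hwE hB hBE ⟨w, hwB, hwK⟩
  have hbase : c.base K = d := eq_of_mem_closure_branch hE.closure
    (subset_closure (c.base_mem K)) (c.base_mem_closure K) hdE hdK
  refine ⟨K, Subset.trans ?_ (seg_subset hB (hbase ▸ hdB) hwB)⟩
  exact seg_subset_seg (left_mem_seg _ _) (tip_mem_seg_of_notMem_nhd hwK hwc)

end Collar

end Collars

section InvariantConnectedSets

/-- `E` is maximal among the invariant connected sets that contain `g z` but not `z`. -/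
structure IsMaximalAvoiding {X : Type*} [TopologicalSpace X] (g : X → X) (z : X) (E : Set X) :
    Prop where
  isPreconnected : IsPreconnected E
  mapsTo : MapsTo g E E
  map_mem : g z ∈ E
  notMem : z ∉ E
  subset_of_subset : ∀ E', E ⊆ E' → IsPreconnected E' → MapsTo g E' E' → z ∉ E' → E' ⊆ E

/-- `g^[M]` maps this set off the outer region, and its points do not hit `z` before
time `2 * M`. -/
def tameRegion {X : Type*} [TopologicalSpace X] (g : X → X) (z : X) (E : Set X) (M : ℕ) : Set X :=
  g^[M] ⁻¹' (outerRegion E)ᶜ ∩ ⋂ n ∈ Finset.range (2 * M), g^[n] ⁻¹' {z}ᶜ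

theorem exists_isMaximalAvoiding {X : Type*} [TopologicalSpace X] {g : X → X} {z : X} {F : Set X}
    (hF : IsPreconnected F) (hFF : MapsTo g F F) (hgz : g z ∈ F) (hz : z ∉ F) :
    ∃ E, IsMaximalAvoiding g z E := by
  obtain ⟨E, -, hE⟩ := zorn_subset_nonempty
    {E | IsPreconnected E ∧ MapsTo g E E ∧ g z ∈ E ∧ z ∉ E} (fun c hc _ hne ↦
      ⟨⋃₀ c, ⟨isPreconnected_sUnion (g z) c (fun s hs ↦ (hc hs).2.2.1) fun s hs ↦ (hc hs).1,
        fun x ⟨s, hs, hx⟩ ↦ ⟨s, hs, (hc hs).2.1 hx⟩,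
        hne.imp fun s hs ↦ ⟨hs, (hc hs).2.2.1⟩,
        fun ⟨s, hs, hzs⟩ ↦ (hc hs).2.2.2 hzs⟩, fun _ ↦ subset_sUnion_of_mem⟩)
    F ⟨hF, hFF, hgz, hz⟩
  obtain ⟨h1, h2, h3, h4⟩ := hE.prop
  exact ⟨E, h1, h2, h3, h4, fun E' hEE' hE' hinv hz' ↦
    hE.le_of_ge ⟨hE', hinv, hEE' h3, hz'⟩ hEE'⟩

namespace IsMaximalAvoiding

section Topological

variable {X : Type*} [TopologicalSpace X] {g : X → X} {z : X} {E : Set X}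

theorem iterate_mem (hE : IsMaximalAvoiding g z E) {n : ℕ} (hn : 1 ≤ n) : g^[n] z ∈ E := by
  obtain ⟨m, rfl⟩ := Nat.exists_eq_add_of_le' hn
  rw [iterate_add_apply]
  exact hE.mapsTo.iterate m hE.map_mem

theorem iterate_ne (hE : IsMaximalAvoiding g z E) {x : X} (hx : x ∈ E) (n : ℕ) : g^[n] x ≠ z :=
  fun h ↦ hE.notMem (h ▸ hE.mapsTo.iterate n hx)

theorem iterate_iterate_mem (hE : IsMaximalAvoiding g z E) (M j : ℕ) {x : X} (hx : x ∈ E) :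
    (g^[M])^[j] x ∈ E :=
  (hE.mapsTo.iterate M).iterate j hx

theorem subset_tameRegion (hE : IsMaximalAvoiding g z E) (M : ℕ) : E ⊆ tameRegion g z E M :=
  fun _ hx ↦ ⟨notMem_outerRegion (hE.mapsTo.iterate M hx),
    mem_iInter₂.2 fun n _ ↦ hE.iterate_ne hx n⟩

theorem iterate_notMem_outerRegion {M : ℕ} (hM : MapsTo g^[M] (closure E) E) {c : Collar E}
    (hc : ∀ K, c.arm K ⊆ tameRegion g z E M) {v : X} (hv : v ∈ c.nhd) :
    g^[M] v ∉ outerRegion E := by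
  rcases hv with hv | hv
  · exact notMem_outerRegion (hM hv)
  · obtain ⟨K, hK⟩ := mem_iUnion.1 hv
    exact (hc K hK).1

theorem iterate_ne_of_mem_nhd (hE : IsMaximalAvoiding g z E) {M : ℕ}
    (hM : MapsTo g^[M] (closure E) E) {c : Collar E} (hc : ∀ K, c.arm K ⊆ tameRegion g z E M)
    {v : X} (hv : v ∈ c.nhd) {r : ℕ} (hr : M ≤ r) (hr' : r < 2 * M) : g^[r] v ≠ z := by
  rcases hv with hv | hv
  · rw [← Nat.sub_add_cancel hr, iterate_add_apply]
    exact hE.iterate_ne (hM hv) _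
  · obtain ⟨K, hK⟩ := mem_iUnion.1 hv
    exact mem_iInter₂.1 (hc K hK).2 r (Finset.mem_range.2 hr')

theorem exists_iterate_eq (hE : IsMaximalAvoiding g z E) (hg : Continuous g) {A : Set X}
    (hA : IsPreconnected A) (hAE : (A ∩ E).Nonempty) (hsub : ¬A ⊆ E) :
    ∃ n, ∃ a ∈ A, g^[n] a = z := by
  obtain ⟨a, haA, haE⟩ := hAE
  by_contra! hz
  refine hsub ((subset_iUnion_of_subset 0 (by simp)).trans
    (hE.subset_of_subset (⋃ n, (E ∪ g^[n] '' A)) ?_ ?_ ?_ ?_))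
  · exact subset_iUnion_of_subset 0 subset_union_left
  · exact isPreconnected_iUnion ⟨a, mem_iInter.2 fun _ ↦ .inl haE⟩ fun n ↦
      IsPreconnected.union (g^[n] a) (hE.mapsTo.iterate n haE) (mem_image_of_mem _ haA)
        hE.isPreconnected (hA.image _ (hg.iterate n).continuousOn)
  · intro x hx
    obtain ⟨n, hx | ⟨y, hy, rfl⟩⟩ := mem_iUnion.1 hx
    · exact mem_iUnion.2 ⟨n, .inl (hE.mapsTo hx)⟩
    · exact mem_iUnion.2 ⟨n + 1, .inr ⟨y, hy, iterate_succ_apply' g n y⟩⟩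
  · intro h
    obtain ⟨n, h | ⟨y, hy, h⟩⟩ := mem_iUnion.1 h
    · exact hE.notMem h
    · exact hz n y hy h

variable [FinitelyBranched X]

theorem exists_mapsTo_closure (hE : IsMaximalAvoiding g z E) (hg : Continuous g) :
    ∃ M ≥ 1, MapsTo g^[M] (closure E) E := by
  have hhit : ∀ s ∈ closure E \ E, ∃ n, g^[n] s = z := by
    rintro s ⟨hs, hsE⟩
    obtain ⟨n, w, hw | hw, hn⟩ := hE.exists_iterate_eq hg (A := insert s E)
      (hE.isPreconnected.subset_closure (subset_insert _ _) (insert_subset hs subset_closure))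
      ⟨g z, mem_insert_of_mem _ hE.map_mem, hE.map_mem⟩ fun h ↦ hsE (h (mem_insert _ _))
    · exact ⟨n, hw ▸ hn⟩
    · exact absurd hn (hE.iterate_ne hw n)
  choose! n hn using hhit
  obtain ⟨N, hN⟩ := ((finite_closure_diff hE.isPreconnected).image n).bddAbove
  refine ⟨N + 1, by omega, fun s hs ↦ ?_⟩
  by_cases hsE : s ∈ E
  · exact hE.mapsTo.iterate _ hsE
  · have hle : n s ≤ N := hN (mem_image_of_mem _ ⟨hs, hsE⟩)
    rw [show N + 1 = (N - n s + 1) + n s by omega, iterate_add_apply, hn s ⟨hs, hsE⟩]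
    exact hE.iterate_mem (by omega)

theorem isOpen_tameRegion (hE : IsMaximalAvoiding g z E) (hg : Continuous g) (M : ℕ) :
    IsOpen (tameRegion g z E M) :=
  ((isClosed_outerRegion hE.isPreconnected).isOpen_compl.preimage (hg.iterate M)).inter
    (isOpen_biInter_finset fun n _ ↦ isOpen_compl_singleton.preimage (hg.iterate n))

theorem exists_iterate_eq_of_mem_arm (hE : IsMaximalAvoiding g z E) (hg : Continuous g) {M : ℕ}
    {c : Collar E} (hc : ∀ K, c.arm K ⊆ tameRegion g z E M) {K : innerBranches E} {y : X}
    (hy : y ∈ c.arm K) (hne : y ≠ c.base K) :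
    ∃ n ≥ 2 * M, ∃ a ∈ seg (c.base K) y, g^[n] a = z := by
  obtain ⟨n, a, ha, hn⟩ := hE.exists_iterate_eq hg (isPreconnected_seg (c.base K) y)
    ⟨c.base K, left_mem_seg _ _, c.base_mem K⟩ fun h ↦
      Collar.notMem_closure_of_mem_arm hy hne (subset_closure (h (right_mem_seg _ _)))
  refine ⟨n, le_of_not_gt fun hlt ↦ ?_, a, ha, hn⟩
  exact mem_iInter₂.1 (hc K (mem_seg_trans ha hy)).2 n (Finset.mem_range.2 hlt) hn

/-- Follow a point of the germ that is going to hit `z` up to the first time it leaves `c.nhd`. -/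
theorem exists_exit (hE : IsMaximalAvoiding g z E) (hg : Continuous g) {M : ℕ} (hM₁ : 1 ≤ M)
    (hM : MapsTo g^[M] (closure E) E) {c : Collar E} (hc : ∀ K, c.arm K ⊆ tameRegion g z E M)
    {K : innerBranches E} {y : X} (hy : y ∈ c.arm K) (hne : y ≠ c.base K) :
    ∃ j ≥ 1, ∃ u ∈ seg (c.base K) y,
      (g^[M])^[j] u ∉ c.nhd ∧ (g^[M])^[j] u ∉ outerRegion E := by
  obtain ⟨n, hn, v, hv, hvz⟩ := hE.exists_iterate_eq_of_mem_arm hg hc hy hne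
  have hexit : ∃ j, ∃ u ∈ seg (c.base K) y, (g^[M])^[j] u ∉ c.nhd := by
    obtain ⟨q, hq⟩ := Nat.exists_eq_add_of_le' ((Nat.le_div_iff_mul_le hM₁).2 hn)
    have hdiv : n % M + M + M * (q + 1) = n := by
      rw [← Nat.mod_add_div n M, hq, Nat.add_mul_mod_self_left, Nat.mod_mod]
      ring
    refine ⟨q + 1, v, hv, fun hvc ↦ ?_⟩
    refine hE.iterate_ne_of_mem_nhd hM hc hvc (r := n % M + M) (by omega)
      (by linarith [Nat.mod_lt n hM₁]) ?_
    rw [← iterate_mul, ← iterate_add_apply, hdiv, hvz]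
  classical
  obtain ⟨u, hu, huc⟩ := Nat.find_spec hexit
  have hj : 1 ≤ Nat.find hexit := Nat.one_le_iff_ne_zero.2 fun h0 ↦ by
    rw [h0] at huc
    exact huc (c.arm_subset_nhd K (mem_seg_trans hu hy))
  refine ⟨_, hj, u, hu, huc, ?_⟩
  obtain ⟨i, hi⟩ := Nat.exists_eq_add_of_le' hj
  have hmin := Nat.find_min hexit (m := i) (by omega)
  push Not at hmin
  rw [hi, iterate_succ_apply']
  exact iterate_notMem_outerRegion hM hc (hmin u hu)

theorem coversMember_of_exit (hE : IsMaximalAvoiding g z E) (hg : Continuous g) {M : ℕ}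
    {c : Collar E} {Q : Set X} (hQ : IsPreconnected Q) {j : ℕ} (hj : 1 ≤ j) {s u : X} (hs : s ∈ Q)
    (hsE : (g^[M])^[j] s ∈ E) (hu : u ∈ Q) (huc : (g^[M])^[j] u ∉ c.nhd)
    (hu' : (g^[M])^[j] u ∉ outerRegion E) : CoversMember g^[M] (range c.arm) Q := by
  obtain ⟨K, hK⟩ := c.exists_arm_subset hE.isPreconnected
    (hQ.image _ ((hg.iterate M).iterate j).continuousOn)
    ⟨_, mem_image_of_mem _ hs, subset_closure hsE⟩ (mem_image_of_mem _ hu) huc hu'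
  exact ⟨j, hj, _, mem_range_self K, hK⟩

/-- The point `a` hits `z` and then returns to `E`. A point `u` close to `base K` leaves the collar
so late that `a` has returned by then; so `[u, a]` covers an arm, and `[base K, y']` does so for any
`y'` closer to `base K` than `u`. -/
theorem exists_disjoint_coversMember (hE : IsMaximalAvoiding g z E) (hg : Continuous g) {M : ℕ}
    (hM₁ : 1 ≤ M) (hM : MapsTo g^[M] (closure E) E) {c : Collar E}
    (hc : ∀ K, c.arm K ⊆ tameRegion g z E M) (K : innerBranches E) :
    ∃ Q : Bool → Set X, Disjoint (Q true) (Q false) ∧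
      ∀ b, IsClosed (Q b) ∧ Q b ⊆ c.arm K ∧ CoversMember g^[M] (range c.arm) (Q b) := by
  obtain ⟨n, -, a, ha, haz⟩ :=
    hE.exists_iterate_eq_of_mem_arm hg hc (right_mem_seg _ _) (c.tip_ne_base K)
  have hbase : ∀ j, (g^[M])^[j] (c.base K) ∈ E := fun j ↦ hE.iterate_iterate_mem M j (c.base_mem K)
  have ha_return : ∀ j, n < j → (g^[M])^[j] a ∈ E := fun j hj ↦ by
    have hlt : n < M * j := hj.trans_le (Nat.le_mul_of_pos_left j hM₁)
    rw [← iterate_mul, ← Nat.sub_add_cancel hlt.le, iterate_add_apply, haz]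
    exact hE.iterate_mem (by omega)
  have ha_ne : c.base K ≠ a := fun h ↦ hE.iterate_ne (c.base_mem K) n (h ▸ haz)
  obtain ⟨O, hOc, hO, hOpre, hbaseO⟩ := exists_isOpen_isPreconnected_subset (d := c.base K)
    (isOpen_biInter_finset fun i (_ : i ∈ Finset.range (n + 1)) ↦
      isOpen_interior.preimage ((hg.iterate M).iterate i))
    (mem_iInter₂.2 fun i _ ↦ c.subset_interior_nhd hE.isPreconnected (hbase i))
  obtain ⟨y, hya, hy_ne, hyO⟩ := exists_mem_seg_ne_mem_open ha_ne hO hbaseO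
  obtain ⟨j, hj, u, huy, huc, hu⟩ := hE.exists_exit hg hM₁ hM hc (mem_seg_trans hya ha) hy_ne
  have hnj : n < j := by
    by_contra! hjn
    exact huc (interior_subset (mem_iInter₂.1 (hOc (seg_subset hOpre hbaseO hyO huy)) j
      (Finset.mem_range.2 (by omega))))
  have hua : u ∈ seg (c.base K) a := mem_seg_trans huy hya
  have hu_ne : c.base K ≠ u := fun h ↦ huc (.inl (subset_closure (h ▸ hbase j)))
  obtain ⟨y', hy'u, hy'_ne, hy'⟩ := exists_mem_seg_ne_mem_open hu_ne isOpen_compl_singleton hu_ne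
  have hy'K : y' ∈ c.arm K := mem_seg_trans hy'u (mem_seg_trans hua ha)
  obtain ⟨j', hj', u', hu'y', hu'c, hu'⟩ := hE.exists_exit hg hM₁ hM hc hy'K hy'_ne
  refine ⟨fun b ↦ if b then seg (c.base K) y' else seg u a, disjoint_left.2 fun q hq hq' ↦ ?_,
    Bool.forall_bool.2 ⟨⟨isClosed_seg u a, seg_subset_seg (mem_seg_trans hua ha) ha, ?_⟩,
      isClosed_seg _ y', seg_subset_seg (left_mem_seg _ _) hy'K, ?_⟩⟩
  · obtain rfl := eq_of_mem_seg_of_mem_seg hua (mem_seg_trans hq hy'u) hq'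
    exact hy' (seg_antisymm hy'u hq)
  · exact hE.coversMember_of_exit hg (isPreconnected_seg u a) hj (right_mem_seg u a)
      (ha_return j hnj) (left_mem_seg u a) huc hu
  · exact hE.coversMember_of_exit hg (isPreconnected_seg _ y') hj' (left_mem_seg _ y')
      (hbase j') hu'y' hu'c hu'

end Topological

section Metric

variable {X : Type*} [MetricSpace X] [CompactSpace X] [FinitelyBranched X] {g : X → X} {z : X}
  {E : Set X}

theorem not_subset_interior_closure (hE : IsMaximalAvoiding g z E) (hg : Continuous g)
    (hz : z ∈ chainRecurrentSet g) : ¬E ⊆ interior (closure E) := by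
  obtain ⟨M, hM₁, hM⟩ := hE.exists_mapsTo_closure hg
  intro hsub
  obtain ⟨s, hs, hsz⟩ := mem_image_of_mapsTo_interior (hg.iterate M) isClosed_closure
    (fun _ hx ↦ hsub (hM hx)) (mem_chainRecurrentSet_iterate hg hz) (hsub (hE.iterate_mem hM₁))
  exact hE.notMem (hsz ▸ hM hs)

theorem exists_isHorseshoe (hE : IsMaximalAvoiding g z E) (hg : Continuous g)
    (hz : z ∈ chainRecurrentSet g) : ∃ M ≥ 1, ∃ 𝒜, IsHorseshoe g^[M] 𝒜 := by
  obtain ⟨M, hM₁, hM⟩ := hE.exists_mapsTo_closure hg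
  obtain ⟨c, hc⟩ :=
    exists_collar_arm_subset (hE.isOpen_tameRegion hg M) (hE.subset_tameRegion M)
  have := (finite_innerBranches hE.isPreconnected).to_subtype
  have := (innerBranches_nonempty hE.isPreconnected
    (hE.not_subset_interior_closure hg hz)).to_subtype
  refine ⟨M, hM₁, range c.arm, finite_range _, range_nonempty _, ?_, ?_⟩
  · rintro _ ⟨K, rfl⟩
    exact ⟨c.base K, left_mem_seg _ _⟩
  · rintro _ ⟨K, rfl⟩
    exact hE.exists_disjoint_coversMember hg hM₁ hM hc K

end Metric

end IsMaximalAvoiding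

variable {X : Type*} [MetricSpace X] [CompactSpace X] [FinitelyBranched X] {g : X → X} {z : X}
  {F : Set X}

theorem NoHorseshoe.mem_of_map_mem (hgh : NoHorseshoe g) (hg : Continuous g)
    (hz : z ∈ chainRecurrentSet g) (hF : IsPreconnected F) (hFF : MapsTo g F F) (hgz : g z ∈ F) :
    z ∈ F := by
  by_contra hzF
  obtain ⟨E, hE⟩ := exists_isMaximalAvoiding hF hFF hgz hzF
  obtain ⟨M, hM₁, 𝒜, h𝒜⟩ := hE.exists_isHorseshoe hg hz
  exact hgh.iterate hM₁ 𝒜 h𝒜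

theorem NoHorseshoe.mem_of_iterate_mem (hgh : NoHorseshoe g) (hg : Continuous g)
    (hz : z ∈ chainRecurrentSet g) (hF : IsPreconnected F) (hFF : MapsTo g F F) (n : ℕ)
    (hgz : g^[n] z ∈ F) : z ∈ F := by
  induction n with
  | zero => exact hgz
  | succ n ih =>
    refine ih (hgh.mem_of_map_mem hg ((mapsTo_chainRecurrentSet hg).iterate n hz) hF hFF ?_)
    rwa [← iterate_succ_apply' g]

end InvariantConnectedSets

section SegmentOrbits

/-- No point of the segment from `x` to `y` ever enters `P` under iteration of `g`. -/
def SegAvoids {X : Type*} [TopologicalSpace X] (g : X → X) (P : Set X) (x y : X) : Prop :=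
  ∀ w ∈ seg x y, ∀ n, g^[n] w ∉ P

/-- The union of the forward images of the segment from `x` to `h x`: an invariant connected set
containing the orbit of `x`. -/
def segOrbit {X : Type*} [TopologicalSpace X] (h : X → X) (x : X) : Set X :=
  ⋃ m, h^[m] '' seg x (h x)

variable {X : Type*} [TopologicalSpace X] {P Q : Set X} {g h : X → X} {x y p p' w : X}

theorem iterate_mem_segOrbit (h : X → X) (x : X) (m : ℕ) : h^[m] x ∈ segOrbit h x :=
  mem_iUnion.2 ⟨m, x, left_mem_seg _ _, rfl⟩

theorem mapsTo_segOrbit (h : X → X) (x : X) : MapsTo h (segOrbit h x) (segOrbit h x) := by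
  intro w hw
  obtain ⟨m, y, hy, rfl⟩ := mem_iUnion.1 hw
  exact mem_iUnion.2 ⟨m + 1, y, hy, iterate_succ_apply' h m y⟩

theorem SegAvoids.iterate_notMem_of_mem_segOrbit {d : ℕ} (hP : SegAvoids g P x (g^[d] x))
    (hw : w ∈ segOrbit g^[d] x) (n : ℕ) : g^[n] w ∉ P := by
  obtain ⟨m, y, hy, rfl⟩ := mem_iUnion.1 hw
  rw [← iterate_mul, ← iterate_add_apply]
  exact hP y hy _

theorem NoHorseshoe.not_subset_image (hgh : NoHorseshoe g) (hg : Continuous g) {Q' : Set X}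
    (hQ : IsClosed Q) (hQ' : IsClosed Q') (hdisj : Disjoint Q Q') (hne : Q.Nonempty) {j l : ℕ}
    (hj : 1 ≤ j) (hQQ : Q ⊆ g^[j] '' Q) (hQQ' : Q' ⊆ g^[j] '' Q) : ¬Q ⊆ g^[l] '' Q' := by
  refine fun hQ'Q ↦ hgh {Q} ⟨finite_singleton Q, singleton_nonempty Q, by simpa using hne, ?_⟩
  rintro _ rfl
  refine ⟨fun b ↦ _ ∩ g^[j] ⁻¹' if b then _ else Q',
    (hdisj.preimage _).mono inter_subset_right inter_subset_right,
    Bool.forall_bool.2 ⟨⟨hQ.inter (hQ'.preimage (hg.iterate j)), inter_subset_left,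
      l + j, by omega, _, rfl, fun q hq ↦ ?_⟩,
      hQ.inter (hQ.preimage (hg.iterate j)), inter_subset_left, j, hj, _, rfl, fun q hq ↦ ?_⟩⟩
  · obtain ⟨q', hq', rfl⟩ := hQ'Q hq
    obtain ⟨q'', hq'', rfl⟩ := hQQ' hq'
    exact ⟨q'', ⟨hq'', hq'⟩, iterate_add_apply g l j q''⟩
  · obtain ⟨q', hq', rfl⟩ := hQQ hq
    exact ⟨q', ⟨hq', hq⟩, rfl⟩

variable [Dendritic X]

theorem isPreconnected_segOrbit (hh : Continuous h) (x : X) : IsPreconnected (segOrbit h x) :=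
  IsPreconnected.iUnion_of_chain
    (fun m ↦ (isPreconnected_seg _ _).image _ (hh.iterate m).continuousOn) fun m ↦
      ⟨h^[m] (h x), mem_image_of_mem _ (right_mem_seg _ _), x, left_mem_seg _ _,
        iterate_succ_apply h m x⟩

theorem mem_seg_of_notMem (hP : IsPreconnected P) (hp : p ∈ P) (hp' : p' ∈ P) (hw : w ∉ P)
    (hwy : w ∈ seg p y) : w ∈ seg p' y :=
  (seg_subset_union p p' y hwy).resolve_left fun h ↦ hw (seg_subset hP hp hp' h)

end SegmentOrbits

section Factors

variable {X : Type*} [MetricSpace X] [CompactSpace X] [FinitelyBranched X] {g : X → X}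
  {P : Set X} {z : X}

theorem NoHorseshoe.iterate_notMem (hgh : NoHorseshoe g) (hg : Continuous g)
    (hz : z ∈ chainRecurrentSet g) (hP : IsPreconnected P) (hPP : MapsTo g P P) (hzP : z ∉ P)
    (n : ℕ) : g^[n] z ∉ P :=
  fun h ↦ hzP (hgh.mem_of_iterate_mem hg hz hP hPP n h)

theorem NoHorseshoe.exists_mem_image_iterate (hgh : NoHorseshoe g) (hg : Continuous g)
    (hz : z ∈ chainRecurrentSet g) (hP : IsPreconnected P) (hPP : MapsTo g P P) (hzP : z ∉ P)
    {Q : Set X} (hQ : IsPreconnected Q) {x q : X} {n l k : ℕ} (hx : x ∈ Q) (hxn : g^[n] x ∈ P)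
    (hq : q ∈ Q) (hnl : n ≤ l) (hqz : g^[k] z = g^[l] q) : ∃ i ≥ n, z ∈ g^[i] '' Q := by
  have hF : IsPreconnected (⋃ i, (P ∪ g^[i + n] '' Q)) :=
    isPreconnected_iUnion ⟨_, mem_iInter.2 fun _ ↦ .inl hxn⟩ fun i ↦
      IsPreconnected.union (g^[i + n] x) (iterate_add_apply g i n x ▸ hPP.iterate i hxn)
        (mem_image_of_mem _ hx) hP (hQ.image _ (hg.iterate _).continuousOn)
  have hFF : MapsTo g (⋃ i, (P ∪ g^[i + n] '' Q)) (⋃ i, (P ∪ g^[i + n] '' Q)) := by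
    intro w hw
    obtain ⟨i, hw | ⟨y, hy, rfl⟩⟩ := mem_iUnion.1 hw
    · exact mem_iUnion.2 ⟨0, .inl (hPP hw)⟩
    · exact mem_iUnion.2 ⟨i + 1, .inr ⟨y, hy, by
        rw [Nat.add_right_comm, iterate_succ_apply']⟩⟩
  have hz : z ∈ ⋃ i, (P ∪ g^[i + n] '' Q) := hgh.mem_of_iterate_mem hg hz hF hFF k
    (mem_iUnion.2 ⟨l - n, .inr ⟨q, hq, by rw [Nat.sub_add_cancel hnl, hqz]⟩⟩)
  obtain ⟨i, hi⟩ := mem_iUnion.1 hz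
  exact ⟨i + n, Nat.le_add_left n i, hi.resolve_left hzP⟩

/-- Otherwise `[x, g^[b] z]` and `[g^[j] x, g^[a] z]`, with `g^[j] x ∈ P`, form a horseshoe. -/
theorem NoHorseshoe.notMem_seg_iterate (hgh : NoHorseshoe g) (hg : Continuous g)
    (hz : z ∈ chainRecurrentSet g) (hP : IsPreconnected P) (hPP : MapsTo g P P) (hzP : z ∉ P)
    {x p : X} (hx : x ∉ P) {n : ℕ} (hxn : g^[n] x ∈ P) (hp : p ∈ P) {a b : ℕ}
    (hax : g^[a] z ∈ seg p x) : x ∉ seg p (g^[b] z) := by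
  intro hxb
  have hzi := hgh.iterate_notMem hg hz hP hPP hzP
  have hbCR := (mapsTo_chainRecurrentSet hg).iterate b hz
  have himage : ∀ {u v : X} (i : ℕ) {Q : Set X}, IsPreconnected Q → u ∈ Q → v ∈ g^[i] '' Q →
      seg (g^[i] u) v ⊆ g^[i] '' Q := fun i _ hQ hu hv ↦
    seg_subset (hQ.image _ (hg.iterate i).continuousOn) (mem_image_of_mem _ hu) hv
  have hQ := isPreconnected_seg x (g^[b] z)
  obtain ⟨j, hnj, hj⟩ := hgh.exists_mem_image_iterate hg hbCR hP hPP (hzi b) hQ (left_mem_seg _ _)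
    hxn (right_mem_seg _ _) le_rfl rfl
  have hjP : g^[j] x ∈ P := by
    rw [← Nat.sub_add_cancel hnj, iterate_add_apply]
    exact hPP.iterate _ hxn
  have hj₁ : 1 ≤ j := Nat.one_le_iff_ne_zero.2 fun h0 ↦ hx (by rw [h0] at hjP; exact hjP)
  have ha : g^[a] z ∈ seg (g^[j] x) x := mem_seg_of_notMem hP hp hjP (hzi a) hax
  have hb : x ∈ seg (g^[j] x) (g^[b] z) := mem_seg_of_notMem hP hp hjP hx hxb
  have hdisj : Disjoint (seg x (g^[b] z)) (seg (g^[j] x) (g^[a] z)) := by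
    refine disjoint_left.2 fun w hw hw' ↦ ?_
    obtain rfl := eq_of_mem_seg_of_mem_seg hb (mem_seg_trans hw' ha) hw
    rw [seg_antisymm hw' ha, ← iterate_add_apply] at hxn
    exact hzi _ hxn
  have hQ' := isPreconnected_seg (g^[j] x) (g^[a] z)
  obtain ⟨l, -, hl⟩ := hgh.exists_mem_image_iterate hg hbCR hP hPP (hzi b) (n := 0) hQ'
    (left_mem_seg _ _) hjP (right_mem_seg _ _) (Nat.zero_le b)
    (k := a) (by rw [← iterate_add_apply, ← iterate_add_apply, add_comm])
  have hcover := himage j hQ (left_mem_seg _ _) hj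
  refine hgh.not_subset_image hg (isClosed_seg _ _) (isClosed_seg _ _) hdisj
    ⟨x, left_mem_seg _ _⟩ hj₁ ((seg_subset_seg hb (right_mem_seg _ _)).trans hcover)
    ((seg_subset_seg (left_mem_seg _ _) (mem_seg_trans ha hb)).trans hcover) (l := l) ?_
  exact (seg_subset_seg (mem_seg_of_notMem hP hp (hPP.iterate l hjP) hx hxb)
    (right_mem_seg _ _)).trans (himage l hQ' (left_mem_seg _ _) hl)

/-- Joining to `P` all points between `P` and the orbit of `z` that fall into `P` gives a connected
set that still avoids the orbit, so two early points of the orbit are not separated by it. -/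
theorem NoHorseshoe.exists_segAvoids_iterate (hgh : NoHorseshoe g) (hg : Continuous g)
    (hz : z ∈ chainRecurrentSet g) (hP : IsPreconnected P) (hPn : P.Nonempty)
    (hPP : MapsTo g P P) (hzP : z ∉ P) :
    ∃ a b, a < b ∧ b ≤ branchBound X ∧ SegAvoids g P (g^[a] z) (g^[b] z) := by
  obtain ⟨p, hp⟩ := hPn
  have hzi := hgh.iterate_notMem hg hz hP hPP hzP
  let T : Set X := {x | (∃ n, g^[n] x ∈ P) ∧ ∃ b, x ∈ seg p (g^[b] z)}
  have hPT : IsPreconnected (P ∪ ⋃ x ∈ T, seg p x) := by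
    refine isPreconnected_of_forall p ?_
    rintro y (hy | hy)
    · exact ⟨P, subset_union_left, hp, hy, hP⟩
    · obtain ⟨x, hx, hyx⟩ := mem_iUnion₂.1 hy
      exact ⟨seg p x, (subset_biUnion_of_mem hx).trans subset_union_right, left_mem_seg p x, hyx,
        isPreconnected_seg p x⟩
  have hzPT : ∀ i, g^[i] z ∉ P ∪ ⋃ x ∈ T, seg p x := by
    rintro i (h | h)
    · exact hzi i h
    · obtain ⟨x, ⟨⟨n, hn⟩, b, hb⟩, hix⟩ := mem_iUnion₂.1 h
      have hxP : x ∉ P := fun h ↦ hzi i (seg_subset hP hp h hix)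
      exact hgh.notMem_seg_iterate hg hz hP hPP hzP hxP hn hp hix hb
  obtain ⟨i, j, hij, hj, hdisj⟩ := exists_disjoint_seg hPT (fun i ↦ g^[i] z) hzPT
  refine ⟨i, j, hij, hj, fun x hx n hn ↦ disjoint_left.1 hdisj hx (.inr ?_)⟩
  rcases seg_subset_union _ p _ hx with h | h
  · exact mem_biUnion ⟨⟨n, hn⟩, i, seg_comm p _ ▸ h⟩ (right_mem_seg p x)
  · exact mem_biUnion ⟨⟨n, hn⟩, j, h⟩ (right_mem_seg p x)

/-- The image of the segment orbit of `g^[a] z` under `g^[d * a - a]` is invariant under `g^[d]` and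
contains `g^[d * a] z`, hence it contains `z`. -/
theorem NoHorseshoe.segAvoids_of_iterate (hgh : NoHorseshoe g) (hg : Continuous g)
    (hz : z ∈ chainRecurrentSet g) {a d : ℕ} (hd : 1 ≤ d)
    (h : SegAvoids g P (g^[a] z) (g^[d] (g^[a] z))) : SegAvoids g P z (g^[d] z) := by
  set r := d * a - a
  have hra : r + a = d * a := Nat.sub_add_cancel (Nat.le_mul_of_pos_left a hd)
  have hcomm : ∀ w, g^[d] (g^[r] w) = g^[r] (g^[d] w) := fun w ↦ by
    rw [← iterate_add_apply, ← iterate_add_apply, add_comm]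
  set C := g^[r] '' segOrbit g^[d] (g^[a] z)
  have hC : IsPreconnected C :=
    (isPreconnected_segOrbit (hg.iterate d) _).image _ (hg.iterate r).continuousOn
  have hCC : MapsTo g^[d] C C := by
    rintro _ ⟨w, hw, rfl⟩
    exact ⟨_, mapsTo_segOrbit _ _ hw, (hcomm w).symm⟩
  have hzC : z ∈ C := by
    refine (hgh.iterate hd).mem_of_iterate_mem (hg.iterate d)
      (mem_chainRecurrentSet_iterate hg hz) hC hCC a ⟨_, iterate_mem_segOrbit _ _ 0, ?_⟩
    rw [iterate_zero_apply, ← iterate_add_apply, hra, iterate_mul]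
  intro w hw n
  obtain ⟨v, hv, rfl⟩ := seg_subset hC hzC (hCC hzC) hw
  rw [← iterate_add_apply]
  exact h.iterate_notMem_of_mem_segOrbit hv _

theorem NoHorseshoe.exists_segAvoids (hgh : NoHorseshoe g) (hg : Continuous g)
    (hz : z ∈ chainRecurrentSet g) (hP : IsPreconnected P) (hPn : P.Nonempty)
    (hPP : MapsTo g P P) (hzP : z ∉ P) :
    ∃ d, 1 ≤ d ∧ d ≤ branchBound X ∧ SegAvoids g P z (g^[d] z) := by
  obtain ⟨a, b, hab, hb, h⟩ := hgh.exists_segAvoids_iterate hg hz hP hPn hPP hzP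
  refine ⟨b - a, by omega, by omega, hgh.segAvoids_of_iterate hg hz (a := a) (by omega) ?_⟩
  rwa [← iterate_add_apply, Nat.sub_add_cancel hab.le]

/-- The uniform period `(branchBound X)!` serves all invariant connected sets at once. -/
theorem NoHorseshoe.segAvoids_factorial (hgh : NoHorseshoe g) (hg : Continuous g)
    (hz : z ∈ chainRecurrentSet g) (hP : IsPreconnected P) (hPn : P.Nonempty)
    (hPP : MapsTo g P P) (hzP : z ∉ P) (q : ℕ) :
    SegAvoids g P z (g^[(branchBound X).factorial * q] z) := by
  obtain ⟨d, hd₁, hdb, hd⟩ := hgh.exists_segAvoids hg hz hP hPn hPP hzP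
  obtain ⟨e, he⟩ := Nat.dvd_factorial hd₁ hdb
  refine fun w hw ↦ hd.iterate_notMem_of_mem_segOrbit (seg_subset
    (isPreconnected_segOrbit (hg.iterate _) z) (iterate_mem_segOrbit _ z 0) ?_ hw)
  rw [he, mul_assoc, iterate_mul]
  exact iterate_mem_segOrbit _ z _

end Factors

section AttractingSets

theorem iterate_mem_connectedComponentIn {X : Type*} [TopologicalSpace X] {f : X → X}
    (hf : Continuous f) {W : Set X} (hW : MapsTo f W W) {x y : X}
    (h : y ∈ connectedComponentIn W x) (n : ℕ) :
    f^[n] y ∈ connectedComponentIn W (f^[n] x) := by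
  have hx : x ∈ W := connectedComponentIn_nonempty_iff.1 ⟨y, h⟩
  refine (isPreconnected_connectedComponentIn.image f^[n]
    (hf.iterate n).continuousOn).subset_connectedComponentIn
    (mem_image_of_mem _ (mem_connectedComponentIn hx)) ?_ (mem_image_of_mem _ h)
  exact ((hW.iterate n).mono_left (connectedComponentIn_subset W x)).image_subset

theorem exists_card_bound_connectedComponentIn {X : Type*} [TopologicalSpace X]
    [LocallyConnectedSpace X] {K W : Set X} (hK : IsCompact K) (hW : IsOpen W) (hKW : K ⊆ W) :
    ∃ N, ∀ {ι : Type} (I : Finset ι) (p : ι → X), (∀ i ∈ I, p i ∈ K) → N < I.card →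
      ∃ i ∈ I, ∃ j ∈ I, i ≠ j ∧ p j ∈ connectedComponentIn W (p i) := by
  classical
  obtain ⟨T, -, hT⟩ := hK.elim_nhds_subcover (connectedComponentIn W) fun x hx ↦
    hW.connectedComponentIn.mem_nhds (mem_connectedComponentIn (hKW hx))
  refine ⟨T.card, fun {ι} I p hp hI ↦ ?_⟩
  have hcenter : ∀ i : I, ∃ y ∈ T, p i ∈ connectedComponentIn W y := fun i ↦ by
    simpa only [mem_iUnion, exists_prop] using hT (hp i i.2)
  choose center hcenterT hcenter using hcenter
  obtain ⟨i, -, j, -, hij, heq⟩ := Finset.exists_ne_map_eq_of_card_lt_of_maps_to (s := I.attach)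
    (by rwa [Finset.card_attach]) (fun i _ ↦ hcenterT i)
  refine ⟨i, i.2, j, j.2, Subtype.coe_injective.ne hij, ?_⟩
  rw [← connectedComponentIn_eq (hcenter i), heq]
  exact hcenter j

variable {X : Type*} [MetricSpace X] {f : X → X} {c z : X} {W : Set X}

theorem epsChain_iff {ε : ℝ} {y : X} : EpsChain f ε c y ↔
    dist (f c) y < ε ∨ ∃ x, EpsChain f ε c x ∧ dist (f x) y < ε := by
  constructor
  · rintro ⟨n, hn, u, h0, rfl, hu⟩
    obtain ⟨k, rfl⟩ := Nat.exists_eq_add_of_le' hn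
    rcases Nat.eq_zero_or_pos k with rfl | hk
    · exact .inl (h0 ▸ hu 0 Nat.one_pos)
    · exact .inr ⟨u k, ⟨k, hk, u, h0, rfl, fun i hi ↦ hu i (by omega)⟩, hu k (by omega)⟩
  · rintro (h | ⟨x, ⟨n, hn, u, h0, rfl, hu⟩, h⟩)
    · refine ⟨1, le_rfl, fun i ↦ if i = 0 then c else y, rfl, rfl, fun i hi ↦ ?_⟩
      obtain rfl : i = 0 := by omega
      simpa using h
    · refine ⟨n + 1, by omega, fun i ↦ if i ≤ n then u i else y, by simpa using h0, by simp,
        fun i hi ↦ ?_⟩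
      rcases (Nat.lt_succ_iff.1 hi).lt_or_eq with hin | rfl
      · simpa [hin.le, Nat.succ_le_of_lt hin] using hu i hin
      · simpa using h

/-- The set of endpoints of the `ε`-chains from `c` is attracting. -/
theorem exists_attracting_of_notMem_chainRecurrentSet (hf : Continuous f)
    (hc : c ∉ chainRecurrentSet f) :
    ∃ W : Set X, IsOpen W ∧ MapsTo f (closure W) W ∧ c ∉ W ∧ f c ∈ W := by
  simp only [chainRecurrentSet, mem_ofPred_eq, not_forall] at hc
  obtain ⟨ε, hε, hc⟩ := hc
  refine ⟨{y | EpsChain f ε c y}, ?_, fun y hy ↦ ?_, hc, epsChain_iff.2 (.inl (by simpa using hε))⟩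
  · have hballs : {y | EpsChain f ε c y} =
        Metric.ball (f c) ε ∪ ⋃ x ∈ {x | EpsChain f ε c x}, Metric.ball (f x) ε := by
      ext y
      simp only [mem_ofPred_eq, mem_union, Metric.mem_ball, mem_iUnion, exists_prop, dist_comm y]
      exact epsChain_iff
    rw [hballs]
    exact Metric.isOpen_ball.union (isOpen_biUnion fun _ _ ↦ Metric.isOpen_ball)
  · obtain ⟨δ, hδ, hfδ⟩ := Metric.continuous_iff.1 hf y ε hε
    obtain ⟨x, hx, hxy⟩ := Metric.mem_closure_iff.1 hy δ hδ
    exact epsChain_iff.2 (.inr ⟨x, hx, hfδ x (by rwa [dist_comm])⟩)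

theorem mem_image_closure_of_iterate_mem [CompactSpace X] (hf : Continuous f) (hW : IsOpen W)
    (hWW : MapsTo f (closure W) W) (hz : z ∈ chainRecurrentSet f) {n : ℕ} (hn : f^[n] z ∈ W) :
    z ∈ f '' closure W := by
  have hWi : W ⊆ interior (closure W) := hW.subset_interior_closure
  have hWn : MapsTo f^[n + 1] (closure W) W := fun x hx ↦ by
    rw [iterate_succ_apply]
    exact (hWW.mono_left subset_closure).iterate n (hWW hx)
  have hzn : f^[n + 1] z ∈ W := by
    rw [iterate_succ_apply']
    exact hWW (subset_closure hn)
  obtain ⟨x, hx, hxz⟩ := mem_image_of_mapsTo_interior (hf.iterate (n + 1)) isClosed_closure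
    (fun x hx ↦ hWi (hWn hx)) (mem_chainRecurrentSet_iterate hf hz) (hWi hzn)
  exact ⟨f^[n] x, ((hWW.mono_right subset_closure).iterate n) hx, by
    rw [← hxz, iterate_succ_apply']⟩

/-- Two points of the orbit of `f c` lie in the same component of `W`, and that component is then
carried into itself by some iterate of `f`. -/
theorem exists_mapsTo_component [CompactSpace X] [LocallyConnectedSpace X] (hf : Continuous f)
    (hW : IsOpen W) (hWW : MapsTo f (closure W) W) (hfc : f c ∈ W) :
    ∃ m ≥ 1, ∃ n, ∃ P ⊆ W, IsPreconnected P ∧ MapsTo f^[m] P P ∧ f^[m * n] c ∈ P := by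
  have hW' : MapsTo f W W := hWW.mono_left subset_closure
  have hcW : ∀ n, 1 ≤ n → f^[n] c ∈ W := fun n hn ↦ by
    obtain ⟨k, rfl⟩ := Nat.exists_eq_add_of_le' hn
    rw [iterate_succ_apply]
    exact hW'.iterate k hfc
  have hcK : ∀ n, f^[n + 2] c ∈ f '' closure W := fun n ↦
    ⟨f^[n + 1] c, subset_closure (hcW _ (Nat.le_add_left 1 n)), (iterate_succ_apply' _ _ _).symm⟩
  obtain ⟨N, hN⟩ := exists_card_bound_connectedComponentIn (isClosed_closure.isCompact.image hf) hW
    hWW.image_subset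
  obtain ⟨i, -, j, -, hne, hij⟩ := hN (Finset.range (N + 1)) (fun n ↦ f^[n + 2] c)
    (fun n _ ↦ hcK n) (by rw [Finset.card_range]; exact Nat.lt_succ_self N)
  wlog hlt : i < j generalizing i j
  · refine this j i hne.symm ?_ (by omega)
    rw [← connectedComponentIn_eq hij]
    exact mem_connectedComponentIn (hcW _ (by omega))
  obtain ⟨m, rfl⟩ := Nat.exists_eq_add_of_lt hlt
  have hle : i + 2 ≤ (m + 1) * (i + 2) := Nat.le_mul_of_pos_left _ m.succ_pos
  have hreturn : f^[m + 1] (f^[(m + 1) * (i + 2)] c) ∈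
      connectedComponentIn W (f^[(m + 1) * (i + 2)] c) := by
    have h := iterate_mem_connectedComponentIn hf hW' hij ((m + 1) * (i + 2) - (i + 2))
    rw [← iterate_add_apply, ← iterate_add_apply, Nat.sub_add_cancel hle] at h
    rwa [← iterate_add_apply,
      show m + 1 + (m + 1) * (i + 2) = (m + 1) * (i + 2) - (i + 2) + (i + m + 1 + 2) by omega]
  refine ⟨m + 1, Nat.le_add_left 1 m, i + 2, _, connectedComponentIn_subset _ _,
    isPreconnected_connectedComponentIn, fun x hx ↦ ?_,
    mem_connectedComponentIn (hcW _ (by omega))⟩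
  rw [connectedComponentIn_eq hreturn]
  exact iterate_mem_connectedComponentIn hf hW' hx (m + 1)

end AttractingSets

section SeparatedPatterns

variable {X : Type*} [MetricSpace X] {f : X → X} {A B P W : Set X} {c z : X} {I J : Finset ℕ}

/-- Every pattern of visits to `A` and `B` at the times in `I` is realized by a chain recurrent
point: `I` is an independence set of the pair `(A, B)` for the restriction of `f` to the chain
recurrent set. -/
def IsIndependenceSet (f : X → X) (A B : Set X) (I : Finset ℕ) : Prop :=
  ∀ s : ℕ → Bool, ∃ z ∈ chainRecurrentSet f, ∀ t ∈ I, f^[t] z ∈ if s t then A else B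

theorem IsIndependenceSet.mono (h : IsIndependenceSet f A B I) (hJ : J ⊆ I) :
    IsIndependenceSet f A B J :=
  fun s ↦ (h s).imp fun _ hz ↦ ⟨hz.1, fun t ht ↦ hz.2 t (hJ ht)⟩

theorem IsIndependenceSet.exists_visit_once (h : IsIndependenceSet f A B I) :
    ∃ z : ℕ → X, (∀ t, z t ∈ chainRecurrentSet f) ∧ (∀ t ∈ I, f^[t] (z t) ∈ A) ∧
      ∀ t, ∀ u ∈ I, u ≠ t → f^[u] (z t) ∈ B := by
  choose z hz hzI using fun t : ℕ ↦ h fun u ↦ decide (u = t)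
  exact ⟨z, hz, fun t ht ↦ by simpa using hzI t t ht,
    fun t u hu hne ↦ by simpa [hne] using hzI t u hu⟩

variable [CompactSpace X] [FinitelyBranched X]

theorem NoHorseshoe.notMem_seg_of_modEq (hfh : NoHorseshoe f) (hf : Continuous f) {m : ℕ}
    (hm : 1 ≤ m) (hP : IsPreconnected P) (hPP : MapsTo f^[m] P P) (hz : z ∈ chainRecurrentSet f)
    {n t t' : ℕ} (hn : f^[m * n] c ∈ P) (htP : f^[t] z ∉ P)
    (htt' : t ≡ t' [MOD m * (branchBound X).factorial]) : c ∉ seg (f^[t] z) (f^[t'] z) := by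
  wlog hle : t ≤ t' generalizing t t'
  · obtain ⟨q, hq⟩ := (Nat.modEq_iff_dvd' (le_of_not_ge hle)).1 htt'.symm
    rw [seg_comm]
    refine this (fun h ↦ htP ?_) htt'.symm (le_of_not_ge hle)
    rw [← Nat.sub_add_cancel (le_of_not_ge hle), hq, mul_assoc, iterate_add_apply, iterate_mul]
    exact hPP.iterate _ h
  obtain ⟨q, hq⟩ := (Nat.modEq_iff_dvd' hle).1 htt'
  rw [← Nat.sub_add_cancel hle, hq, mul_assoc, iterate_add_apply, iterate_mul]
  exact fun hc ↦ (hfh.iterate hm).segAvoids_factorial (hf.iterate m)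
    (mem_chainRecurrentSet_iterate hf ((mapsTo_chainRecurrentSet hf).iterate t hz)) hP ⟨_, hn⟩ hPP
    htP q c hc n (iterate_mul f m n ▸ hn)

theorem IsIndependenceSet.card_le_of_periodic (hI : IsIndependenceSet f A B I)
    (hfh : NoHorseshoe f) (hf : Continuous f) (hc : ∀ x ∈ A, ∀ y ∈ B, c ∈ seg x y) (hcA : c ∉ A)
    {m : ℕ} (hm : 1 ≤ m) (hcm : f^[m] c = c) : I.card ≤ m * (branchBound X).factorial := by
  by_contra! hcard
  obtain ⟨t, ht, t', ht', hne, hmod⟩ := Finset.exists_ne_map_eq_of_card_lt_of_maps_to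
    (s := I) (t := Finset.range (m * (branchBound X).factorial)) (by rwa [Finset.card_range])
    fun t _ ↦ Finset.mem_coe.2 (Finset.mem_range.2 (Nat.mod_lt t (by positivity)))
  obtain ⟨z, hz, hzA, hzB⟩ := hI.exists_visit_once
  refine hfh.notMem_seg_of_modEq hf hm (P := {c}) isPreconnected_singleton ?_ (hz t) (n := 0)
    rfl (fun h ↦ hcA (h ▸ hzA t ht)) hmod (hc _ (hzA t ht) _ (hzB t t' ht' hne.symm))
  rintro _ rfl
  exact hcm

theorem NoHorseshoe.exists_modulus_of_attracting (hfh : NoHorseshoe f) (hf : Continuous f)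
    (hW : IsOpen W) (hWW : MapsTo f (closure W) W) (hfc : f c ∈ W) :
    ∃ N ≥ 1, ∀ z ∈ chainRecurrentSet f, ∀ t t', t ≡ t' [MOD N] →
      c ∈ seg (f^[t] z) (f^[t'] z) → z ∈ f '' closure W := by
  obtain ⟨m, hm, n, P, hPW, hP, hPP, hcP⟩ := exists_mapsTo_component hf hW hWW hfc
  refine ⟨m * (branchBound X).factorial, Nat.mul_pos hm (Nat.factorial_pos _),
    fun z hz t t' htt' hct ↦ ?_⟩
  by_contra hzW
  exact hfh.notMem_seg_of_modEq hf hm hP hPP hz hcP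
    (fun h ↦ hzW (mem_image_closure_of_iterate_mem hf hW hWW hz (hPW h))) htt' hct

/-- Pigeonhole twice: first among times that agree modulo the modulus of
`NoHorseshoe.exists_modulus_of_attracting`, so that the realizing points are trapped in an
attracting set without `c`, then among its components. -/
theorem NoHorseshoe.exists_card_bound_of_notMem_chainRecurrentSet (hfh : NoHorseshoe f)
    (hf : Continuous f) (hc : ∀ x ∈ A, ∀ y ∈ B, c ∈ seg x y) (hcf : c ∉ chainRecurrentSet f) :
    ∃ D, ∀ I, IsIndependenceSet f A B I → I.card ≤ D := by
  obtain ⟨W, hW, hWW, hcW, hfc⟩ := exists_attracting_of_notMem_chainRecurrentSet hf hcf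
  have hW' : MapsTo f W W := hWW.mono_left subset_closure
  obtain ⟨N, hN, htrap⟩ := hfh.exists_modulus_of_attracting hf hW hWW hfc
  obtain ⟨k, hk⟩ := exists_card_bound_connectedComponentIn (isClosed_closure.isCompact.image hf) hW
    hWW.image_subset
  refine ⟨N * (k + 1), fun I hI ↦ ?_⟩
  by_contra! hcard
  obtain ⟨r, -, hr⟩ := Finset.exists_lt_card_fiber_of_mul_lt_card_of_maps_to
    (s := I) (t := Finset.range N) (f := (· % N)) (n := k + 1)
    (fun t _ ↦ Finset.mem_range.2 (Nat.mod_lt t hN)) (by rwa [Finset.card_range])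
  set J := {t ∈ I | t % N = r}
  have hmod : ∀ t ∈ J, ∀ u ∈ J, t ≡ u [MOD N] := fun t ht u hu ↦
    (Finset.mem_filter.1 ht).2.trans (Finset.mem_filter.1 hu).2.symm
  obtain ⟨z, hz, hzA, hzB⟩ := (hI.mono (Finset.filter_subset _ _) :
    IsIndependenceSet f A B J).exists_visit_once
  have hzW : ∀ t ∈ J, z t ∈ f '' closure W := fun t ht ↦ by
    obtain ⟨u, hu, hut⟩ := Finset.exists_mem_ne (by omega : 1 < J.card) t
    exact htrap _ (hz t) t u (hmod t ht u hu) (hc _ (hzA t ht) _ (hzB t u hu hut))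
  obtain ⟨t, ht, t', -, hne, hcomp⟩ := hk J z hzW (by omega)
  have htW : f^[t] (z t) ∈ W := hW'.iterate t (hWW.image_subset (hzW t ht))
  exact hcW (connectedComponentIn_subset _ _ (seg_subset isPreconnected_connectedComponentIn
    (mem_connectedComponentIn htW) (iterate_mem_connectedComponentIn hf hW' hcomp t)
    (hc _ (hzA t ht) _ (hzB t' t ht hne))))

end SeparatedPatterns

section OutwardPoints

variable {X : Type*} [TopologicalSpace X]

/-- The points `x` of `S` such that `h` pushes every point of the segment from `c` to `x` away from
`c`. -/
def outwardSet (h : X → X) (c : X) (S : Set X) : Set X :=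
  {x ∈ S | ∀ y ∈ seg c x, y ∈ seg c (h y)}

variable [Dendritic X] {h : X → X} {F S : Set X} {c p x y : X}

theorem isClosed_setOf_mem_seg (c x : X) : IsClosed {w | x ∈ seg c w} :=
  ⟨isOpen_setOf_notMem_seg c x⟩

theorem exists_isOpen_forall_mem_seg (hy : y ∈ seg c x) (hne : y ≠ x) :
    ∃ O, IsOpen O ∧ x ∈ O ∧ ∀ w ∈ O, y ∈ seg c w :=
  ⟨{w | y ∉ seg x w}, isOpen_setOf_notMem_seg x y, fun h ↦ hne (by rwa [seg_self] at h),
    fun w hw ↦ (seg_subset_union c w x hy).resolve_right (seg_comm x w ▸ hw)⟩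

theorem isPreconnected_seg_sdiff_left (p y : X) : IsPreconnected (seg p y \ {p}) := by
  refine isPreconnected_of_seg_subset fun u hu v hv w hw ↦ ⟨seg_subset_seg hu.1 hv.1 hw, ?_⟩
  rintro rfl
  rcases mem_seg_total hu.1 hv.1 with h | h
  · exact hu.2 (eq_of_mem_seg_of_mem_seg h (left_mem_seg _ _) hw).symm
  · exact hv.2 (eq_of_mem_seg_of_mem_seg h (left_mem_seg _ _) (seg_comm u v ▸ hw)).symm

theorem mem_seg_of_mem_seg_of_ne (hp : p ∈ seg c x) (hy : y ∈ seg p x) (hne : y ≠ p) :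
    p ∈ seg c y :=
  (mem_seg_total hp (seg_subset_seg hp (right_mem_seg _ _) hy)).resolve_right
    fun h ↦ hne (eq_of_mem_seg_of_mem_seg hp h hy)

theorem isClosed_outwardSet (hh : Continuous h) (c : X) (hS : IsClosed S) :
    IsClosed (outwardSet h c S) := by
  refine closure_subset_iff_isClosed.1 fun x hx ↦
    ⟨closure_minimal (fun w hw ↦ hw.1) hS hx, fun y hy ↦ ?_⟩
  have hlt : ∀ y ∈ seg c x, y ≠ x → y ∈ seg c (h y) := fun y hy hne ↦ by
    obtain ⟨O, hO, hxO, hOy⟩ := exists_isOpen_forall_mem_seg hy hne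
    obtain ⟨w, hwO, hw⟩ := mem_closure_iff.1 hx O hO hxO
    exact hw.2 y (hOy w hwO)
  by_cases hne : y = x
  swap
  · exact hlt y hy hne
  subst hne
  by_contra hcon
  have hcy : y ≠ c := fun h ↦ hcon (h ▸ left_mem_seg _ _)
  obtain ⟨v, hv, hvy, hvh⟩ :=
    exists_mem_seg_ne_mem_open hcy (isClosed_seg c (h y)).isOpen_compl hcon
  obtain ⟨O, hO, hyO, hOv⟩ := exists_isOpen_forall_mem_seg (seg_comm y c ▸ hv) hvy
  obtain ⟨w, hw, hwy, hwv, hwO⟩ := exists_mem_seg_ne_mem_open hcy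
    (((isOpen_setOf_notMem_seg c v).preimage hh).inter hO) ⟨hvh, hyO⟩
  exact hwv (mem_seg_trans (hOv w hwO) (hlt w (seg_comm y c ▸ hw) hwy))

/-- Zorn's lemma for the order `x ≤ y ↔ x ∈ seg c y`. -/
theorem exists_forall_mem_seg_imp_eq [CompactSpace X] (c : X) (hS : IsClosed S)
    (hne : S.Nonempty) : ∃ p ∈ S, ∀ y ∈ S, p ∈ seg c y → y = p := by
  have hchain : ∀ C : Set S, IsChain (fun x y : S ↦ (x : X) ∈ seg c y) C →
      ∃ w : S, ∀ x ∈ C, (x : X) ∈ seg c w := fun C hC ↦ by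
    rcases C.eq_empty_or_nonempty with rfl | hCne
    · exact ⟨⟨_, hne.some_mem⟩, fun _ h ↦ h.elim⟩
    have := hCne.to_subtype
    have hcl : ∀ x : C, IsClosed {w ∈ S | (x : X) ∈ seg c w} := fun x ↦
      hS.inter (isClosed_setOf_mem_seg c x)
    have hdir : Directed (· ⊇ ·) fun x : C ↦ {w ∈ S | (x : X) ∈ seg c w} := fun x y ↦ by
      by_cases hxy : x = y
      · exact ⟨x, Subset.rfl, hxy ▸ Subset.rfl⟩
      rcases hC x.2 y.2 (Subtype.coe_injective.ne hxy) with h | h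
      · exact ⟨y, fun w hw ↦ ⟨hw.1, mem_seg_trans h hw.2⟩, Subset.rfl⟩
      · exact ⟨x, Subset.rfl, fun w hw ↦ ⟨hw.1, mem_seg_trans h hw.2⟩⟩
    obtain ⟨w, hw⟩ := IsCompact.nonempty_iInter_of_directed_nonempty_isCompact_isClosed _ hdir
      (fun x ↦ ⟨_, x.1.2, right_mem_seg _ _⟩) (fun x ↦ (hcl x).isCompact) hcl
    rw [mem_iInter] at hw
    exact ⟨⟨w, (hw (Classical.arbitrary C)).1⟩, fun x hx ↦ (hw ⟨x, hx⟩).2⟩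
  obtain ⟨p, hp⟩ := exists_maximal_of_chains_bounded hchain (fun {_ _ _} ↦ mem_seg_trans)
  exact ⟨p, p.2, fun y hy hpy ↦ seg_antisymm (hp ⟨y, hy⟩ hpy) hpy⟩

/-- If `h p ≠ p`, then `h` still pushes away from `c` just beyond `p`, towards `h p`. -/
theorem isFixedPt_of_maximal_outwardSet (hh : Continuous h) (hS : IsPreconnected S)
    (hSS : MapsTo h S S) (hp : p ∈ outwardSet h c S)
    (hmax : ∀ y ∈ outwardSet h c S, p ∈ seg c y → y = p) : IsFixedPt h p := by
  by_contra hne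
  have hcp : p ∈ seg c (h p) := hp.2 p (right_mem_seg _ _)
  obtain ⟨v, hv, hvp, hvh⟩ := exists_mem_seg_ne_mem_open (Ne.symm hne)
    (isOpen_compl_singleton (x := h p)) (Ne.symm hne)
  have hcv : v ∈ seg c (h p) := seg_subset_seg hcp (right_mem_seg _ _) hv
  have hpv : p ∈ seg c v := mem_seg_of_mem_seg_of_ne hcp hv hvp
  obtain ⟨O, hO, hhO, hOv⟩ := exists_isOpen_forall_mem_seg hcv hvh
  obtain ⟨O', hO'O, hO', hO'p, hpO'⟩ := exists_isOpen_isPreconnected_subset (hO.preimage hh) hhO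
  obtain ⟨y, hy, hyp, hyO'⟩ := exists_mem_seg_ne_mem_open hvp.symm hO' hpO'
  have hcy : y ∈ seg c v := seg_subset_seg hpv (right_mem_seg _ _) hy
  have hpy : p ∈ seg c y := mem_seg_of_mem_seg_of_ne hpv hy hyp
  refine hyp (hmax y ⟨seg_subset hS hp.1 (hSS hp.1) (mem_seg_trans hy hv), fun w hw ↦ ?_⟩ hpy)
  rw [seg_eq_union hpy] at hw
  rcases hw with hw | hw
  · exact hp.2 w hw
  · exact mem_seg_trans (seg_subset_seg hpv hcy hw) (hOv _ (hO'O (seg_subset hO'p hpO' hyO' hw)))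

end OutwardPoints

section InvariantPieces

variable {X : Type*} [TopologicalSpace X] [FinitelyBranched X] {h : X → X} {F : Set X} {c p : X}

/-- A short segment from `p` towards `c`, without `p`: near `p` the map fixes `p` and moves points
of this segment towards `p`. -/
theorem exists_mapsTo_germ (hh : Continuous h) (hF : IsPreconnected F) (hFF : MapsTo h F F)
    (hcF : c ∈ F) (hp : p ∈ outwardSet h c (closure F)) (hfix : h p = p) (hpF : p ∉ F) :
    ∃ P ⊆ F, P.Nonempty ∧ IsPreconnected P ∧ MapsTo h P P ∧ c ∉ P := by
  have hpc : p ≠ c := fun h ↦ hpF (h ▸ hcF)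
  have hcpF : ∀ y ∈ seg c p, y ≠ p → y ∈ F := fun y hy hne ↦ by
    have hpre : IsPreconnected (insert p F) :=
      hF.subset_closure (subset_insert _ _) (insert_subset hp.1 subset_closure)
    exact (seg_subset hpre (mem_insert_of_mem _ hcF) (mem_insert _ _) hy).resolve_left hne
  obtain ⟨v, hv, hvp, -, hgerm⟩ := exists_unbranched_germ hpc isOpen_univ (mem_univ p)
  obtain ⟨y, hyv, hyp, hyO, -⟩ := exists_unbranched_germ hvp.symm
    (((isOpen_setOf_notMem_seg p v).preimage hh).inter isOpen_compl_singleton)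
    ⟨fun h ↦ hvp (by rwa [hfix, seg_self] at h), hpc⟩
  have hPc : ∀ w ∈ seg p y \ {p}, w ∈ seg c p := fun w hw ↦
    seg_comm p c ▸ mem_seg_trans hw.1 (mem_seg_trans hyv hv)
  refine ⟨seg p y \ {p}, fun w hw ↦ hcpF w (hPc w hw) hw.2, ⟨y, right_mem_seg _ _, hyp⟩,
    isPreconnected_seg_sdiff_left _ _, fun w hw ↦ ?_, fun hc ↦ (hyO hc.1).2 rfl⟩
  have hwF : h w ∈ F := hFF (hcpF w (hPc w hw) hw.2)
  have hwv : h w ∈ seg p v := (hgerm (h w) fun hc ↦ hpF (seg_subset hF hwF hcF hc)).resolve_right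
    (hyO hw.1).1
  have hcw : h w ∈ seg c p := seg_comm p c ▸ mem_seg_trans hwv hv
  exact ⟨seg_subset_seg hw.1 (left_mem_seg _ _) (mem_seg_between (hp.2 w (hPc w hw)) hcw),
    fun he ↦ hpF (he ▸ hwF)⟩

theorem exists_mapsTo_piece [CompactSpace X] (hh : Continuous h) (hc : h c ≠ c)
    (hF : IsPreconnected F) (hFF : MapsTo h F F) (hcF : c ∈ F) :
    ∃ P ⊆ F, P.Nonempty ∧ IsPreconnected P ∧ MapsTo h P P ∧ c ∉ P := by
  have hcout : c ∈ outwardSet h c (closure F) := by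
    refine ⟨subset_closure hcF, fun y hy ↦ ?_⟩
    rw [seg_self, mem_singleton_iff] at hy
    exact hy ▸ left_mem_seg _ _
  obtain ⟨p, hp, hmax⟩ :=
    exists_forall_mem_seg_imp_eq c (isClosed_outwardSet hh c isClosed_closure) ⟨c, hcout⟩
  have hfix : h p = p := isFixedPt_of_maximal_outwardSet hh hF.closure (hFF.closure hh) hp hmax
  by_cases hpF : p ∈ F
  · refine ⟨{p}, singleton_subset_iff.2 hpF, singleton_nonempty p, isPreconnected_singleton, ?_,
      fun h ↦ hc (mem_singleton_iff.1 h ▸ hfix)⟩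
    rintro _ rfl
    exact hfix
  · exact exists_mapsTo_germ hh hF hFF hcF hp hfix hpF

end InvariantPieces

section PeriodicPieces

/-- A connected set around `c` that returns into itself after `p` steps and is disjoint from its
images at all times that are not multiples of `p`. -/
structure IsPeriodicPiece {X : Type*} [TopologicalSpace X] (f : X → X) (c : X) (p : ℕ)
    (J : Set X) : Prop where
  pos : 1 ≤ p
  isPreconnected : IsPreconnected J
  mem : c ∈ J
  mapsTo : MapsTo f^[p] J J
  disjoint_image : ∀ j, ¬p ∣ j → Disjoint (f^[j] '' J) J

theorem isPeriodicPiece_univ {X : Type*} [TopologicalSpace X] [PreconnectedSpace X] (f : X → X)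
    (c : X) : IsPeriodicPiece f c 1 univ :=
  ⟨le_rfl, isPreconnected_univ, mem_univ c, mapsTo_univ _ _, fun j hj ↦ (hj (one_dvd j)).elim⟩

theorem IsPeriodicPiece.mul {X : Type*} [TopologicalSpace X] {f : X → X} {c : X} {p d : ℕ}
    {J J' : Set X} (hJ : IsPeriodicPiece f c p J) (hJ' : IsPeriodicPiece f^[p] c d J')
    (hsub : J' ⊆ J) : IsPeriodicPiece f c (p * d) J' where
  pos := Nat.mul_pos hJ.pos hJ'.pos
  isPreconnected := hJ'.isPreconnected
  mem := hJ'.mem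
  mapsTo := iterate_mul f p d ▸ hJ'.mapsTo
  disjoint_image j hj := by
    by_cases hpj : p ∣ j
    · obtain ⟨k, rfl⟩ := hpj
      rw [iterate_mul]
      exact hJ'.disjoint_image k fun hdk ↦ hj (mul_dvd_mul_left p hdk)
    · exact (hJ.disjoint_image j hpj).mono (image_mono hsub) hsub

theorem segOrbit_subset {X : Type*} [TopologicalSpace X] {h : X → X} {J : Set X} {x : X}
    (hJ : IsPreconnected J) (hJJ : MapsTo h J J) (hx : x ∈ J) : segOrbit h x ⊆ J :=
  iUnion_subset fun m ↦ ((hJJ.iterate m).mono_left (seg_subset hJ hx (hJJ hx))).image_subset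

variable {X : Type*} [MetricSpace X] [CompactSpace X] [FinitelyBranched X] {f : X → X}
  {A B J : Set X} {c : X} {I : Finset ℕ}

/-- The period is the least `d` for which the segment from `c` to `f^[d] c` avoids an invariant
connected set without `c`. -/
theorem NoHorseshoe.exists_isPeriodicPiece_segOrbit (hfh : NoHorseshoe f) (hf : Continuous f)
    (hc : c ∈ chainRecurrentSet f) (hfc : f c ≠ c) :
    ∃ d, 2 ≤ d ∧ d ≤ branchBound X ∧ IsPeriodicPiece f c d (segOrbit f^[d] c) := by
  classical
  obtain ⟨P, hPsub, ⟨w, hw⟩, hP, hPP, hcP⟩ := exists_mapsTo_piece hf hfc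
    (isPreconnected_segOrbit hf c) (mapsTo_segOrbit f c) (iterate_mem_segOrbit f c 0)
  have hex := hfh.exists_segAvoids hf hc hP ⟨w, hw⟩ hPP hcP
  obtain ⟨hd₁, hdb, hd⟩ := Nat.find_spec hex
  have hmin := fun j ↦ Nat.find_min hex (m := j)
  set d := Nat.find hex
  have hne₁ : d ≠ 1 := fun h1 ↦ by
    obtain ⟨m, y, hy, rfl⟩ := mem_iUnion.1 (hPsub hw)
    exact hd y (by rwa [h1]) m hw
  set J := segOrbit f^[d] c
  have hJ : IsPreconnected J := isPreconnected_segOrbit (hf.iterate d) c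
  have hJJ : MapsTo f^[d] J J := mapsTo_segOrbit _ c
  have hcJ : c ∈ J := iterate_mem_segOrbit _ c 0
  have hlt : ∀ r, 0 < r → r < d → Disjoint (f^[r] '' J) J := fun r hr hrd ↦ by
    by_contra hmeet
    obtain ⟨u, hu, huJ⟩ := not_disjoint_iff.1 hmeet
    refine hmin r hrd ⟨hr, hrd.le.trans hdb, fun y hy n ↦ ?_⟩
    have hunion : IsPreconnected (f^[r] '' J ∪ J) :=
      IsPreconnected.union u hu huJ (hJ.image _ (hf.iterate r).continuousOn) hJ
    rcases seg_subset hunion (.inr hcJ) (.inl (mem_image_of_mem _ hcJ)) hy with ⟨v, hv, rfl⟩ | hyJ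
    · rw [← iterate_add_apply]
      exact hd.iterate_notMem_of_mem_segOrbit hv _
    · exact hd.iterate_notMem_of_mem_segOrbit hyJ n
  refine ⟨d, by omega, hdb, hd₁, hJ, hcJ, hJJ, fun j hj ↦ ?_⟩
  have hjd : 0 < j % d := Nat.pos_of_ne_zero (mt Nat.dvd_of_mod_eq_zero hj)
  refine (hlt (j % d) hjd (Nat.mod_lt j hd₁)).mono_left ?_
  rintro _ ⟨u, hu, rfl⟩
  refine ⟨(f^[d])^[j / d] u, hJJ.iterate _ hu, ?_⟩
  rw [← iterate_mul, ← iterate_add_apply, Nat.mod_add_div]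

theorem NoHorseshoe.exists_isPeriodicPiece_mul (hfh : NoHorseshoe f) (hf : Continuous f)
    (hc : c ∈ chainRecurrentSet f) {p : ℕ} (hfc : f^[p] c ≠ c) (hJ : IsPeriodicPiece f c p J) :
    ∃ d, 2 ≤ d ∧ d ≤ branchBound X ∧ ∃ J', IsPeriodicPiece f c (p * d) J' := by
  obtain ⟨d, hd, hdb, hJ'⟩ := (hfh.iterate hJ.pos).exists_isPeriodicPiece_segOrbit (hf.iterate p)
    (mem_chainRecurrentSet_iterate hf hc) hfc
  exact ⟨d, hd, hdb, _, hJ.mul hJ'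
    (segOrbit_subset hJ.isPreconnected (hJ.mapsTo.iterate d) hJ.mem)⟩

/-- The last term of a sequence of periods, each dividing the next, modulo which all times of `I`
agree. -/
theorem NoHorseshoe.exists_isPeriodicPiece_splitting (hfh : NoHorseshoe f) (hf : Continuous f)
    (hc : c ∈ chainRecurrentSet f) (hfc : ∀ n, 1 ≤ n → f^[n] c ≠ c) (hI : 1 < I.card) :
    ∃ p d J, d ≤ branchBound X ∧ IsPeriodicPiece f c (p * d) J ∧
      (∀ t ∈ I, ∀ u ∈ I, t ≡ u [MOD p]) ∧ ∃ t ∈ I, ∃ u ∈ I, ¬t ≡ u [MOD p * d] := by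
  by_contra! hcon
  have hlarge : ∀ n, ∃ p > n, (∃ J, IsPeriodicPiece f c p J) ∧ ∀ t ∈ I, ∀ u ∈ I, t ≡ u [MOD p] := by
    intro n
    induction n with
    | zero => exact ⟨1, one_pos, ⟨_, isPeriodicPiece_univ f c⟩, fun _ _ _ _ ↦ Nat.modEq_one⟩
    | succ n ih =>
      obtain ⟨p, hnp, ⟨J, hJ⟩, hmod⟩ := ih
      obtain ⟨d, hd, hdb, J', hJ'⟩ := hfh.exists_isPeriodicPiece_mul hf hc (hfc p hJ.pos) hJ
      exact ⟨p * d, by nlinarith, ⟨J', hJ'⟩, hcon p d J' hdb hJ' hmod⟩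
  obtain ⟨a, ha, b, hb, hab⟩ := Finset.one_lt_card.1 hI
  obtain ⟨p, hp, -, hmod⟩ := hlarge (a + b)
  exact hab ((hmod a ha b hb).eq_of_lt_of_lt (by omega) (by omega))

/-- The set is `f^[t - u] J`, with a multiple of `q` added to `t - u`. -/
theorem NoHorseshoe.exists_isPreconnected_iterate_mem (hfh : NoHorseshoe f) (hf : Continuous f)
    {q t u : ℕ} (hJ : IsPeriodicPiece f c q J) (htu : ¬t ≡ u [MOD q]) :
    ∃ K, IsPreconnected K ∧ c ∉ K ∧ ∀ z ∈ chainRecurrentSet f, f^[u] z ∈ J → f^[t] z ∈ K := by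
  have hle : u ≤ q * u := Nat.le_mul_of_pos_left u hJ.pos
  obtain ⟨r, hr⟩ : ∃ r, r + u = q * u + t := ⟨t + (q * u - u), by omega⟩
  have hqr : ¬q ∣ r := by
    rintro ⟨k, rfl⟩
    have hk : (q * k + u) % q = (q * u + t) % q := congrArg (· % q) hr
    rw [Nat.mul_add_mod, Nat.mul_add_mod] at hk
    exact htu hk.symm
  have hK : IsPreconnected (f^[r] '' J) := hJ.isPreconnected.image _ (hf.iterate r).continuousOn
  refine ⟨_, hK, fun h ↦ disjoint_left.1 (hJ.disjoint_image r hqr) h hJ.mem, fun z hz hzJ ↦ ?_⟩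
  have hKK : MapsTo f^[q] (f^[r] '' J) (f^[r] '' J) := by
    rintro _ ⟨w, hw, rfl⟩
    refine ⟨_, hJ.mapsTo hw, ?_⟩
    rw [← iterate_add_apply, ← iterate_add_apply, add_comm]
  refine (hfh.iterate hJ.pos).mem_of_iterate_mem (hf.iterate q) (mem_chainRecurrentSet_iterate hf
    ((mapsTo_chainRecurrentSet hf).iterate t hz)) hK hKK u ⟨_, hzJ, ?_⟩
  rw [← iterate_mul, ← iterate_add_apply, ← iterate_add_apply, hr]

theorem exists_ne_modEq_mul {p k : ℕ} (hk : 0 < k) (hp : ∀ t ∈ I, ∀ u ∈ I, t ≡ u [MOD p])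
    (hI : k < I.card) : ∃ t ∈ I, ∃ u ∈ I, t ≠ u ∧ t ≡ u [MOD p * k] := by
  obtain ⟨t, ht, u, hu, hne, htu⟩ := Finset.exists_ne_map_eq_of_card_lt_of_maps_to (s := I)
    (t := Finset.range k) (f := fun t ↦ t / p % k) (by rwa [Finset.card_range])
    fun t _ ↦ Finset.mem_coe.2 (Finset.mem_range.2 (Nat.mod_lt _ hk))
  refine ⟨t, ht, u, hu, hne, ?_⟩
  rw [Nat.ModEq, Nat.mod_mul, Nat.mod_mul, hp t ht u hu, htu]

theorem IsIndependenceSet.card_le_of_forall_iterate_ne (hI : IsIndependenceSet f A B I)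
    (hfh : NoHorseshoe f) (hf : Continuous f) (hAB : ∀ x ∈ A, ∀ y ∈ B, c ∈ seg x y)
    (hc : c ∈ chainRecurrentSet f) (hfc : ∀ n, 1 ≤ n → f^[n] c ≠ c) :
    I.card ≤ branchBound X * (branchBound X).factorial + 1 := by
  by_contra! hcard
  obtain ⟨p, d, J, hdb, hJ, hmod, a, ha, b, hb, hab⟩ :=
    hfh.exists_isPeriodicPiece_splitting hf hc hfc (I := I) (by omega)
  have hle := Nat.mul_le_mul_right (branchBound X).factorial hdb
  obtain ⟨t, ht, u, hu, hne, htu⟩ := exists_ne_modEq_mul (k := d * (branchBound X).factorial)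
    (Nat.mul_pos (Nat.pos_of_mul_pos_left hJ.pos) (Nat.factorial_pos _)) hmod (by omega)
  rw [← mul_assoc] at htu
  obtain ⟨v, hv, hvt⟩ : ∃ v ∈ I, ¬v ≡ t [MOD p * d] := by
    by_contra! hcon
    exact hab ((hcon a ha).trans (hcon b hb).symm)
  have hvt' : v ≠ t := by rintro rfl; exact hvt (Nat.ModEq.refl _)
  have hvu : v ≠ u := fun h ↦ hvt (h ▸ (htu.of_mul_right _).symm)
  obtain ⟨K, hK, hcK, hJK⟩ := hfh.exists_isPreconnected_iterate_mem hf hJ hvt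
  obtain ⟨σ, hσ⟩ : ∃ σ : Bool, Disjoint K (if σ then A else B) := by
    by_contra! hcon
    obtain ⟨x, hx, hxA⟩ := not_disjoint_iff.1 (hcon true)
    obtain ⟨y, hy, hyB⟩ := not_disjoint_iff.1 (hcon false)
    exact hcK (seg_subset hK hx hy (hAB x hxA y hyB))
  obtain ⟨z, hz, hzI⟩ := hI fun s ↦ if s = v then σ else decide (s = t)
  have hzv := hzI v hv
  have hzt := hzI t ht
  have hzu := hzI u hu
  simp only [if_true, if_neg hvt'.symm, if_neg hvu.symm, decide_true, hne.symm, decide_false,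
    Bool.false_eq_true, if_false] at hzv hzt hzu
  exact hfh.notMem_seg_of_modEq hf hJ.pos hJ.isPreconnected hJ.mapsTo hz (n := 0) hJ.mem
    (fun hztJ ↦ disjoint_left.1 hσ (hJK z hz hztJ) hzv) htu (hAB _ hzt _ hzu)

theorem NoHorseshoe.exists_card_bound (hfh : NoHorseshoe f) (hf : Continuous f)
    (hAB : ∀ x ∈ A, ∀ y ∈ B, c ∈ seg x y) (hcA : c ∉ A) :
    ∃ D, ∀ I, IsIndependenceSet f A B I → I.card ≤ D := by
  by_cases hc : c ∈ chainRecurrentSet f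
  · by_cases hfc : ∃ m, 1 ≤ m ∧ f^[m] c = c
    · obtain ⟨m, hm, hcm⟩ := hfc
      exact ⟨_, fun I hI ↦ hI.card_le_of_periodic hfh hf hAB hcA hm hcm⟩
    · push Not at hfc
      exact ⟨_, fun I hI ↦ hI.card_le_of_forall_iterate_ne hfh hf hAB hc hfc⟩
  · exact hfh.exists_card_bound_of_notMem_chainRecurrentSet hf hAB hc

end PeriodicPieces

section Shattering

variable {α ι : Type*} {V : ι → Bool → Set α} {S S' : Set α} {R J : Finset ι}

/-- The sets `V t true` and `V t false` shatter `J` on `S` if every choice of one of the two for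
each `t ∈ J` is realized by a point of `S`. A point may lie in neither of the two sets. -/
def Shatters (V : ι → Bool → Set α) (S : Set α) (J : Finset ι) : Prop :=
  ∀ s : ι → Bool, ∃ y ∈ S, ∀ t ∈ J, y ∈ V t (s t)

theorem Shatters.mono (h : Shatters V S J) (hS : S ⊆ S') : Shatters V S' J :=
  fun s ↦ (h s).imp fun _ hy ↦ ⟨hS hy.1, hy.2⟩

open Classical in
/-- The subsets of `R` shattered on `S`; their number is the measure of complexity which drives
the Sauer–Shelah induction. -/
noncomputable def shatteredSubsets (V : ι → Bool → Set α) (S : Set α) (R : Finset ι) :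
    Finset (Finset ι) :=
  {J ∈ R.powerset | Shatters V S J}

theorem mem_shatteredSubsets : J ∈ shatteredSubsets V S R ↔ J ⊆ R ∧ Shatters V S J := by
  simp only [shatteredSubsets, Finset.mem_filter, Finset.mem_powerset]

theorem shatteredSubsets_mono {R' : Finset ι} (hS : S ⊆ S') (hR : R ⊆ R') :
    shatteredSubsets V S R ⊆ shatteredSubsets V S' R' := fun _ hJ ↦ by
  rw [mem_shatteredSubsets] at hJ ⊢
  exact ⟨hJ.1.trans hR, hJ.2.mono hS⟩

theorem nonempty_shatteredSubsets (hS : S.Nonempty) : (shatteredSubsets V S R).Nonempty :=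
  ⟨∅, mem_shatteredSubsets.2 ⟨Finset.empty_subset R, fun _ ↦ ⟨hS.some, hS.some_mem, by simp⟩⟩⟩

theorem card_shatteredSubsets_add_le [DecidableEq ι] {r : ι} (hr : r ∉ R) :
    (shatteredSubsets V (S ∩ V r true) R).card + (shatteredSubsets V (S ∩ V r false) R).card ≤
      (shatteredSubsets V S (insert r R)).card := by
  set F := fun b ↦ shatteredSubsets V (S ∩ V r b) R
  have hF : ∀ {b J}, J ∈ F b → r ∉ J := fun hJ h ↦ hr ((mem_shatteredSubsets.1 hJ).1 h)
  have hinj : InjOn (insert r) (↑(F true ∩ F false) : Set (Finset ι)) := fun J hJ J' hJ' h ↦ by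
    rw [← Finset.erase_insert (hF (Finset.mem_inter.1 hJ).1), h,
      Finset.erase_insert (hF (Finset.mem_inter.1 hJ').1)]
  have hdisj : Disjoint (F true ∪ F false) ((F true ∩ F false).image (insert r)) := by
    refine Finset.disjoint_left.2 fun J hJ hJ' ↦ ?_
    obtain ⟨J', -, rfl⟩ := Finset.mem_image.1 hJ'
    exact (Finset.mem_union.1 hJ).elim (fun h ↦ hF h (Finset.mem_insert_self _ _))
      fun h ↦ hF h (Finset.mem_insert_self _ _)
  rw [← Finset.card_union_add_card_inter, ← Finset.card_image_of_injOn hinj,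
    ← Finset.card_union_of_disjoint hdisj]
  have hsub : ∀ b, F b ⊆ shatteredSubsets V S (insert r R) := fun _ ↦
    shatteredSubsets_mono inter_subset_left (Finset.subset_insert r R)
  refine Finset.card_le_card (Finset.union_subset (Finset.union_subset (hsub _) (hsub _)) ?_)
  refine Finset.image_subset_iff.2 fun J hJ ↦ ?_
  have hJF : ∀ b, J ∈ F b := by simpa [and_comm] using Finset.mem_inter.1 hJ
  refine mem_shatteredSubsets.2
    ⟨Finset.insert_subset_insert r (mem_shatteredSubsets.1 (hJF true)).1, fun s ↦ ?_⟩
  obtain ⟨y, hy, hyJ⟩ := (mem_shatteredSubsets.1 (hJF (s r))).2 s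
  exact ⟨y, hy.1, Finset.forall_mem_insert _ _ _ |>.2 ⟨hy.2, hyJ⟩⟩

theorem card_shatteredSubsets_le {D : ℕ} (hD : ∀ J ∈ shatteredSubsets V S R, J.card ≤ D) :
    (shatteredSubsets V S R).card ≤ (R.card + 1) ^ D := by
  classical
  have hsub : shatteredSubsets V S R ⊆ (Finset.range (D + 1)).biUnion R.powersetCard :=
    fun J hJ ↦ Finset.mem_biUnion.2 ⟨J.card, Finset.mem_range_succ_iff.2 (hD J hJ),
      Finset.mem_powersetCard.2 ⟨(mem_shatteredSubsets.1 hJ).1, rfl⟩⟩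
  refine (Finset.card_le_card hsub).trans (Finset.card_biUnion_le.trans ?_)
  rw [add_pow]
  refine Finset.sum_le_sum fun k hk ↦ ?_
  rw [Finset.card_powersetCard, one_pow, mul_one]
  exact (Nat.choose_le_pow _ _).trans
    (Nat.le_mul_of_pos_right _ (Nat.choose_pos (Finset.mem_range_succ_iff.1 hk)))

/-- A set `W` of words codes `S` along `R` if every point of `S` has a word in `W` which it never
contradicts: at no time `t ∈ R` does the point lie in the set opposite to the one named by the
letter `w t`. -/
def IsCode (V : ι → Bool → Set α) (S : Set α) (R : Finset ι) (W : Finset (ι → Bool)) : Prop :=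
  ∀ y ∈ S, ∃ w ∈ W, ∀ t ∈ R, y ∉ V t (!w t)

theorem IsCode.union_image_update [DecidableEq ι] [DecidableEq (ι → Bool)] {r : ι} {b : Bool}
    {W W' : Finset (ι → Bool)} (hV : Disjoint (V r b) (V r !b)) (hW : IsCode V (S ∩ V r b) R W)
    (hW' : IsCode V (S \ V r b) R W') :
    IsCode V S (insert r R) (W.image (update · r b) ∪ W'.image (update · r !b)) := by
  have hupd : ∀ {y w c}, y ∉ V r (!c) → (∀ t ∈ R, y ∉ V t (!w t)) →
      ∀ t ∈ insert r R, y ∉ V t (!update w r c t) := fun hyr hyR t ht ↦ by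
    rcases eq_or_ne t r with rfl | htr
    · rwa [update_self]
    · rw [update_of_ne htr]
      exact hyR t ((Finset.mem_insert.1 ht).resolve_left htr)
  intro y hy
  by_cases hyb : y ∈ V r b
  · obtain ⟨w, hw, hyw⟩ := hW y ⟨hy, hyb⟩
    exact ⟨_, Finset.mem_union_left _ (Finset.mem_image_of_mem _ hw),
      hupd (disjoint_left.1 hV hyb) hyw⟩
  · obtain ⟨w, hw, hyw⟩ := hW' y ⟨hy, hyb⟩
    exact ⟨_, Finset.mem_union_right _ (Finset.mem_image_of_mem _ hw),
      hupd (by rwa [Bool.not_not]) hyw⟩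

/-- A Sauer–Shelah bound for partial labellings: at each `r` one of the two visits leaves at most
half of the shattered sets, and the words that follow it are coded separately. -/
theorem exists_isCode_of_card_shatteredSubsets_lt (hV : ∀ t, Disjoint (V t true) (V t false))
    {e : ℕ} (he : (shatteredSubsets V S R).card < 2 ^ e) :
    ∃ W, W.card ≤ (R.card + 1) ^ e ∧ IsCode V S R W := by
  classical
  induction R using Finset.induction_on generalizing e S with
  | empty => exact ⟨{fun _ ↦ true}, by simp, fun y _ ↦ ⟨_, Finset.mem_singleton_self _, by simp⟩⟩
  | insert r R hr ih =>
    rcases S.eq_empty_or_nonempty with rfl | hS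
    · exact ⟨∅, by simp, fun y hy ↦ hy.elim⟩
    obtain ⟨k, rfl⟩ : ∃ k, e = k + 1 := Nat.exists_eq_succ_of_ne_zero fun h ↦ by
      rw [h, pow_zero, Nat.lt_one_iff, Finset.card_eq_zero] at he
      exact (nonempty_shatteredSubsets hS).ne_empty he
    obtain ⟨b, hb⟩ : ∃ b, (shatteredSubsets V (S ∩ V r b) R).card < 2 ^ k := by
      by_contra! hcon
      have := card_shatteredSubsets_add_le (V := V) (S := S) hr
      have := hcon true
      have := hcon false
      rw [pow_succ] at he
      omega
    obtain ⟨W, hWk, hW⟩ := ih hb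
    obtain ⟨W', hWk', hW'⟩ := ih ((Finset.card_le_card (shatteredSubsets_mono
      (sdiff_subset (s := S) (t := V r b)) (Finset.subset_insert r R))).trans_lt he)
    have hVb : Disjoint (V r b) (V r !b) := by
      cases b
      exacts [(hV r).symm, hV r]
    refine ⟨_, ?_, hW.union_image_update hVb hW'⟩
    rw [Finset.card_insert_of_notMem hr]
    calc _ ≤ W.card + W'.card :=
          (Finset.card_union_le _ _).trans (add_le_add Finset.card_image_le Finset.card_image_le)
      _ ≤ (R.card + 1) ^ k + (R.card + 1) ^ k * (R.card + 1) := add_le_add hWk hWk'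
      _ = (R.card + 1) ^ k * (R.card + 1 + 1) := by ring
      _ ≤ (R.card + 1 + 1) ^ (k + 1) := by
          rw [pow_succ]
          gcongr
          omega

theorem exists_isCode_of_card_le (hV : ∀ t, Disjoint (V t true) (V t false)) {D : ℕ}
    (hD : ∀ J, Shatters V S J → J.card ≤ D) (R : Finset ι) :
    ∃ W, W.card ≤ (R.card + 1) ^ ((D + 1) * (Nat.log 2 (R.card + 1) + 1)) ∧ IsCode V S R W := by
  refine exists_isCode_of_card_shatteredSubsets_lt hV ?_
  set L := Nat.log 2 (R.card + 1) + 1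
  calc (shatteredSubsets V S R).card ≤ (R.card + 1) ^ D :=
        card_shatteredSubsets_le fun J hJ ↦ hD J (mem_shatteredSubsets.1 hJ).2
    _ ≤ (2 ^ L) ^ D := Nat.pow_le_pow_left (Nat.lt_pow_succ_log_self one_lt_two _).le _
    _ = 2 ^ (D * L) := by rw [← pow_mul, mul_comm]
    _ < 2 ^ ((D + 1) * L) := Nat.pow_lt_pow_right one_lt_two
        (Nat.mul_lt_mul_of_pos_right D.lt_succ_self (Nat.succ_pos _))

end Shattering

section SequenceEntropy

/-- Two sets separated by a point outside the first one. -/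
def IsSeparatedPair {X : Type*} [TopologicalSpace X] (A B : Set X) : Prop :=
  ∃ c ∉ A, ∀ x ∈ A, ∀ y ∈ B, c ∈ seg x y

variable {X : Type*} {f : X → X} {A B Y : Set X}

theorem IsSeparatedPair.disjoint [TopologicalSpace X] [Dendritic X] (h : IsSeparatedPair A B) :
    Disjoint A B := by
  obtain ⟨c, hcA, hc⟩ := h
  refine disjoint_left.2 fun x hxA hxB ↦ hcA ?_
  have := hc x hxA x hxB
  rw [seg_self, mem_singleton_iff] at this
  rwa [this]

theorem exists_isSeparatedPair [TopologicalSpace X] [Dendritic X] {x y : X} (hne : x ≠ y) :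
    ∃ A B, IsOpen A ∧ IsOpen B ∧ x ∈ A ∧ y ∈ B ∧ IsSeparatedPair A B := by
  obtain ⟨c, hc, hcx, hcy⟩ :=
    exists_mem_seg_ne_mem_open hne (isOpen_compl_singleton (x := y)) hne
  refine ⟨{w | c ∉ seg x w}, {w | c ∉ seg y w}, isOpen_setOf_notMem_seg _ _,
    isOpen_setOf_notMem_seg _ _, ?_, ?_, c, fun h ↦ h (right_mem_seg _ _), fun u hu v hv ↦ ?_⟩
  · rwa [mem_ofPred_eq, seg_self]
  · rwa [mem_ofPred_eq, seg_self]
  · have huy : c ∈ seg u y := (seg_subset_union x u y hc).resolve_left hu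
    exact (seg_subset_union u v y huy).resolve_right fun h ↦ hv (seg_comm v y ▸ h)

theorem exists_finset_isSeparatedPair [TopologicalSpace X] [Dendritic X] {K : Set (X × X)}
    (hK : IsCompact K) (hne : ∀ q ∈ K, q.1 ≠ q.2) :
    ∃ T : Finset (Set X × Set X), (∀ q ∈ T, IsSeparatedPair q.1 q.2) ∧
      K ⊆ ⋃ q ∈ T, q.1 ×ˢ q.2 := by
  classical
  refine hK.induction_on ⟨∅, by simp⟩ (fun s t hst ⟨T, hT, htT⟩ ↦ ⟨T, hT, hst.trans htT⟩)
    (fun s t ⟨T, hT, hsT⟩ ⟨T', hT', htT'⟩ ↦ ⟨T ∪ T', ?_, ?_⟩) fun q hq ↦ ?_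
  · exact fun q hq ↦ (Finset.mem_union.1 hq).elim (hT q) (hT' q)
  · rw [Finset.set_biUnion_union]
    exact union_subset_union hsT htT'
  · obtain ⟨A, B, hA, hB, hqA, hqB, hAB⟩ := exists_isSeparatedPair (hne q hq)
    exact ⟨A ×ˢ B, mem_nhdsWithin_of_mem_nhds ((hA.prod hB).mem_nhds ⟨hqA, hqB⟩),
      {(A, B)}, by simpa using hAB, by simp⟩

theorem seqCoverCountOn_le_card {a : ℕ → ℕ} {𝒰 : Finset (Set X)} {n : ℕ} {ι : Type*} [Fintype ι]
    {P : ι → Set X} (hYP : Y ⊆ ⋃ i, P i)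
    (hP : ∀ i, (P i).Nonempty → ∀ k < n, ∃ U ∈ 𝒰, ∀ y ∈ P i, f^[a k] y ∈ U) :
    seqCoverCountOn f Y a 𝒰 n ≤ Fintype.card ι := by
  classical
  choose U hU hPU using fun (i : {i // (P i).Nonempty}) (k : Fin n) ↦ hP i i.2 k k.2
  let e := Fintype.equivFin {i // (P i).Nonempty}
  suffices seqCoverCountOn f Y a 𝒰 n ≤ Fintype.card {i // (P i).Nonempty} from
    this.trans (Fintype.card_subtype_le _)
  refine Nat.sInf_le ⟨fun j ↦ U (e.symm j), fun j ↦ hU _, fun y hy ↦ ?_⟩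
  obtain ⟨i, hi⟩ := mem_iUnion.1 (hYP hy)
  refine mem_iUnion.2 ⟨e ⟨i, ⟨y, hi⟩⟩, mem_iInter.2 fun k ↦ ?_⟩
  simp only [mem_preimage, Equiv.symm_apply_apply]
  exact hPU _ k y hi

/-- The two possible visits at time `t`: to `A` for the letter `true` and to `B` for `false`. -/
def visitSet (f : X → X) (A B : Set X) (t : ℕ) (b : Bool) : Set X :=
  f^[t] ⁻¹' if b then A else B

variable [MetricSpace X]

theorem NoHorseshoe.exists_isCode_visitSet [CompactSpace X] [FinitelyBranched X]
    (hfh : NoHorseshoe f) (hf : Continuous f) (hAB : IsSeparatedPair A B)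
    (hY : Y ⊆ chainRecurrentSet f) :
    ∃ D, ∀ R : Finset ℕ, ∃ W, W.card ≤ (R.card + 1) ^ (D * (Nat.log 2 (R.card + 1) + 1)) ∧
      IsCode (visitSet f A B) Y R W := by
  obtain ⟨c, hcA, hc⟩ := id hAB
  obtain ⟨D, hD⟩ := hfh.exists_card_bound hf hc hcA
  exact ⟨D + 1, exists_isCode_of_card_le (fun t ↦ hAB.disjoint.preimage f^[t])
    fun J hJ ↦ hD J fun s ↦ (hJ s).imp fun _ hy ↦ ⟨hY hy.1, hy.2⟩⟩

theorem dist_iterate_lt_of_notMem_visitSet {T : Finset (Set X × Set X)} {ε : ℝ} {R : Finset ℕ}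
    {w : T → ℕ → Bool} {y y' : X} {t : ℕ} (hYi : MapsTo f Y Y)
    (hT : Y ×ˢ Y ∩ {q | ε ≤ dist q.1 q.2} ⊆ ⋃ q ∈ T, q.1 ×ˢ q.2)
    (hy : y ∈ Y) (hyw : ∀ q : T, ∀ t ∈ R, y ∉ visitSet f q.1.1 q.1.2 t (!w q t))
    (hy' : y' ∈ Y) (hyw' : ∀ q : T, ∀ t ∈ R, y' ∉ visitSet f q.1.1 q.1.2 t (!w q t))
    (ht : t ∈ R) : dist (f^[t] y) (f^[t] y') < ε := by
  by_contra! hdist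
  obtain ⟨q, hqT, hqA, hqB⟩ := mem_iUnion₂.1 (hT (a := (f^[t] y, f^[t] y'))
    ⟨⟨hYi.iterate t hy, hYi.iterate t hy'⟩, hdist⟩)
  have h := hyw ⟨q, hqT⟩ t ht
  have h' := hyw' ⟨q, hqT⟩ t ht
  cases hb : w ⟨q, hqT⟩ t <;> rw [hb] at h h'
  exacts [h hqA, h' hqB]

theorem NoHorseshoe.exists_seqCoverCountOn_le [CompactSpace X] [FinitelyBranched X]
    (hfh : NoHorseshoe f) (hf : Continuous f) (hY : Y ⊆ chainRecurrentSet f) (hYc : IsClosed Y)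
    (hYi : MapsTo f Y Y) {𝒰 : Finset (Set X)} (h𝒰 : IsOpenCoverOn Y 𝒰) :
    ∃ C, ∀ (a : ℕ → ℕ) (n : ℕ),
      seqCoverCountOn f Y a 𝒰 n ≤ (n + 1) ^ (C * (Nat.log 2 (n + 1) + 1)) := by
  classical
  obtain ⟨ε, hε, hball⟩ := lebesgue_number_lemma_of_metric_sUnion hYc.isCompact h𝒰.1 h𝒰.2
  obtain ⟨T, hsep, hT⟩ := exists_finset_isSeparatedPair
    (K := Y ×ˢ Y ∩ {q | ε ≤ dist q.1 q.2})
    ((hYc.prod hYc).inter (isClosed_le continuous_const continuous_dist)).isCompact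
    fun q hq h ↦ (dist_pos.1 (hε.trans_le hq.2)) h
  choose D hD using fun q : T ↦ hfh.exists_isCode_visitSet hf (hsep q q.2) hY
  refine ⟨∑ q, D q, fun a n ↦ ?_⟩
  set R := (Finset.range n).image a
  choose W hWcard hW using fun q ↦ hD q R
  have hcount : seqCoverCountOn f Y a 𝒰 n ≤ Fintype.card (∀ q, W q) := by
    refine seqCoverCountOn_le_card (P := fun w ↦ {y ∈ Y | ∀ q : T, ∀ t ∈ R,
      y ∉ visitSet f q.1.1 q.1.2 t (!(w q).1 t)}) (fun y hy ↦ ?_) fun w ⟨y, hy, hyw⟩ k hk ↦ ?_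
    · choose w hwW hw using fun q ↦ hW q y hy
      exact mem_iUnion.2 ⟨fun q ↦ ⟨w q, hwW q⟩, hy, hw⟩
    · obtain ⟨U, hU, hyU⟩ := hball (f^[a k] y) (hYi.iterate _ hy)
      exact ⟨U, hU, fun y' ⟨hy', hyw'⟩ ↦ hyU (dist_iterate_lt_of_notMem_visitSet hYi hT
        hy' hyw' hy hyw (Finset.mem_image_of_mem a (Finset.mem_range.2 hk)))⟩
  have hR : R.card ≤ n := Finset.card_image_le.trans (Finset.card_range n).le
  calc seqCoverCountOn f Y a 𝒰 n ≤ ∏ q, (W q).card := by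
        simpa only [Fintype.card_pi, Fintype.card_coe] using hcount
    _ ≤ ∏ q, (R.card + 1) ^ (D q * (Nat.log 2 (R.card + 1) + 1)) :=
        Finset.prod_le_prod' fun q _ ↦ hWcard q
    _ = (R.card + 1) ^ ((∑ q, D q) * (Nat.log 2 (R.card + 1) + 1)) := by
        rw [Finset.prod_pow_eq_pow_sum, Finset.sum_mul]
    _ ≤ (n + 1) ^ ((∑ q, D q) * (Nat.log 2 (n + 1) + 1)) :=
        (Nat.pow_le_pow_left (by omega) _).trans (Nat.pow_le_pow_right n.succ_pos
          (Nat.mul_le_mul_left _ (Nat.succ_le_succ (Nat.log_mono_right (by omega)))))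

theorem tendsto_log_div_of_le_pow_log {N : ℕ → ℕ} {C : ℕ}
    (hN : ∀ n, N n ≤ (n + 1) ^ (C * (Nat.log 2 (n + 1) + 1))) :
    Tendsto (fun n ↦ Real.log (N n) / n) atTop (𝓝 0) := by
  have hlog : ∀ k, Tendsto (fun n : ℕ ↦ Real.log (n + 1) ^ k / n) atTop (𝓝 0) := fun k ↦ by
    have hadd : Tendsto (fun n : ℕ ↦ (n : ℝ) + 1) atTop atTop :=
      tendsto_atTop_add_const_right _ _ tendsto_natCast_atTop_atTop
    have ho := Real.isLittleO_pow_log_id_atTop (n := k) |>.comp_tendsto hadd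
    refine (ho.trans_isBigO ?_).tendsto_div_nhds_zero
    refine Asymptotics.IsBigO.of_bound 2 ((eventually_ge_atTop 1).mono fun n hn ↦ ?_)
    have : (1 : ℝ) ≤ n := mod_cast hn
    simp only [comp_apply, id_eq, Real.norm_eq_abs, Nat.abs_cast]
    rw [abs_of_nonneg (by positivity)]
    linarith
  have hlim : Tendsto (fun n : ℕ ↦ C * (Real.log (n + 1) ^ 2 / n / Real.log 2 +
      Real.log (n + 1) ^ 1 / n)) atTop (𝓝 0) := by
    simpa using (((hlog 2).div_const _).add (hlog 1)).const_mul (C : ℝ)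
  refine squeeze_zero (fun n ↦ div_nonneg (Real.log_natCast_nonneg _) n.cast_nonneg)
    (fun n ↦ ?_) hlim
  have hpos : 0 ≤ Real.log (n + 1) := Real.log_nonneg (by linarith [n.cast_nonneg (α := ℝ)])
  have hNlog : Real.log (N n) ≤ C * (Nat.log 2 (n + 1) + 1) * Real.log (n + 1) := by
    rcases Nat.eq_zero_or_pos (N n) with h | h
    · rw [h, Nat.cast_zero, Real.log_zero]
      positivity
    · refine (Real.log_le_log (mod_cast h) (Nat.cast_le.2 (hN n))).trans_eq ?_
      push_cast
      rw [Real.log_pow]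
      push_cast
      rfl
  have hfloor : (Nat.log 2 (n + 1) : ℝ) ≤ Real.log (n + 1) / Real.log 2 := by
    simpa [Real.logb] using Real.natLog_le_logb (n + 1) 2
  calc Real.log (N n) / n
      ≤ C * (Real.log (n + 1) / Real.log 2 + 1) * Real.log (n + 1) / n := by
        gcongr
        exact hNlog.trans (by gcongr)
    _ = C * (Real.log (n + 1) ^ 2 / n / Real.log 2 + Real.log (n + 1) ^ 1 / n) := by ring

theorem NoHorseshoe.supSeqEntropyOn_eq_zero [CompactSpace X] [FinitelyBranched X]
    (hfh : NoHorseshoe f) (hf : Continuous f) (hY : Y ⊆ chainRecurrentSet f) (hYc : IsClosed Y)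
    (hYi : MapsTo f Y Y) : supSeqEntropyOn f Y = 0 := by
  simp only [supSeqEntropyOn, seqEntropyOn, ENNReal.iSup_eq_zero]
  intro a _ _ 𝒰 h𝒰
  obtain ⟨C, hC⟩ := hfh.exists_seqCoverCountOn_le hf hY hYc hYi h𝒰
  simpa using (ENNReal.tendsto_ofReal (tendsto_log_div_of_le_pow_log (hC a))).limsup_eq

end SequenceEntropy

section LimitSets

section Topological

variable {X : Type*} [TopologicalSpace X] {f : X → X} {c : X}

theorem mapsTo_omegaSet (hf : Continuous f) : MapsTo f (omegaSet f) (omegaSet f) := by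
  intro y hy
  obtain ⟨x, hx⟩ := mem_iUnion.1 hy
  refine mem_iUnion.2 ⟨x, mem_omegaLimitSet_iff.2 fun W hW hyW n ↦ ?_⟩
  obtain ⟨k, hk, hkW⟩ := mem_omegaLimitSet_iff.1 hx _ (hW.preimage hf) hyW n
  exact ⟨k + 1, hk.trans k.le_succ, by rwa [iterate_succ_apply']⟩

theorem mapsTo_nonWanderingSet (hf : Continuous f) :
    MapsTo f (nonWanderingSet f) (nonWanderingSet f) := by
  intro x hx U hU hxU
  obtain ⟨n, hn, z, hzn, hz⟩ := hx _ (hU.preimage hf) hxU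
  refine ⟨n, hn, f z, ?_, hz⟩
  rwa [mem_preimage, ← iterate_succ_apply, iterate_succ_apply']

theorem isClosed_nonWanderingSet : IsClosed (nonWanderingSet f) := by
  refine closure_subset_iff_isClosed.1 fun x hx U hU hxU ↦ ?_
  obtain ⟨y, hyU, hy⟩ := mem_closure_iff.1 hx U hU hxU
  exact hy U hU hyU

theorem mem_omegaSet_of_iterate_eq {n : ℕ} (hn : 1 ≤ n) (h : f^[n] c = c) : c ∈ omegaSet f := by
  refine mem_iUnion.2 ⟨c, mem_omegaLimitSet_iff.2 fun W _ hcW m ↦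
    ⟨n * m, Nat.le_mul_of_pos_left m hn, ?_⟩⟩
  rwa [iterate_mul, iterate_fixed h]

theorem exists_return_of_omegaSet_inter {W : Set X} (hW : IsOpen W)
    (h : (omegaSet f ∩ W).Nonempty) (n : ℕ) : ∃ k > n, ∃ u ∈ W, f^[k] u ∈ W := by
  obtain ⟨y, hy, hyW⟩ := h
  obtain ⟨x, hx⟩ := mem_iUnion.1 hy
  obtain ⟨i, -, hi⟩ := mem_omegaLimitSet_iff.1 hx W hW hyW 0
  obtain ⟨j, hj, hjW⟩ := mem_omegaLimitSet_iff.1 hx W hW hyW (i + n + 1)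
  refine ⟨j - i, by omega, _, hi, ?_⟩
  rwa [← iterate_add_apply, Nat.sub_add_cancel (by omega)]

variable [CompactSpace X] {I : ℕ → Set X} {k : ℕ → ℕ}

theorem exists_forall_iterate_sum_mem (hf : Continuous f) (hI : ∀ n, IsClosed (I n))
    (hne : ∀ n, (I n).Nonempty) (hcov : ∀ n, I (n + 1) ⊆ f^[k n] '' I n) :
    ∃ x, ∀ n, f^[∑ i ∈ Finset.range n, k i] x ∈ I n := by
  set s : ℕ → ℕ := fun n ↦ ∑ i ∈ Finset.range n, k i
  have hfollow : ∀ n, ∀ w ∈ I n, ∃ x, f^[s n] x = w ∧ ∀ j ≤ n, f^[s j] x ∈ I j := by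
    intro n
    induction n with
    | zero => exact fun w hw ↦ ⟨w, rfl, fun j hj ↦ by rwa [Nat.le_zero.1 hj]⟩
    | succ n ih =>
      intro w hw
      obtain ⟨w', hw', rfl⟩ := hcov n hw
      obtain ⟨x, rfl, hx⟩ := ih w' hw'
      have hs : f^[s (n + 1)] x = f^[k n] (f^[s n] x) := by
        rw [← iterate_add_apply, add_comm (k n), ← Finset.sum_range_succ]
      refine ⟨x, hs, fun j hj ↦ (Nat.le_succ_iff.1 hj).elim (hx j) ?_⟩
      rintro rfl
      rwa [hs]
  have hclosed : ∀ n, IsClosed {x | ∀ j ≤ n, f^[s j] x ∈ I j} := fun n ↦ by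
    simp only [ofPred_forall]
    exact isClosed_biInter fun j _ ↦ (hI j).preimage (hf.iterate _)
  obtain ⟨x, hx⟩ := IsCompact.nonempty_iInter_of_sequence_nonempty_isCompact_isClosed
    (fun n ↦ {x | ∀ j ≤ n, f^[s j] x ∈ I j}) (fun n x hx j hj ↦ hx j (hj.trans n.le_succ))
    (fun n ↦ (hfollow n _ (hne n).some_mem).imp fun _ hx ↦ hx.2) (hclosed 0).isCompact hclosed
  exact ⟨x, fun n ↦ mem_iInter.1 hx n n le_rfl⟩

theorem mem_omegaSet_of_covering (hf : Continuous f) (hI : ∀ n, IsClosed (I n))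
    (hne : ∀ n, (I n).Nonempty) (hk : ∀ n, 1 ≤ k n) (hcov : ∀ n, I (n + 1) ⊆ f^[k n] '' I n)
    (hsmall : ∀ W ∈ 𝓝 c, ∀ᶠ n in atTop, I n ⊆ W) : c ∈ omegaSet f := by
  obtain ⟨x, hx⟩ := exists_forall_iterate_sum_mem hf hI hne hcov
  refine mem_iUnion.2 ⟨x, mem_omegaLimitSet_iff.2 fun W hW hcW n ↦ ?_⟩
  obtain ⟨m, hm, hnm⟩ := ((hsmall W (hW.mem_nhds hcW)).and (eventually_ge_atTop n)).exists
  refine ⟨∑ i ∈ Finset.range m, k i, hnm.trans ?_, hm (hx m)⟩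
  simpa using Finset.card_nsmul_le_sum (Finset.range m) k 1 fun i _ ↦ hk i

end Topological

theorem exists_frequently_modEq (k : ℕ → ℕ) {p : ℕ} (hp : 0 < p) :
    ∃ m, ∃ᶠ n in atTop, k n ≡ k m [MOD p] := by
  obtain ⟨r, hr⟩ := Finite.exists_infinite_fiber fun n ↦ (⟨k n % p, Nat.mod_lt _ hp⟩ : Fin p)
  obtain ⟨m, hm⟩ := hr.nonempty
  refine ⟨m, Nat.frequently_atTop_iff_infinite.2 ((infinite_coe_iff.1 hr).mono fun n hn ↦ ?_)⟩
  exact congrArg Fin.val ((hn : _ = r).trans (hm : _ = r).symm)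

variable {X : Type*} [MetricSpace X] {f : X → X} {b c y : X}

/-- The side of `c` on which `y` lies (empty when `y = c`). -/
def side (c y : X) : Set X := {w | c ∉ seg y w}

theorem self_notMem_side : c ∉ side c y := fun h ↦ h (right_mem_seg y c)

/-- The segment from `c` to `b` is an initial piece, free of branch points, of everything on the
side of `c` on which `y` lies. -/
structure IsGerm (c y b : X) : Prop where
  ne : b ≠ c
  mem_or_mem : ∀ x ∈ side c y, x ∈ seg c b ∨ b ∈ seg c x

theorem IsGerm.mem_seg {z : X} (hb : IsGerm c y b) (hz : z ∈ side c y) (hbz : b ∉ seg c z) :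
    z ∈ seg c b :=
  (hb.mem_or_mem z hz).resolve_right hbz

section Dendritic

variable [Dendritic X]

theorem isOpen_side (c y : X) : IsOpen (side c y) := isOpen_setOf_notMem_seg y c

theorem subset_side {C : Set X} (hC : IsPreconnected C) (hc : c ∉ C)
    (h : (C ∩ side c y).Nonempty) : C ⊆ side c y := by
  obtain ⟨x, hx, hxy⟩ := h
  exact fun z hz hcz ↦ (seg_subset_union y x z hcz).elim hxy fun hxz ↦ hc (seg_subset hC hx hz hxz)

theorem IsGerm.exists_return (hb : IsGerm c y b) (hc : c ∈ closure (omegaSet f ∩ side c y))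
    {O : Set X} (hO : IsOpen O) (hcO : c ∈ O) (n : ℕ) :
    ∃ k > n, (f^[k] '' seg c b ∩ (seg c b ∩ side c y ∩ O)).Nonempty := by
  have hbO : IsOpen (O ∩ {w | b ∉ seg c w}) := hO.inter (isOpen_setOf_notMem_seg c b)
  obtain ⟨z, ⟨hzO, hbz⟩, hzf, hzy⟩ := mem_closure_iff.1 hc _ hbO
    ⟨hcO, by rw [mem_ofPred_eq, seg_self]; exact hb.ne⟩
  obtain ⟨k, hk, u, ⟨⟨-, hbu⟩, huy⟩, ⟨hkO, hbk⟩, hky⟩ :=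
    exists_return_of_omegaSet_inter (hbO.inter (isOpen_side c y)) ⟨z, hzf, ⟨hzO, hbz⟩, hzy⟩ n
  exact ⟨k, hk, f^[k] u, mem_image_of_mem _ (hb.mem_seg huy hbu), ⟨hb.mem_seg hky hbk, hky⟩, hkO⟩

theorem IsGerm.exists_return_progression (hb : IsGerm c y b)
    (hc : c ∈ closure (omegaSet f ∩ side c y)) :
    ∃ p m, 1 ≤ p ∧ 1 ≤ m ∧ (f^[p] '' seg c b ∩ seg c b).Nonempty ∧
      (f^[m] '' seg c b ∩ side c y).Nonempty ∧
      ∀ O, IsOpen O → c ∈ O → ∀ i, ∃ j ≥ i, (f^[m + p * j] '' seg c b ∩ O).Nonempty := by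
  choose k hk q hqk hq hqO using fun n : ℕ ↦ hb.exists_return hc
    (Metric.isOpen_ball (x := c) (ε := 1 / ((n : ℝ) + 1))) (Metric.mem_ball_self (by positivity)) n
  have hlim : Tendsto q atTop (𝓝 c) := tendsto_iff_dist_tendsto_zero.2 <|
    squeeze_zero (fun _ ↦ dist_nonneg) (fun n ↦ (Metric.mem_ball.1 (hqO n)).le)
      tendsto_one_div_add_atTop_nhds_zero_nat
  obtain ⟨m, hm⟩ := exists_frequently_modEq k (Nat.zero_lt_of_lt (hk 0))
  refine ⟨k 0, k m, hk 0, Nat.zero_lt_of_lt (hk m), ⟨q 0, hqk 0, (hq 0).1⟩,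
    ⟨q m, hqk m, (hq m).2⟩, fun O hO hcO i ↦ ?_⟩
  obtain ⟨n, hnm, hnO, hn⟩ := (hm.and_eventually ((hlim.eventually (hO.mem_nhds hcO)).and
    (eventually_ge_atTop (k m + k 0 * i)))).exists
  have hle : k m + k 0 * i ≤ k n := hn.trans (hk n).le
  obtain ⟨j, hj⟩ := (Nat.modEq_iff_dvd' (Nat.le_of_add_right_le hle)).1 hnm.symm
  have hkn : k m + k 0 * j = k n := by omega
  exact ⟨j, Nat.le_of_mul_le_mul_left (by omega) (Nat.zero_lt_of_lt (hk 0)), q n, hkn ▸ hqk n, hnO⟩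

end Dendritic

variable [FinitelyBranched X]

theorem exists_isGerm (hyc : y ≠ c) {O : Set X} (hO : IsOpen O) (hcO : c ∈ O) :
    ∃ b, IsGerm c y b ∧ seg c b ⊆ O := by
  obtain ⟨b, -, hbc, hbO, hb⟩ := exists_unbranched_germ hyc.symm hO hcO
  exact ⟨b, ⟨hbc, fun x hx ↦ hb x (seg_comm y x ▸ hx)⟩, hbO⟩

theorem exists_mem_closure_inter_side {S : Set X} (hc : c ∈ closure S) (hcS : c ∉ S) :
    ∃ y, y ≠ c ∧ c ∈ closure (S ∩ side c y) := by
  have hcover : S ⊆ ⋃ D ∈ branch {c} '' {c}ᶜ, S ∩ D := fun y hy ↦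
    have hyc : y ∈ ({c} : Set X)ᶜ := fun h ↦ hcS (mem_singleton_iff.1 h ▸ hy)
    mem_biUnion (mem_image_of_mem _ hyc) ⟨hy, mem_connectedComponentIn hyc⟩
  have hcD := closure_mono hcover hc
  rw [(finite_branches isPreconnected_singleton).closure_biUnion] at hcD
  obtain ⟨_, ⟨y, hy, rfl⟩, hcy⟩ := mem_iUnion₂.1 hcD
  refine ⟨y, hy, closure_mono (inter_subset_inter_right S fun w hw ↦ ?_) hcy⟩
  exact disjoint_singleton_right.1 ((mem_branch_iff_disjoint_seg hy).1 hw)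

variable [CompactSpace X]

/-- Each `g^[m] '' closure T` contains `c`, so `c` has preimages of all orders in the finite set
`closure T \ T`. -/
theorem exists_iterate_eq_of_mem_closure_image {g : X → X} (hg : Continuous g) {T : Set X}
    (hT : IsPreconnected T) (hTT : MapsTo g T T) (hcT : c ∉ T)
    (hc : ∀ m, c ∈ closure (g^[m] '' T)) : ∃ n, 1 ≤ n ∧ g^[n] c = c := by
  have hpre : ∀ m, ∃ s ∈ closure T \ T, g^[m] s = c := fun m ↦ by
    have hcm := hc m
    rw [← image_closure_of_isCompact isClosed_closure.isCompact
      (hg.iterate m).continuousOn] at hcm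
    obtain ⟨s, hs, rfl⟩ := hcm
    exact ⟨s, ⟨hs, fun hsT ↦ hcT (hTT.iterate m hsT)⟩, rfl⟩
  choose s hs hsc using hpre
  have := (finite_closure_diff hT).to_subtype
  obtain ⟨i, j, hij, hsij⟩ :=
    Finite.exists_ne_map_eq_of_infinite fun m ↦ (⟨s m, hs m⟩ : ↥(closure T \ T))
  wlog hlt : i < j generalizing i j
  · exact this j i hij.symm hsij.symm (by omega)
  refine ⟨j - i, by omega, ?_⟩
  nth_rw 1 [← hsc i]
  rw [← iterate_add_apply, Nat.sub_add_cancel hlt.le, Subtype.mk.inj hsij, hsc]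

/-- If no image of the germ contained `c` together with a point on its side, the images along a
progression of return times would form a connected set on that side accumulating at `c`. -/
theorem IsGerm.exists_mem_image (hf : Continuous f) (hb : IsGerm c y b)
    (hfc : ∀ n, 1 ≤ n → f^[n] c ≠ c) (hc : c ∈ closure (omegaSet f ∩ side c y)) :
    ∃ k, 1 ≤ k ∧ c ∈ f^[k] '' seg c b ∧ (f^[k] '' seg c b ∩ side c y).Nonempty := by
  by_contra! hcon
  obtain ⟨p, m, hp, hm, hret, hside, hclose⟩ := hb.exists_return_progression hc
  set E : ℕ → Set X := fun j ↦ f^[m + p * j] '' seg c b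
  have hEpre : ∀ j, IsPreconnected (E j) := fun j ↦
    (isPreconnected_seg c b).image _ (hf.iterate _).continuousOn
  have hEside : ∀ j, (E j ∩ side c y).Nonempty → E j ⊆ side c y := fun j h ↦
    subset_side (hEpre j) (fun hcE ↦ h.ne_empty (hcon _ (by omega) hcE)) h
  have hEmap : ∀ i j, E (j + i) = (f^[p])^[i] '' E j := fun i j ↦ by
    change f^[m + p * (j + i)] '' seg c b = _
    rw [show m + p * (j + i) = p * i + (m + p * j) by ring, iterate_add, iterate_mul, image_comp]
  have hchain : ∀ j, (E j ∩ E (j + 1)).Nonempty := fun j ↦ by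
    obtain ⟨_, ⟨u, hu, rfl⟩, hu'⟩ := hret
    exact ⟨f^[m + p * j] (f^[p] u), mem_image_of_mem _ hu', u, hu, by
      rw [← iterate_add_apply, mul_add_one, add_assoc]⟩
  have hEsub : ∀ j, E j ⊆ side c y := fun j ↦ by
    induction j with
    | zero => exact hEside 0 hside
    | succ j ih => exact hEside _ ((hchain j).mono fun z hz ↦ ⟨hz.2, ih hz.1⟩)
  have hmaps : MapsTo f^[p] (⋃ j, E j) (⋃ j, E j) := by
    intro x hx
    obtain ⟨j, hj⟩ := mem_iUnion.1 hx
    exact mem_iUnion.2 ⟨j + 1, hEmap 1 j ▸ mem_image_of_mem _ hj⟩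
  have haccum : ∀ i, c ∈ closure ((f^[p])^[i] '' ⋃ j, E j) := by
    refine fun i ↦ mem_closure_iff.2 fun O hO hcO ↦ ?_
    obtain ⟨j, hij, z, hz, hzO⟩ := hclose O hO hcO i
    have hz : z ∈ (f^[p])^[i] '' E (j - i) := by rwa [← hEmap, Nat.sub_add_cancel hij]
    exact ⟨z, hzO, image_mono (subset_iUnion E _) hz⟩
  obtain ⟨n, hn, hcn⟩ := exists_iterate_eq_of_mem_closure_image (hf.iterate p)
    (IsPreconnected.iUnion_of_chain hEpre hchain) hmaps
    (fun h ↦ self_notMem_side (iUnion_subset hEsub h)) haccum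
  exact hfc (p * n) (Nat.mul_pos hp hn) (by rwa [iterate_mul])

theorem IsGerm.exists_covers (hf : Continuous f) (hb : IsGerm c y b)
    (hfc : ∀ n, 1 ≤ n → f^[n] c ≠ c) (hc : c ∈ closure (omegaSet f ∩ side c y)) {O : Set X}
    (hO : IsOpen O) (hcO : c ∈ O) :
    ∃ b', IsGerm c y b' ∧ seg c b' ⊆ O ∧ ∃ k, 1 ≤ k ∧ seg c b' ⊆ f^[k] '' seg c b := by
  obtain ⟨k, hk, hck, z, hzk, hzy⟩ := hb.exists_mem_image hf hfc hc
  have hyc : y ≠ c := fun h ↦ hzy (h ▸ left_mem_seg c z)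
  obtain ⟨b', hb', hbO⟩ := exists_isGerm hyc (hO.inter isOpen_compl_singleton)
    (mem_inter hcO (fun h ↦ self_notMem_side (h ▸ hzy) : c ∈ {z}ᶜ))
  have hb'z : b' ∈ seg c z := (hb'.mem_or_mem z hzy).resolve_left fun h ↦ (hbO h).2 rfl
  refine ⟨b', hb', hbO.trans inter_subset_left, k, hk, ?_⟩
  exact (seg_subset_seg (left_mem_seg c z) hb'z).trans (seg_subset
    ((isPreconnected_seg c b).image _ (hf.iterate k).continuousOn) hck hzk)

theorem isClosed_omegaSet (hf : Continuous f) : IsClosed (omegaSet f) := by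
  refine closure_subset_iff_isClosed.1 fun c hc ↦ ?_
  by_contra hcf
  have hfc : ∀ n, 1 ≤ n → f^[n] c ≠ c := fun n hn h ↦ hcf (mem_omegaSet_of_iterate_eq hn h)
  obtain ⟨y, hyc, hcy⟩ := exists_mem_closure_inter_side hc hcf
  have hstep : ∀ (b : {b // IsGerm c y b}) (n : ℕ), ∃ b' : {b // IsGerm c y b},
      seg c b' ⊆ Metric.ball c (1 / ((n : ℝ) + 1)) ∧ ∃ k, 1 ≤ k ∧ seg c b' ⊆ f^[k] '' seg c b := by
    intro b n
    obtain ⟨b', hb', hsmall, h⟩ := b.2.exists_covers hf hfc hcy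
      (Metric.isOpen_ball (x := c) (ε := 1 / ((n : ℝ) + 1))) (Metric.mem_ball_self (by positivity))
    exact ⟨⟨b', hb'⟩, hsmall, h⟩
  choose next hnext k hk hcov using hstep
  obtain ⟨b₀, hb₀, -⟩ := exists_isGerm hyc isOpen_univ (mem_univ c)
  let germ : ℕ → {b // IsGerm c y b} := Nat.rec ⟨b₀, hb₀⟩ fun n b ↦ next b n
  refine hcf (mem_omegaSet_of_covering hf (I := fun n ↦ seg c (germ n).1)
    (k := fun n ↦ k (germ n) n) (fun n ↦ isClosed_seg _ _) (fun n ↦ ⟨c, left_mem_seg _ _⟩)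
    (fun n ↦ hk (germ n) n) (fun n ↦ hcov (germ n) n) fun W hW ↦ ?_)
  obtain ⟨ε, hε, hεW⟩ := Metric.mem_nhds_iff.1 hW
  obtain ⟨N, hN⟩ := exists_nat_one_div_lt hε
  filter_upwards [eventually_gt_atTop N] with n hn
  obtain ⟨i, rfl⟩ := Nat.exists_eq_add_of_lt hn
  refine (hnext (germ (N + i)) (N + i)).trans ((Metric.ball_subset_ball ?_).trans hεW)
  exact (Nat.one_div_le_one_div (Nat.le_add_right N i)).trans hN.le

end LimitSets

/-- A zero topological entropy continuous tree map has zero topological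
sequence entropy when restricted to its ω-limit set, its non-wandering set and its chain
recurrent set. -/
theorem seqEntropy_tree_restrictions_eq_zero {X : Type*} [MetricSpace X] (hX : IsTree X)
    (f : X → X) (hf : Continuous f) (h0 : topEntropy f = 0) :
    supSeqEntropyOn f (omegaSet f) = 0 ∧ supSeqEntropyOn f (nonWanderingSet f) = 0 ∧
      supSeqEntropyOn f (chainRecurrentSet f) = 0 := by
  have := hX.1
  have := hX.finitelyBranched
  have hfh : NoHorseshoe f := noHorseshoe_of_topEntropy_eq_zero h0
  refine ⟨hfh.supSeqEntropyOn_eq_zero hf ?_ (isClosed_omegaSet hf) (mapsTo_omegaSet hf),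
    hfh.supSeqEntropyOn_eq_zero hf ?_ isClosed_nonWanderingSet (mapsTo_nonWanderingSet hf),
    hfh.supSeqEntropyOn_eq_zero hf Subset.rfl (isClosed_chainRecurrentSet hf)
      (mapsTo_chainRecurrentSet hf)⟩
  · exact omegaSet_subset_chainRecurrentSet hf
  · exact nonWanderingSet_subset_chainRecurrentSet hf
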